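/- arXiv:2105.04748 — 3 statements merged into one kernel-verified Lean document; each statement's English description precedes it below -/
import Mathlib

section
/- Let k ≥ 2 be an integer, ε ∈ {1, −1}, and δ(x, y) = x² + ε·y^{k+1} (an A_k-type singular impasse curve). Let X = (P, Q) be real-analytic on a neighborhood of the origin in ℝ² with P(0,0) ≠ 0. Then the constrained system (X, δ) is orientation-preserving C⁰-orbitally equivalent at (0, 0) to the constrained system (Y, δ), where Y is the constant vector field Y ≡ (P(0,0), Q(0,0)). -/
/-- A phase curve of the vector field `X` in the set `V`: a differentiable curve
`c : J → V` on a nondegenerate interval `J` with `c'(t) = X(c(t))` for all `t ∈ J`. -/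
def IsPhaseCurve (X : ℝ × ℝ → ℝ × ℝ) (V : Set (ℝ × ℝ)) (J : Set ℝ) (c : ℝ → ℝ × ℝ) : Prop :=
  J.OrdConnected ∧ J.Nontrivial ∧ (∀ t ∈ J, c t ∈ V) ∧
    ∀ t ∈ J, HasDerivWithinAt c (X (c t)) J t

/-- The planar constrained systems `(X, δ)` and `(Y, γ)` are orientation-preserving
`C⁰`-orbitally equivalent at `(p₁, p₂)`: there are open neighborhoods `V₁ ∋ p₁`, `V₂ ∋ p₂`
and a homeomorphism `Φ : V₁ → V₂` sending `p₁` to `p₂` and impasse set to impasse set, which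
carries phase curves of `X` off the impasse set onto phase curves of `Y` off the impasse set
up to continuous strictly increasing reparametrizations, and conversely for `Φ⁻¹`. -/
def OrbitallyEquivAt (X : ℝ × ℝ → ℝ × ℝ) (δ : ℝ × ℝ → ℝ) (p₁ : ℝ × ℝ)
    (Y : ℝ × ℝ → ℝ × ℝ) (γ : ℝ × ℝ → ℝ) (p₂ : ℝ × ℝ) : Prop :=
  ∃ (V₁ V₂ : Set (ℝ × ℝ)) (Φ Φinv : ℝ × ℝ → ℝ × ℝ),
    IsOpen V₁ ∧ IsOpen V₂ ∧ p₁ ∈ V₁ ∧ p₂ ∈ V₂ ∧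
    -- Φ is a homeomorphism from V₁ onto V₂ with inverse Φinv
    ContinuousOn Φ V₁ ∧ ContinuousOn Φinv V₂ ∧
    Set.MapsTo Φ V₁ V₂ ∧ Set.MapsTo Φinv V₂ V₁ ∧
    (∀ z ∈ V₁, Φinv (Φ z) = z) ∧ (∀ z ∈ V₂, Φ (Φinv z) = z) ∧
    Φ p₁ = p₂ ∧
    -- Φ maps the impasse set to the impasse set
    Φ '' ({z | δ z = 0} ∩ V₁) = {z | γ z = 0} ∩ V₂ ∧
    -- Φ maps phase curves of X to phase curves of Y, preserving orientation
    (∀ (J : Set ℝ) (c : ℝ → ℝ × ℝ),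
      IsPhaseCurve X (V₁ \ {z | δ z = 0}) J c →
      ∃ (J' : Set ℝ) (d : ℝ → ℝ × ℝ) (τ : ℝ → ℝ),
        IsPhaseCurve Y (V₂ \ {z | γ z = 0}) J' d ∧
        ContinuousOn τ J ∧ StrictMonoOn τ J ∧ τ '' J = J' ∧
        ∀ t ∈ J, Φ (c t) = d (τ t)) ∧
    -- Φ⁻¹ maps phase curves of Y to phase curves of X, preserving orientation
    (∀ (J : Set ℝ) (d : ℝ → ℝ × ℝ),
      IsPhaseCurve Y (V₂ \ {z | γ z = 0}) J d →
      ∃ (J' : Set ℝ) (c : ℝ → ℝ × ℝ) (τ : ℝ → ℝ),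
        IsPhaseCurve X (V₁ \ {z | δ z = 0}) J' c ∧
        ContinuousOn τ J ∧ StrictMonoOn τ J ∧ τ '' J = J' ∧
        ∀ t ∈ J, Φinv (d t) = c (τ t))

section Helpers

open Set Filter Topology


/-- Fibrewise strictly increasing continuous maps of a rectangle are open embeddings. -/
lemma fiber_homeo (f : ℝ × ℝ → ℝ) (η r : ℝ)
    (hf : ContinuousOn f (Ioo (-η) η ×ˢ Ioo (-r) r))
    (hm : ∀ h ∈ Ioo (-r) r, StrictMonoOn (fun x => f (x, h)) (Ioo (-η) η)) :
    ∃ e : OpenPartialHomeomorph (ℝ × ℝ) (ℝ × ℝ),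
      e.source = Ioo (-η) η ×ˢ Ioo (-r) r ∧ ∀ z, e z = (f z, z.2) := by
  set R : Set (ℝ × ℝ) := Ioo (-η) η ×ˢ Ioo (-r) r with hR
  have hRo : IsOpen R := isOpen_Ioo.prod isOpen_Ioo
  have hinj : InjOn (fun z : ℝ × ℝ => (f z, z.2)) R := by
    rintro ⟨x, h⟩ ⟨hx, hh⟩ ⟨x', h'⟩ ⟨hx', hh'⟩ heq
    simp only [Prod.mk.injEq] at heq
    obtain ⟨h1, rfl⟩ := heq
    have h2 : x = x' := (hm h hh).injOn hx hx' h1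
    rw [h2]
  have hc : ContinuousOn (fun z : ℝ × ℝ => (f z, z.2)) R := hf.prodMk continuousOn_snd
  suffices hopen : IsOpenMap (R.domRestrict (fun z : ℝ × ℝ => (f z, z.2))) from
    ⟨OpenPartialHomeomorph.ofContinuousOpenRestrict (hinj.toPartialEquiv _ _) hc hopen hRo,
      rfl, fun z => rfl⟩
  rw [isOpenMap_iff_nhds_le]
  rintro ⟨⟨x₀, h₀⟩, hz⟩ S hS
  obtain ⟨hx₀, hh₀⟩ := id hz
  rw [mem_map, nhds_subtype_eq_comap, mem_comap] at hS
  obtain ⟨W, hW, hWS⟩ := hS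
  have hW' : W ∩ R ∈ 𝓝 (x₀, h₀) := inter_mem hW (hRo.mem_nhds ⟨hx₀, hh₀⟩)
  obtain ⟨κ, hκ, hball⟩ := Metric.mem_nhds_iff.1 hW'
  have hsub : ∀ x h, |x - x₀| < κ → |h - h₀| < κ → (x, h) ∈ W ∩ R := by
    intro x h h1 h2
    apply hball
    rw [Metric.mem_ball, Prod.dist_eq, max_lt_iff, Real.dist_eq, Real.dist_eq]
    exact ⟨h1, h2⟩
  have hle : x₀ - κ/2 < x₀ := by linarith
  have hlt : x₀ < x₀ + κ/2 := by linarith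
  have a1 : |x₀ - κ/2 - x₀| < κ := by rw [abs_lt]; constructor <;> linarith
  have a2 : |x₀ + κ/2 - x₀| < κ := by rw [abs_lt]; constructor <;> linarith
  have a0 : |h₀ - h₀| < κ := by simpa using hκ
  have m1 := hsub _ _ a1 a0
  have m2 := hsub _ _ a2 a0
  have l1 := hm h₀ hh₀ m1.2.1 hx₀ hle
  have l2 := hm h₀ hh₀ hx₀ m2.2.1 hlt
  have t1 : ∀ x', (x', h₀) ∈ R → Tendsto (fun p : ℝ × ℝ => f (x', p.2)) (𝓝 (f (x₀, h₀), h₀))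
      (𝓝 (f (x', h₀))) := by
    intro x' hx'
    have h1 : ContinuousAt f (x', h₀) := hf.continuousAt (hRo.mem_nhds hx')
    have h2 : Tendsto (fun p : ℝ × ℝ => ((x', p.2) : ℝ × ℝ)) (𝓝 (f (x₀, h₀), h₀)) (𝓝 (x', h₀)) := by
      have : Continuous (fun p : ℝ × ℝ => ((x', p.2) : ℝ × ℝ)) := by fun_prop
      exact this.tendsto (f (x₀, h₀), h₀)
    exact h1.tendsto.comp h2
  have t2 : Tendsto (fun p : ℝ × ℝ => p.1) (𝓝 (f (x₀, h₀), h₀)) (𝓝 (f (x₀, h₀))) :=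
    continuous_fst.tendsto (f (x₀, h₀), h₀)
  have e1 := (t1 _ m1.2).eventually_lt t2 l1
  have e2 := t2.eventually_lt (t1 _ m2.2) l2
  have e3 : ∀ᶠ p : ℝ × ℝ in 𝓝 (f (x₀, h₀), h₀), |p.2 - h₀| < κ := by
    have : Continuous (fun p : ℝ × ℝ => |p.2 - h₀|) := by fun_prop
    exact (this.tendsto (f (x₀, h₀), h₀)).eventually_lt_const (by simpa using hκ)
  change ∀ᶠ p : ℝ × ℝ in 𝓝 (f (x₀, h₀), h₀), p ∈ S
  filter_upwards [e1, e2, e3] with ⟨v, h⟩ h1 h2 h3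
  have hIcc : ∀ x ∈ Icc (x₀ - κ/2) (x₀ + κ/2), (x, h) ∈ W ∩ R := by
    intro x hx
    apply hsub _ _ _ h3
    rw [abs_lt]; constructor <;> linarith [hx.1, hx.2]
  have hcx : ContinuousOn (fun x => f (x, h)) (Icc (x₀ - κ/2) (x₀ + κ/2)) :=
    hf.comp (by fun_prop) (fun x hx => (hIcc x hx).2)
  obtain ⟨x, hx, hxv⟩ := intermediate_value_Icc (by linarith) hcx ⟨h1.le, h2.le⟩
  have := @hWS ⟨(x, h), (hIcc x hx).2⟩ (hIcc x hx).1
  have h4 : (f (x, h), h) ∈ S := this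
  have h5 : f (x, h) = v := hxv
  rwa [h5] at h4

lemma time_param (g : ℝ → ℝ) (η σ : ℝ) (hη : 0 < η) (hg : ContinuousOn g (Icc (-η) η))
    (hpos : ∀ x ∈ Icc (-η) η, 0 < σ * g x) :
    ∃ T θ : ℝ → ℝ, Continuous T ∧ (∀ x y, σ * x < σ * y → T x < T y) ∧
      (∀ x, θ (T x) = x) ∧ ∀ x ∈ Icc (-η) η, HasDerivAt θ (g x) (T x) := by
  set cl : ℝ → ℝ := fun x => max (-η) (min x η) with hcl
  have hclm : ∀ x, cl x ∈ Icc (-η) η := fun x =>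
    ⟨le_max_left _ _, max_le (by linarith) (min_le_right _ _)⟩
  have hcle : ∀ x ∈ Icc (-η) η, cl x = x := fun x hx => by
    simp [hcl, min_eq_left hx.2, max_eq_right hx.1]
  have hclc : Continuous cl := by fun_prop
  have hgc : Continuous (fun x => g (cl x)) := hg.comp_continuous hclc hclm
  have hne : ∀ x, g (cl x) ≠ 0 := fun x h => by have := hpos _ (hclm x); simp [h] at this
  have hic : Continuous (fun x => (g (cl x))⁻¹) := hgc.inv₀ hne
  set T : ℝ → ℝ := fun x => ∫ s in (0:ℝ)..x, (g (cl s))⁻¹ with hT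
  have hd : ∀ x, HasStrictDerivAt T (g (cl x))⁻¹ x := fun x =>
    hic.integral_hasStrictDerivAt 0 x
  have hTc : Continuous T := continuous_iff_continuousAt.2 fun x => (hd x).hasDerivAt.continuousAt
  have hmono : StrictMono (fun x => σ * T x) := by
    apply strictMono_of_deriv_pos
    intro x
    rw [((hd x).hasDerivAt.const_mul σ).deriv]
    have h1 := hpos _ (hclm x)
    have h2 : σ * (g (cl x))⁻¹ = (σ * g (cl x)) * ((g (cl x))⁻¹)^2 := by
      field_simp [hne x]
    rw [h2]
    have := hne x
    positivity
  have hσ : σ ≠ 0 := fun h => by have := hpos _ (hclm 0); simp [h] at this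
  have hinj : Function.Injective T := fun x y h => hmono.injective (by simp [h])
  refine ⟨T, Function.invFun T, hTc, ?_, Function.leftInverse_invFun hinj, ?_⟩
  · intro x y hxy
    rcases lt_or_gt_of_ne hσ with h | h
    · have h1 : y < x := by nlinarith
      have := hmono h1
      simp only at this
      nlinarith
    · have h1 : x < y := by nlinarith
      have := hmono h1
      simp only at this
      nlinarith
  · intro x hx
    have h1 := (hd x).to_local_left_inverse (inv_ne_zero (hne x))
      (Eventually.of_forall (Function.leftInverse_invFun hinj))
    rw [inv_inv, hcle x hx] at h1
    exact h1.hasDerivAt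

lemma small_lip (k : ℕ) (hk : 2 ≤ k) (ε : ℝ) (hε : ε = 1 ∨ ε = -1) (κ : ℝ) (hκ : 0 < κ) :
    ∃ b > 0, ∀ y₁ ∈ Icc (-b) b, ∀ y₂ ∈ Icc (-b) b,
      |√(max 0 (-(ε * y₁ ^ (k+1)))) - √(max 0 (-(ε * y₂ ^ (k+1))))| ≤ κ * |y₁ - y₂| := by
  set p : ℝ := ((k:ℝ) + 1) / 2 with hp
  have hk' : (2:ℝ) ≤ k := by exact_mod_cast hk
  have hp1 : 1 < p := by rw [hp]; linarith
  have hsd : HasStrictDerivAt (fun y : ℝ => y ^ p) 0 0 := by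
    have := Real.hasStrictDerivAt_rpow_const (x := 0) (p := p) (Or.inr hp1.le)
    rwa [Real.zero_rpow (by linarith), mul_zero] at this
  obtain ⟨s, hs, hlip⟩ := hsd.hasStrictFDerivAt.exists_lipschitzOnWith_of_nnnorm_lt
    (κ/2).toNNReal (by
      rw [← NNReal.coe_lt_coe, Real.coe_toNNReal _ (by positivity)]
      simpa using hκ)
  obtain ⟨b, hb, hbs⟩ := Metric.mem_nhds_iff.1 hs
  have hl : ∀ y₁ ∈ Icc 0 (b/2), ∀ y₂ ∈ Icc 0 (b/2), |y₁ ^ p - y₂ ^ p| ≤ κ/2 * |y₁ - y₂| := by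
    intro y₁ h1 y₂ h2
    have := hlip.dist_le_mul y₁ (hbs (by
      rw [Metric.mem_ball, Real.dist_eq, abs_lt]; constructor <;> linarith [h1.1, h1.2])) y₂ (hbs (by
      rw [Metric.mem_ball, Real.dist_eq, abs_lt]; constructor <;> linarith [h2.1, h2.2]))
    rw [Real.coe_toNNReal _ (by positivity)] at this
    exact this
  have hsq : ∀ y : ℝ, 0 ≤ y → √(y ^ (k+1)) = y ^ p := by
    intro y hy
    rw [Real.sqrt_eq_rpow, ← Real.rpow_natCast, ← Real.rpow_mul hy]
    congr 1
    rw [hp]; push_cast; ring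
  have key : ∀ c : ℝ, c = 1 ∨ c = -1 → ∃ θ : ℝ, 0 ≤ θ ∧ θ ≤ 1 ∧ ∀ y, 0 ≤ y →
      √(max 0 (c * y ^ (k+1))) = θ * y ^ p := by
    rintro c (rfl | rfl)
    · refine ⟨1, by norm_num, le_rfl, fun y hy => ?_⟩
      rw [one_mul, one_mul, max_eq_right (by positivity), hsq y hy]
    · refine ⟨0, by norm_num, by norm_num, fun y hy => ?_⟩
      have : 0 ≤ y ^ (k+1) := by positivity
      rw [max_eq_left (by linarith)]; simp
  obtain ⟨θ₁, h10, h11, h1⟩ := key (-ε) (by rcases hε with h | h <;> simp [h])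
  obtain ⟨θ₂, h20, h21, h2⟩ := key (-ε * (-1)^(k+1)) (by
    rcases hε with h | h <;> rcases neg_one_pow_eq_or ℝ (k+1) with h' | h' <;> simp [h, h'])
  have hp0 : (0:ℝ) ^ p = 0 := Real.zero_rpow (by linarith)
  have hform : ∀ y : ℝ, √(max 0 (-(ε * y ^ (k+1)))) = θ₁ * (max y 0) ^ p + θ₂ * (max (-y) 0) ^ p := by
    intro y
    rcases le_total 0 y with hy | hy
    · rw [max_eq_left hy, max_eq_right (by linarith : -y ≤ 0), hp0, ← h1 y hy]; simp
    · rw [max_eq_right hy, max_eq_left (by linarith : 0 ≤ -y), hp0, ← h2 (-y) (by linarith)]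
      rw [mul_zero, zero_add]
      congr 2
      rw [mul_assoc, ← mul_pow]; simp
  refine ⟨b/2, by linarith, fun y₁ hy₁ y₂ hy₂ => ?_⟩
  rw [hform, hform]
  have b1 := hl (max y₁ 0) ⟨le_max_right _ _, max_le hy₁.2 (by linarith)⟩
    (max y₂ 0) ⟨le_max_right _ _, max_le hy₂.2 (by linarith)⟩
  have b2 := hl (max (-y₁) 0) ⟨le_max_right _ _, max_le (by linarith [hy₁.1]) (by linarith)⟩
    (max (-y₂) 0) ⟨le_max_right _ _, max_le (by linarith [hy₂.1]) (by linarith)⟩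
  have c1 := abs_max_sub_max_le_abs y₁ y₂ 0
  have c2 := abs_max_sub_max_le_abs (-y₁) (-y₂) 0
  have c3 : |(-y₁) - (-y₂)| = |y₁ - y₂| := by rw [← abs_neg]; congr 1; ring
  rw [c3] at c2
  set A := (max y₁ 0) ^ p - (max y₂ 0) ^ p with hA
  set B := (max (-y₁) 0) ^ p - (max (-y₂) 0) ^ p with hB
  have : θ₁ * max y₁ 0 ^ p + θ₂ * max (-y₁) 0 ^ p - (θ₁ * max y₂ 0 ^ p + θ₂ * max (-y₂) 0 ^ p)
      = θ₁ * A + θ₂ * B := by rw [hA, hB]; ring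
  rw [this]
  calc |θ₁ * A + θ₂ * B| ≤ |θ₁ * A| + |θ₂ * B| := abs_add_le _ _
    _ = θ₁ * |A| + θ₂ * |B| := by rw [abs_mul, abs_mul, abs_of_nonneg h10, abs_of_nonneg h20]
    _ ≤ 1 * |A| + 1 * |B| := by gcongr
    _ ≤ κ/2 * |y₁ - y₂| + κ/2 * |y₁ - y₂| := by
      have d1 := mul_le_mul_of_nonneg_left c1 (by positivity : 0 ≤ κ/2)
      have d2 := mul_le_mul_of_nonneg_left c2 (by positivity : 0 ≤ κ/2)
      linarith
    _ = κ * |y₁ - y₂| := by ring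

lemma uniq_on (J : Set ℝ) (hJ : J.OrdConnected) (v : ℝ → ℝ → ℝ) (K : NNReal) (s : Set ℝ)
    (hv : ∀ t ∈ J, LipschitzOnWith K (v t) s) (f g : ℝ → ℝ)
    (hf : ∀ t ∈ J, HasDerivWithinAt f (v t (f t)) J t) (hfs : ∀ t ∈ J, f t ∈ s)
    (hg : ∀ t ∈ J, HasDerivWithinAt g (v t (g t)) J t) (hgs : ∀ t ∈ J, g t ∈ s)
    (t₀ : ℝ) (ht₀ : t₀ ∈ J) (h0 : f t₀ = g t₀) : EqOn f g J := by
  intro t₁ ht₁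
  rcases le_total t₀ t₁ with h | h
  · have hsub : Icc t₀ t₁ ⊆ J := hJ.out ht₀ ht₁
    have hd : ∀ u : ℝ → ℝ, (∀ t ∈ J, HasDerivWithinAt u (v t (u t)) J t) →
        ∀ t ∈ Ico t₀ t₁, HasDerivWithinAt u (v t (u t)) (Ici t) t := fun u hu t ht =>
      ((hu t (hsub (Ico_subset_Icc_self ht))).mono
        (fun s hs => hsub ⟨ht.1.trans hs.1, hs.2⟩ : Icc t t₁ ⊆ J)).mono_of_mem_nhdsWithin
        (Icc_mem_nhdsGE ht.2)
    exact ODE_solution_unique_of_mem_Icc_right (s := fun _ => s)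
      (fun t ht => hv t (hsub (Ico_subset_Icc_self ht)))
      (fun t ht => ((hf t (hsub ht)).continuousWithinAt).mono hsub) (hd f hf)
      (fun t ht => hfs t (hsub (Ico_subset_Icc_self ht)))
      (fun t ht => ((hg t (hsub ht)).continuousWithinAt).mono hsub) (hd g hg)
      (fun t ht => hgs t (hsub (Ico_subset_Icc_self ht))) h0 ⟨h, le_rfl⟩
  · have hsub : Icc t₁ t₀ ⊆ J := hJ.out ht₁ ht₀
    have hd : ∀ u : ℝ → ℝ, (∀ t ∈ J, HasDerivWithinAt u (v t (u t)) J t) →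
        ∀ t ∈ Ioc t₁ t₀, HasDerivWithinAt u (v t (u t)) (Iic t) t := fun u hu t ht =>
      ((hu t (hsub (Ioc_subset_Icc_self ht))).mono
        (fun s hs => hsub ⟨hs.1, hs.2.trans ht.2⟩ : Icc t₁ t ⊆ J)).mono_of_mem_nhdsWithin
        (Icc_mem_nhdsLE ht.1)
    exact ODE_solution_unique_of_mem_Icc_left (s := fun _ => s)
      (fun t ht => hv t (hsub (Ioc_subset_Icc_self ht)))
      (fun t ht => ((hf t (hsub ht)).continuousWithinAt).mono hsub) (hd f hf)
      (fun t ht => hfs t (hsub (Ioc_subset_Icc_self ht)))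
      (fun t ht => ((hg t (hsub ht)).continuousWithinAt).mono hsub) (hd g hg)
      (fun t ht => hgs t (hsub (Ioc_subset_Icc_self ht))) h0 ⟨le_rfl, h⟩

lemma box (P Q : ℝ × ℝ → ℝ) (hP : AnalyticAt ℝ P (0, 0)) (hQ : AnalyticAt ℝ Q (0, 0))
    (hP0 : P (0, 0) ≠ 0) (a : ℝ → ℝ)
    (ha : ∀ κ > 0, ∃ b > 0, ∀ y₁ ∈ Icc (-b) b, ∀ y₂ ∈ Icc (-b) b,
      |a y₁ - a y₂| ≤ κ * |y₁ - y₂|) :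
    ∃ (η r b M : ℝ) (K : NNReal) (u : ℝ × ℝ → ℝ), 0 < η ∧ 0 < r ∧ 
      ContinuousOn u (Icc (-η) η ×ˢ Icc (-r) r) ∧
      (∀ h ∈ Icc (-r) r, u (0, h) = h) ∧
      (∀ h ∈ Icc (-r) r, ∀ x ∈ Icc (-η) η,
        HasDerivWithinAt (fun x => u (x, h)) (Q (x, u (x, h)) / P (x, u (x, h))) (Icc (-η) η) x) ∧
      (∀ h ∈ Icc (-r) r, ∀ x ∈ Icc (-η) η, u (x, h) ∈ Icc (-b) b) ∧
      (∀ h ∈ Icc (-r) r, ∀ x ∈ Icc (-η) η, ∀ x' ∈ Icc (-η) η,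
        |a (u (x, h)) - a (u (x', h))| ≤ 1 / 4 * |x - x'|) ∧
      ContinuousOn P (Icc (-η) η ×ˢ Icc (-b) b) ∧
      (∀ z ∈ Icc (-η) η ×ˢ Icc (-b) b, 0 < P (0, 0) * P z) ∧
      (∀ z ∈ Icc (-η) η ×ˢ Icc (-b) b, |P z| ≤ M) ∧
      (∀ x ∈ Icc (-η) η, LipschitzOnWith K (fun y => Q (x, y) / P (x, y)) (Icc (-b) b)) := by
  set f : ℝ × ℝ → ℝ := fun z => Q z / P z with hf
  have hfa : AnalyticAt ℝ f (0, 0) := hQ.div hP hP0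
  obtain ⟨K, s, hs, hlip⟩ := (hfa.contDiffAt (n := 1)).exists_lipschitzOnWith
  have e1 : ∀ᶠ z in 𝓝 ((0:ℝ), (0:ℝ)), z ∈ s := hs
  have e2 : ∀ᶠ z in 𝓝 ((0:ℝ), (0:ℝ)), ContinuousAt P z := by
    filter_upwards [hP.eventually_analyticAt] with z hz using hz.continuousAt
  have e3 : ∀ᶠ z in 𝓝 ((0:ℝ), (0:ℝ)), 0 < P (0, 0) * P z := by
    have : ContinuousAt (fun z => P (0, 0) * P z) (0, 0) := hP.continuousAt.const_mul _
    exact this.tendsto.eventually_const_lt (mul_self_pos.2 hP0)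
  have e4 : ∀ᶠ z in 𝓝 ((0:ℝ), (0:ℝ)), |P z| < |P (0, 0)| + 1 :=
    hP.continuousAt.abs.tendsto.eventually_lt_const (by linarith)
  have e5 : ∀ᶠ z in 𝓝 ((0:ℝ), (0:ℝ)), |f z| < |f (0, 0)| + 1 :=
    hfa.continuousAt.abs.tendsto.eventually_lt_const (by linarith)
  obtain ⟨ρ', hρ', hall⟩ := Metric.eventually_nhds_iff_ball.1 (e1.and (e2.and (e3.and (e4.and e5))))
  set L : ℝ := |f (0, 0)| + 1 with hL
  have hLpos : 0 < L := by positivity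
  obtain ⟨b', hb', hab'⟩ := ha (1 / (4 * L)) (by positivity)
  set b : ℝ := min b' (ρ' / 2) with hb
  have hbpos : 0 < b := lt_min hb' (by linarith)
  have hbb' : b ≤ b' := min_le_left _ _
  have hbρ : b < ρ' := (min_le_right _ _).trans_lt (by linarith)
  set η : ℝ := min (ρ' / 2) (b / (2 * L)) with hη
  have hηpos : 0 < η := lt_min (by linarith) (by positivity)
  have hηρ : η < ρ' := (min_le_left _ _).trans_lt (by linarith)
  have hLη : L * η ≤ b / 2 := by
    calc L * η ≤ L * (b / (2 * L)) := by gcongr; exact min_le_right _ _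
      _ = b / 2 := by field_simp
  have hbox : ∀ z ∈ Icc (-η) η ×ˢ Icc (-b) b, z ∈ Metric.ball ((0:ℝ), (0:ℝ)) ρ' := by
    rintro ⟨x, y⟩ ⟨hx, hy⟩
    rw [Metric.mem_ball, Prod.dist_eq, max_lt_iff, Real.dist_eq, Real.dist_eq, sub_zero, sub_zero,
      abs_lt, abs_lt]
    simp only [mem_Icc] at hx hy
    refine ⟨⟨?_, ?_⟩, ?_, ?_⟩ <;> linarith
  set cl : ℝ → ℝ := fun y => max (-b) (min y b) with hcl
  have hclm : ∀ x, cl x ∈ Icc (-b) b := fun x =>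
    ⟨le_max_left _ _, max_le (by linarith) (min_le_right _ _)⟩
  have hcle : ∀ x ∈ Icc (-b) b, cl x = x := fun x hx => by
    simp [hcl, min_eq_left hx.2, max_eq_right hx.1]
  have hcll : LipschitzWith 1 cl := by
    exact (LipschitzWith.id.min_const b).const_max (-b)
  have hlipf : ∀ x ∈ Icc (-η) η, LipschitzOnWith K (fun y => f (x, y)) (Icc (-b) b) := by
    intro x hx y hy y' hy'
    refine (hlip (hall _ (hbox (x, y) ⟨hx, hy⟩)).1 (hall _ (hbox (x, y') ⟨hx, hy'⟩)).1).trans ?_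
    gcongr
    rw [Prod.edist_eq]; simp
  have hPL : IsPicardLindelof (fun x y => f (x, cl y))
      (⟨0, by constructor <;> linarith⟩ : Icc (-η) η) (0:ℝ)
      b.toNNReal (b/2).toNNReal L.toNNReal K := by
    constructor
    · intro x hx
      have := (hlipf x hx).comp (hcll.lipschitzOnWith (s := Metric.closedBall (0:ℝ) b.toNNReal))
        (fun y _ => hclm y)
      rwa [mul_one] at this
    · intro y hy
      have h1 : ContinuousOn f s := hlip.continuousOn
      refine h1.comp (by fun_prop) (fun x hx => (hall _ (hbox (x, cl y) ⟨hx, hclm y⟩)).1)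
    · intro x hx y hy
      rw [Real.coe_toNNReal _ hLpos.le]
      exact (hall _ (hbox (x, cl y) ⟨hx, hclm y⟩)).2.2.2.2.le
    · rw [Real.coe_toNNReal _ hLpos.le, Real.coe_toNNReal _ hbpos.le, Real.coe_toNNReal _ (by linarith)]
      simp
      linarith
  obtain ⟨α, hα, hαc⟩ := hPL.exists_forall_mem_closedBall_eq_hasDerivWithinAt_continuousOn
  have hball : Metric.closedBall (0:ℝ) (b/2).toNNReal = Icc (-(b/2)) (b/2) := by
    rw [Real.closedBall_eq_Icc, Real.coe_toNNReal _ (by linarith)]; simp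
  rw [hball] at hα hαc
  simp only at hα
  have hLip : ∀ h ∈ Icc (-(b/2)) (b/2), ∀ x ∈ Icc (-η) η, ∀ x' ∈ Icc (-η) η,
      |α (h, x) - α (h, x')| ≤ L * |x - x'| := by
    intro h hh x hx x' hx'
    have := (convex_Icc (-η) η).norm_image_sub_le_of_norm_hasDerivWithin_le
      (f := fun x => α (h, x)) (C := L) (fun t ht => (hα h hh).2 t ht)
      (fun t ht => (hall _ (hbox (t, cl _) ⟨ht, hclm _⟩)).2.2.2.2.le) hx' hx
    exact this
  have h0η : (0:ℝ) ∈ Icc (-η) η := by constructor <;> linarith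
  have hmem : ∀ h ∈ Icc (-(b/2)) (b/2), ∀ x ∈ Icc (-η) η, α (h, x) ∈ Icc (-b) b := by
    intro h hh x hx
    have h1 := hLip h hh x hx 0 h0η
    rw [(hα h hh).1, sub_zero] at h1
    have h2 : L * |x| ≤ b / 2 := by
      refine le_trans ?_ hLη
      gcongr
      exact abs_le.2 hx
    have h3 := abs_le.1 (h1.trans h2)
    constructor <;> linarith [hh.1, hh.2]
  refine ⟨η, b/2, b, |P (0, 0)| + 1, K, fun z => α (z.2, z.1), hηpos, by linarith, ?_, ?_, ?_, ?_, ?_,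
    ?_, ?_, ?_, hlipf⟩
  · exact hαc.comp (by fun_prop) (fun z hz => ⟨hz.2, hz.1⟩)
  · intro h hh; exact (hα h hh).1
  · intro h hh x hx
    have := (hα h hh).2 x hx
    rwa [hcle _ (hmem h hh x hx)] at this
  · exact hmem
  · intro h hh x hx x' hx'
    have m1 := hmem h hh x hx
    have m2 := hmem h hh x' hx'
    have h1 := hab' _ ⟨by linarith [m1.1], m1.2.trans hbb'⟩ _ ⟨by linarith [m2.1], m2.2.trans hbb'⟩
    refine h1.trans ?_
    have h2 := hLip h hh x hx x' hx'
    calc 1 / (4 * L) * |α (h, x) - α (h, x')| ≤ 1 / (4 * L) * (L * |x - x'|) := by gcongr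
      _ = 1 / 4 * |x - x'| := by field_simp
  · intro z hz
    exact (hall z (hbox z hz)).2.1.continuousWithinAt
  · intro z hz
    exact (hall z (hbox z hz)).2.2.1
  · intro z hz
    exact (hall z (hbox z hz)).2.2.2.1.le

lemma chart (P Q : ℝ × ℝ → ℝ) (hP : AnalyticAt ℝ P (0, 0)) (hQ : AnalyticAt ℝ Q (0, 0))
    (hP0 : P (0, 0) ≠ 0) (a : ℝ → ℝ) (hac : Continuous a) (ha0 : ∀ y, 0 ≤ a y)
    (ha : ∀ κ > 0, ∃ b > 0, ∀ y₁ ∈ Icc (-b) b, ∀ y₂ ∈ Icc (-b) b,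
      |a y₁ - a y₂| ≤ κ * |y₁ - y₂|)
    (Z : Set (ℝ × ℝ))
    (hZ : ∀ x y, (x, y) ∈ Z ↔ (x = 0 ∧ y = 0) ∨ (x ≠ 0 ∧ |x| = a y)) :
    ∃ e : OpenPartialHomeomorph (ℝ × ℝ) (ℝ × ℝ), (0, 0) ∈ e.source ∧ e (0, 0) = (0, 0) ∧
      (∀ z ∈ e.source, z ∈ Z ↔ e z ∈ Z) ∧
      (∀ J c, IsPhaseCurve (fun z => (P z, Q z)) e.source J c →
        ContinuousOn (fun t => e (c t)) J ∧
        StrictMonoOn (fun t => P (0, 0) * (e (c t)).1) J ∧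
        ∃ h, ∀ t ∈ J, (e (c t)).2 = h) ∧
      (∀ (J : Set ℝ) (w : ℝ → ℝ × ℝ), J.OrdConnected → J.Nontrivial → (∀ t ∈ J, w t ∈ e.target) →
        ContinuousOn w J → StrictMonoOn (fun t => P (0, 0) * (w t).1) J →
        (∃ h, ∀ t ∈ J, (w t).2 = h) →
        ∃ J' c τ, IsPhaseCurve (fun z => (P z, Q z)) e.source J' c ∧
          ContinuousOn τ J ∧ StrictMonoOn τ J ∧ τ '' J = J' ∧
          ∀ t ∈ J, e.symm (w t) = c (τ t)) := by
  obtain ⟨η, r, b, M, K, u, hη, hr, huc, hu0, hud, hub, hua, hPc, hPpos, hPM, hlip⟩ :=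
    box P Q hP hQ hP0 a ha
  have iη : Ioo (-η) η ⊆ Icc (-η) η := Ioo_subset_Icc_self
  have ir : Ioo (-r) r ⊆ Icc (-r) r := Ioo_subset_Icc_self
  have h0η : (0:ℝ) ∈ Ioo (-η) η := by constructor <;> linarith
  have h0r : (0:ℝ) ∈ Ioo (-r) r := by constructor <;> linarith
  -- the orbits are ordered by their height
  have hmono : ∀ x ∈ Ioo (-η) η, StrictMonoOn (fun h => u (x, h)) (Ioo (-r) r) := by
    intro x hx h₁ hh₁ h₂ hh₂ h12
    by_contra hcon
    simp only [not_lt] at hcon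
    have hcont : ∀ h ∈ Ioo (-r) r, ContinuousOn (fun x => u (x, h)) (Icc (-η) η) :=
      fun h hh t ht => (hud h (ir hh) t ht).continuousWithinAt
    have hpre := isPreconnected_Icc.intermediate_value₂ (iη h0η) (iη hx) (hcont h₁ hh₁) (hcont h₂ hh₂)
      (by rw [hu0 _ (ir hh₁), hu0 _ (ir hh₂)]; exact h12.le) hcon
    obtain ⟨t, ht, hte⟩ := hpre
    have := uniq_on (Icc (-η) η) ordConnected_Icc (fun x y => Q (x, y) / P (x, y)) K (Icc (-b) b) hlip
      (fun x => u (x, h₁)) (fun x => u (x, h₂)) (hud h₁ (ir hh₁)) (hub h₁ (ir hh₁))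
      (hud h₂ (ir hh₂)) (hub h₂ (ir hh₂)) t ht hte (iη h0η)
    simp only [hu0 _ (ir hh₁), hu0 _ (ir hh₂)] at this
    exact absurd this h12.ne
  -- straightening of the orbits
  obtain ⟨G', hG's, hG'⟩ := fiber_homeo (fun z => u (z.2, z.1)) r η
    (huc.comp (by fun_prop) (fun z hz => ⟨iη hz.2, ir hz.1⟩)) hmono
  obtain ⟨G, hGs, hG⟩ : ∃ G : OpenPartialHomeomorph (ℝ × ℝ) (ℝ × ℝ),
      G.source = Ioo (-η) η ×ˢ Ioo (-r) r ∧ ∀ z, G z = (z.1, u z) := by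
    refine ⟨((Homeomorph.prodComm ℝ ℝ).toOpenPartialHomeomorph.trans G').trans
      (Homeomorph.prodComm ℝ ℝ).toOpenPartialHomeomorph, ?_, ?_⟩
    · ext ⟨x, h⟩
      simp [hG's, and_comm]
    · rintro ⟨x, h⟩
      simp [hG']
  set s : ℝ × ℝ → ℝ := fun z => z.1 - a (u (max z.1 0, z.2)) + a (u (min z.1 0, z.2)) with hs
  have hmax : ∀ x ∈ Icc (-η) η, max x 0 ∈ Icc (-η) η := fun x hx =>
    ⟨hx.1.trans (le_max_left _ _), max_le hx.2 hη.le⟩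
  have hmin : ∀ x ∈ Icc (-η) η, min x 0 ∈ Icc (-η) η := fun x hx =>
    ⟨le_min hx.1 (by linarith), (min_le_left _ _).trans hx.2⟩
  have hsc : ContinuousOn s (Ioo (-η) η ×ˢ Ioo (-r) r) := by
    apply ContinuousOn.add
    · apply ContinuousOn.sub continuousOn_fst
      apply hac.comp_continuousOn
      exact huc.comp (by fun_prop) (fun z hz => ⟨hmax _ (iη hz.1), ir hz.2⟩)
    · apply hac.comp_continuousOn
      exact huc.comp (by fun_prop) (fun z hz => ⟨hmin _ (iη hz.1), ir hz.2⟩)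
  have hsm : ∀ h ∈ Ioo (-r) r, StrictMonoOn (fun x => s (x, h)) (Ioo (-η) η) := by
    intro h hh x hx x' hx' hlt
    have h1 := (hua h (ir hh) _ (hmax _ (iη hx')) _ (hmax _ (iη hx)))
    have h2 := (hua h (ir hh) _ (hmin _ (iη hx')) _ (hmin _ (iη hx)))
    have h3 := abs_max_sub_max_le_abs x' x 0
    have h4 := abs_min_sub_min_le_max x' 0 x 0
    rw [sub_self, abs_zero, max_eq_left (abs_nonneg _)] at h4
    rw [abs_of_pos (sub_pos.2 hlt)] at h3 h4
    have h5 := (abs_le.1 h1).2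
    have h6 := (abs_le.1 h2).1
    simp only [hs]
    linarith
  have hs0 : ∀ h, s (0, h) = 0 := by intro h; simp [hs]
  obtain ⟨S, hSs, hS⟩ := fiber_homeo s η r hsc hsm
  have hZGS : ∀ z ∈ Ioo (-η) η ×ˢ Ioo (-r) r, G z ∈ Z ↔ S z ∈ Z := by
    rintro ⟨x, h⟩ ⟨hx, hh⟩
    simp only at hx hh
    rw [hG, hS, hZ, hZ]
    simp only
    rcases lt_trichotomy x 0 with hx0 | hx0 | hx0
    · have h1 : s (x, h) < 0 := by
        have := hsm h hh hx h0η hx0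
        simpa [hs0] using this
      have h2 : s (x, h) = x - a h + a (u (x, h)) := by
        simp [hs, max_eq_right hx0.le, min_eq_left hx0.le, hu0 h (ir hh)]
      rw [abs_of_neg hx0, abs_of_neg h1]
      simp only [hx0.ne, h1.ne, false_and, false_or, ne_eq, not_false_eq_true, true_and]
      rw [h2]
      constructor <;> intro <;> linarith
    · subst hx0
      simp [hs0, hu0 h (ir hh)]
    · have h1 : 0 < s (x, h) := by
        have := hsm h hh h0η hx hx0
        simpa [hs0] using this
      have h2 : s (x, h) = x - a (u (x, h)) + a h := by
        simp [hs, max_eq_left hx0.le, min_eq_right hx0.le, hu0 h (ir hh)]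
      rw [abs_of_pos hx0, abs_of_pos h1]
      simp only [hx0.ne', h1.ne', false_and, false_or, ne_eq, not_false_eq_true, true_and]
      rw [h2]
      constructor <;> intro <;> linarith
  have hes : (G.symm.trans S).source = G.target := by
    ext z
    simp only [OpenPartialHomeomorph.trans_source, OpenPartialHomeomorph.symm_source, mem_inter_iff,
      mem_preimage, hSs, and_iff_left_iff_imp]
    intro hz
    rw [← hGs]
    exact G.map_target hz
  have hG00 : G (0, 0) = (0, 0) := by rw [hG]; simp [hu0 0 (ir h0r)]
  have h00 : ((0:ℝ), (0:ℝ)) ∈ G.source := by rw [hGs]; exact ⟨h0η, h0r⟩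
  have hGi00 : G.symm (0, 0) = (0, 0) := by
    conv_lhs => rw [← hG00]
    exact G.left_inv h00
  refine ⟨G.symm.trans S, ?_, ?_, ?_, ?_, ?_⟩
  · rw [hes, ← hG00]
    exact G.map_source h00
  · rw [OpenPartialHomeomorph.trans_apply, hGi00, hS, hs0]
  · intro z hz
    rw [hes] at hz
    have h1 := hZGS (G.symm z) (by rw [← hGs]; exact G.map_target hz)
    rw [G.right_inv hz] at h1
    exact h1
  · rintro J c ⟨hJ, hJn, hcm, hcd⟩
    rw [hes] at hcm
    have hcc : ContinuousOn c J := fun t ht => (hcd t ht).continuousWithinAt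
    have hxd : ∀ t ∈ J, HasDerivWithinAt (fun t => (c t).1) (P (c t)) J t := fun t ht =>
      (hasFDerivAt_fst (𝕜 := ℝ) (E := ℝ) (F := ℝ) (p := c t)).comp_hasDerivWithinAt t (hcd t ht)
    have hyd : ∀ t ∈ J, HasDerivWithinAt (fun t => (c t).2) (Q (c t)) J t := fun t ht =>
      (hasFDerivAt_snd (𝕜 := ℝ) (E := ℝ) (F := ℝ) (p := c t)).comp_hasDerivWithinAt t (hcd t ht)
    have hR : ∀ t ∈ J, G.symm (c t) ∈ Ioo (-η) η ×ˢ Ioo (-r) r := fun t ht => by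
      rw [← hGs]; exact G.map_target (hcm t ht)
    have hGc : ∀ t ∈ J, c t = ((G.symm (c t)).1, u (G.symm (c t))) := fun t ht => by
      rw [← hG]; exact (G.right_inv (hcm t ht)).symm
    have hx1 : ∀ t ∈ J, (G.symm (c t)).1 = (c t).1 := fun t ht =>
      (congrArg Prod.fst (hGc t ht)).symm
    have hx : ∀ t ∈ J, (c t).1 ∈ Ioo (-η) η := fun t ht => by
      rw [← hx1 t ht]; exact (hR t ht).1
    have hy1 : ∀ t ∈ J, (c t).2 = u ((c t).1, (G.symm (c t)).2) := fun t ht => by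
      rw [← hx1 t ht]; exact congrArg Prod.snd (hGc t ht)
    have hy : ∀ t ∈ J, (c t).2 ∈ Icc (-b) b := fun t ht => by
      rw [hy1 t ht]; exact hub _ (ir (hR t ht).2) _ (iη (hx t ht))
    have hPp : ∀ t ∈ J, 0 < P (0, 0) * P (c t) := fun t ht => hPpos _ ⟨iη (hx t ht), hy t ht⟩
    have hPn : ∀ t ∈ J, P (c t) ≠ 0 := fun t ht h => by have := hPp t ht; simp [h] at this
    obtain ⟨t₀, ht₀⟩ := hJn.nonempty
    set h₀ := (G.symm (c t₀)).2 with hh₀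
    have hh₀r : h₀ ∈ Ioo (-r) r := (hR t₀ ht₀).2
    have hM : 0 ≤ M := (abs_nonneg _).trans (hPM _ ⟨iη (hx t₀ ht₀), hy t₀ ht₀⟩)
    have heq : EqOn (fun t => (c t).2) (fun t => u ((c t).1, h₀)) J := by
      refine uniq_on J hJ (fun t y => Q ((c t).1, y) / P ((c t).1, y) * P (c t)) (K * M.toNNReal)
        (Icc (-b) b) ?_ _ _ ?_ hy ?_ (fun t ht => hub _ (ir hh₀r) _ (iη (hx t ht))) t₀ ht₀ (hy1 t₀ ht₀)
      · intro t ht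
        rw [lipschitzOnWith_iff_dist_le_mul]
        intro y hy' y' hy''
        have h1 := (hlip _ (iη (hx t ht))).dist_le_mul y hy' y' hy''
        rw [Real.dist_eq] at h1 ⊢
        rw [← sub_mul, abs_mul, NNReal.coe_mul, Real.coe_toNNReal _ hM]
        calc _ ≤ (K * dist y y') * M := by
              gcongr
              exact hPM _ ⟨iη (hx t ht), hy t ht⟩
          _ = _ := by ring
      · intro t ht
        have h1 := hyd t ht
        have h2 : Q ((c t).1, (c t).2) / P ((c t).1, (c t).2) * P (c t) = Q (c t) :=
          div_mul_cancel₀ _ (hPn t ht)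
        rwa [h2]
      · intro t ht
        have h1 : HasDerivAt (fun x => u (x, h₀)) _ (c t).1 :=
          (hud h₀ (ir hh₀r) _ (iη (hx t ht))).hasDerivAt (Icc_mem_nhds (hx t ht).1 (hx t ht).2)
        exact h1.comp_hasDerivWithinAt t (hxd t ht)
    have hGi : ∀ t ∈ J, G.symm (c t) = ((c t).1, h₀) := by
      intro t ht
      have hm : ((c t).1, h₀) ∈ G.source := by rw [hGs]; exact ⟨hx t ht, hh₀r⟩
      rw [← G.left_inv hm, hG]
      congr 1
      exact Prod.ext rfl (heq ht)
    refine ⟨?_, ?_, h₀, ?_⟩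
    · refine (G.symm.trans S).continuousOn.comp hcc ?_
      intro t ht
      rw [hes]; exact hcm t ht
    · have hxm : StrictMonoOn (fun t => P (0, 0) * (c t).1) J := by
        apply strictMonoOn_of_hasDerivWithinAt_pos (f' := fun t => P (0, 0) * P (c t)) hJ.convex
        · exact continuousOn_const.mul (continuous_fst.comp_continuousOn hcc)
        · intro t ht
          exact ((hxd t (interior_subset ht)).mono interior_subset).const_mul _
        · intro t ht
          exact hPp t (interior_subset ht)
      intro t ht t' ht' htt
      have h1 := hxm ht ht' htt
      simp only [OpenPartialHomeomorph.trans_apply, hGi t ht, hGi t' ht', hS] at h1 ⊢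
      rcases lt_or_gt_of_ne hP0 with hp | hp
      · have h2 : (c t').1 < (c t).1 := by nlinarith
        have h3 := hsm h₀ hh₀r (hx t' ht') (hx t ht) h2
        simp only at h3
        nlinarith
      · have h2 : (c t).1 < (c t').1 := by nlinarith
        have h3 := hsm h₀ hh₀r (hx t ht) (hx t' ht') h2
        simp only at h3
        nlinarith
    · intro t ht
      rw [OpenPartialHomeomorph.trans_apply, hGi t ht, hS]
  · rintro J w hJ hJn hwt hwc hwm ⟨h, hwh⟩
    have hwS : ∀ t ∈ J, w t ∈ S.target := fun t ht => by
      have := hwt t ht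
      rw [OpenPartialHomeomorph.trans_target] at this
      exact this.1
    have hR : ∀ t ∈ J, S.symm (w t) ∈ Ioo (-η) η ×ˢ Ioo (-r) r := fun t ht => by
      rw [← hSs]; exact S.map_target (hwS t ht)
    have hSw : ∀ t ∈ J, w t = (s (S.symm (w t)), (S.symm (w t)).2) := fun t ht => by
      rw [← hS]; exact (S.right_inv (hwS t ht)).symm
    set x : ℝ → ℝ := fun t => (S.symm (w t)).1 with hxdef
    have hx : ∀ t ∈ J, x t ∈ Ioo (-η) η := fun t ht => (hR t ht).1
    have hh2 : ∀ t ∈ J, (S.symm (w t)).2 = h := fun t ht => by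
      rw [← hwh t ht]; exact (congrArg Prod.snd (hSw t ht)).symm
    have hsx : ∀ t ∈ J, S.symm (w t) = (x t, h) := fun t ht => Prod.ext rfl (hh2 t ht)
    have hw1 : ∀ t ∈ J, (w t).1 = s (x t, h) := fun t ht => by
      rw [← hsx t ht]; exact congrArg Prod.fst (hSw t ht)
    obtain ⟨t₀, ht₀⟩ := hJn.nonempty
    have hh : h ∈ Ioo (-r) r := by rw [← hh2 t₀ ht₀]; exact (hR t₀ ht₀).2
    have hxc : ContinuousOn x J :=
      continuous_fst.comp_continuousOn (S.symm.continuousOn.comp hwc hwS)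
    have hxm : ∀ t ∈ J, ∀ t' ∈ J, t < t' → P (0, 0) * x t < P (0, 0) * x t' := by
      intro t ht t' ht' htt
      have h1 := hwm ht ht' htt
      simp only [hw1 t ht, hw1 t' ht'] at h1
      rcases lt_or_gt_of_ne hP0 with hp | hp
      · have h2 : s (x t', h) < s (x t, h) := by nlinarith
        have h3 := ((hsm h hh).lt_iff_lt (hx t' ht') (hx t ht)).1 h2
        nlinarith
      · have h2 : s (x t, h) < s (x t', h) := by nlinarith
        have h3 := ((hsm h hh).lt_iff_lt (hx t ht) (hx t' ht')).1 h2
        nlinarith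
    have hum : ∀ ξ ∈ Icc (-η) η, (ξ, u (ξ, h)) ∈ Icc (-η) η ×ˢ Icc (-b) b := fun ξ hξ =>
      ⟨hξ, hub h (ir hh) ξ hξ⟩
    obtain ⟨T, θ, hTc, hTm, hθT, hθd⟩ := time_param (fun ξ => P (ξ, u (ξ, h))) η (P (0, 0)) hη
      (hPc.comp (continuousOn_id.prodMk (fun ξ hξ => (hud h (ir hh) ξ hξ).continuousWithinAt)) hum)
      (fun ξ hξ => hPpos _ (hum ξ hξ))
    have hτc : ContinuousOn (fun t => T (x t)) J := hTc.comp_continuousOn hxc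
    have hτm : StrictMonoOn (fun t => T (x t)) J := fun t ht t' ht' htt =>
      hTm _ _ (hxm t ht t' ht' htt)
    refine ⟨(fun t => T (x t)) '' J, fun q => (θ q, u (θ q, h)), fun t => T (x t), ⟨?_, ?_, ?_, ?_⟩,
      hτc, hτm, rfl, ?_⟩
    · exact (hJ.isPreconnected.image _ hτc).ordConnected
    · exact hJn.image_of_injOn hτm.injOn
    · rintro _ ⟨t, ht, rfl⟩
      simp only [hθT]
      rw [hes]
      have hm : (x t, h) ∈ G.source := by rw [hGs]; exact ⟨hx t ht, hh⟩
      have := G.map_source hm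
      rwa [hG] at this
    · rintro _ ⟨t, ht, rfl⟩
      have d1 := hθd (x t) (iη (hx t ht))
      have d2 : HasDerivAt (fun x => u (x, h)) _ (x t) :=
        (hud h (ir hh) _ (iη (hx t ht))).hasDerivAt (Icc_mem_nhds (hx t ht).1 (hx t ht).2)
      have hPn : P (x t, u (x t, h)) ≠ 0 := fun h0 => by
        have := hPpos _ (hum _ (iη (hx t ht))); simp [h0] at this
      have d3 := d2
      rw [← hθT (x t)] at d3
      have d4 := d3.comp (T (x t)) d1
      simp only [hθT] at d4 ⊢
      rw [div_mul_cancel₀ _ hPn] at d4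
      exact (d1.prodMk d4).hasDerivWithinAt
    · intro t ht
      simp only [hθT]
      rw [OpenPartialHomeomorph.trans_symm_eq_symm_trans_symm, OpenPartialHomeomorph.trans_apply,
        hsx t ht, OpenPartialHomeomorph.symm_symm, hG]

end Helpers

open Set in
/-- (`A_k`-type impasse curve, `k ≥ 2`, Case 1 of Table 2.)
If `δ(x,y) = x² + ε·y^{k+1}` and `X = (P,Q)` is real-analytic near the origin with
`P(0,0) ≠ 0`, then `(X, δ)` is orientation-preserving `C⁰`-orbitally equivalent at the origin
to the system with the constant adjoint vector field `(P(0,0), Q(0,0))` and the same `δ`. -/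
theorem Ak_case1 (k : ℕ) (hk : 2 ≤ k) (ε : ℝ) (hε : ε = 1 ∨ ε = -1)
    (P Q : ℝ × ℝ → ℝ)
    (hP : AnalyticAt ℝ P (0, 0)) (hQ : AnalyticAt ℝ Q (0, 0))
    (hP0 : P (0, 0) ≠ 0) :
    OrbitallyEquivAt (fun z => (P z, Q z)) (fun z => z.1 ^ 2 + ε * z.2 ^ (k + 1)) (0, 0)
      (fun _ => (P (0, 0), Q (0, 0))) (fun z => z.1 ^ 2 + ε * z.2 ^ (k + 1)) (0, 0) := by
  set a : ℝ → ℝ := fun y => √(max 0 (-(ε * y ^ (k+1)))) with ha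
  have hac : Continuous a := by fun_prop
  set Z : Set (ℝ × ℝ) := {z | z.1 ^ 2 + ε * z.2 ^ (k + 1) = 0} with hZdef
  have hε0 : ε ≠ 0 := by rcases hε with h | h <;> simp [h]
  have hZ : ∀ x y, (x, y) ∈ Z ↔ (x = 0 ∧ y = 0) ∨ (x ≠ 0 ∧ |x| = a y) := by
    intro x y
    simp only [hZdef, mem_ofPred_eq, ha]
    by_cases hx : x = 0
    · subst hx
      simp [hε0]
    · have hx2 : 0 < x ^ 2 := by positivity
      simp only [hx, false_and, false_or, ne_eq, not_false_eq_true, true_and]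
      rw [← Real.sqrt_sq_eq_abs, Real.sqrt_inj hx2.le (le_max_left _ _)]
      constructor
      · intro h
        rw [max_eq_right (by linarith)]; linarith
      · intro h
        rcases le_total 0 (-(ε * y ^ (k+1))) with h1 | h1
        · rw [max_eq_right h1] at h; linarith
        · rw [max_eq_left h1] at h; linarith
  obtain ⟨e, he0, hee, heZ, hec, hed⟩ := chart P Q hP hQ hP0 a hac (fun y => Real.sqrt_nonneg _)
    (small_lip k hk ε hε) Z hZ
  obtain ⟨e', he0', hee', heZ', hec', hed'⟩ := chart (fun _ => P (0, 0)) (fun _ => Q (0, 0))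
    analyticAt_const analyticAt_const hP0 a hac (fun y => Real.sqrt_nonneg _)
    (small_lip k hk ε hε) Z hZ
  set F := e.trans e'.symm with hF
  have hFs : ∀ z ∈ F.source, z ∈ e.source ∧ e z ∈ e'.target := fun z hz => by
    rw [hF, OpenPartialHomeomorph.trans_source] at hz; exact hz
  have hFt : ∀ z ∈ F.target, z ∈ e'.source ∧ e' z ∈ e.target := fun z hz => by
    rw [hF, OpenPartialHomeomorph.trans_target] at hz; exact hz
  have hFa : ∀ z, F z = e'.symm (e z) := fun z => rfl
  have hFi : ∀ z, F.symm z = e.symm (e' z) := fun z => rfl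
  have hFZ : ∀ z ∈ F.source, z ∈ Z ↔ F z ∈ Z := by
    intro z hz
    obtain ⟨h1, h2⟩ := hFs z hz
    rw [heZ z h1, heZ' (F z) (e'.map_target h2), hFa, e'.right_inv h2]
  have hi00 : e'.symm (0, 0) = (0, 0) := by
    conv_lhs => rw [← hee']
    exact e'.left_inv he0'
  have h00 : F (0, 0) = (0, 0) := by rw [hFa, hee, hi00]
  have h00s : ((0:ℝ), (0:ℝ)) ∈ F.source := by
    rw [hF, OpenPartialHomeomorph.trans_source]
    refine ⟨he0, ?_⟩
    rw [mem_preimage, hee]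
    have := e'.map_source he0'
    rwa [hee'] at this
  refine ⟨F.source, F.target, F, F.symm, F.open_source, F.open_target, h00s, ?_, F.continuousOn,
    F.symm.continuousOn, F.mapsTo, F.symm.mapsTo, fun z hz => F.left_inv hz,
    fun z hz => F.right_inv hz, h00, ?_, ?_, ?_⟩
  · have := F.map_source h00s
    rwa [h00] at this
  · change F '' (Z ∩ F.source) = Z ∩ F.target
    ext z
    constructor
    · rintro ⟨p, ⟨hp, hps⟩, rfl⟩
      exact ⟨(hFZ p hps).1 hp, F.map_source hps⟩
    · rintro ⟨hz, hzt⟩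
      have h1 := F.map_target hzt
      refine ⟨F.symm z, ⟨(hFZ _ h1).2 ?_, h1⟩, F.right_inv hzt⟩
      rwa [F.right_inv hzt]
  · rintro J c ⟨hJ, hJn, hcm, hcd⟩
    change ∀ t ∈ J, c t ∈ F.source \ Z at hcm
    obtain ⟨w1, w2, w3⟩ := hec J c ⟨hJ, hJn, fun t ht => (hFs _ (hcm t ht).1).1, hcd⟩
    obtain ⟨J', d, τ, ⟨q1, q2, q3, q4⟩, hτ1, hτ2, hτ3, hτ4⟩ := hed' J (fun t => e (c t)) hJ hJn
      (fun t ht => (hFs _ (hcm t ht).1).2) w1 w2 w3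
    refine ⟨J', d, τ, ⟨q1, q2, ?_, q4⟩, hτ1, hτ2, hτ3, hτ4⟩
    change ∀ t ∈ J', d t ∈ F.target \ Z
    rw [← hτ3]
    rintro _ ⟨t, ht, rfl⟩
    rw [← hτ4 t ht, ← hFa]
    exact ⟨F.map_source (hcm t ht).1, fun hz => (hcm t ht).2 ((hFZ _ (hcm t ht).1).2 hz)⟩
  · rintro J c ⟨hJ, hJn, hcm, hcd⟩
    change ∀ t ∈ J, c t ∈ F.target \ Z at hcm
    obtain ⟨w1, w2, w3⟩ := hec' J c ⟨hJ, hJn, fun t ht => (hFt _ (hcm t ht).1).1, hcd⟩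
    obtain ⟨J', d, τ, ⟨q1, q2, q3, q4⟩, hτ1, hτ2, hτ3, hτ4⟩ := hed J (fun t => e' (c t)) hJ hJn
      (fun t ht => (hFt _ (hcm t ht).1).2) w1 w2 w3
    refine ⟨J', d, τ, ⟨q1, q2, ?_, q4⟩, hτ1, hτ2, hτ3, hτ4⟩
    change ∀ t ∈ J', d t ∈ F.source \ Z
    rw [← hτ3]
    rintro _ ⟨t, ht, rfl⟩
    rw [← hτ4 t ht, ← hFi]
    have h1 := F.map_target (hcm t ht).1
    refine ⟨h1, fun hz => (hcm t ht).2 ?_⟩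
    have := (hFZ _ h1).1 hz
    rwa [F.right_inv (hcm t ht).1] at this
end

section
/- Let ε ∈ {1, −1} and δ(x, y) = x² + ε·y² (an A₁-type singular impasse curve). Let X = (P, Q) be real-analytic on a neighborhood of the origin in ℝ² with P(0,0) ≠ 0, P(0,0) ≠ Q(0,0) and P(0,0) ≠ −Q(0,0). Then the constrained system (X, δ) is orientation-preserving C⁰-orbitally equivalent at (0, 0) to the constrained system (Y, δ), where Y is the constant vector field Y ≡ (P(0,0), Q(0,0)). -/
open Set Filter Topology Metric
open scoped NNReal

lemma exists_orbit_graphs (ρ : ℝ × ℝ → ℝ) (hρ : ContDiffAt ℝ 1 ρ 0) (h0 : ρ 0 = 1)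
    (U : Set (ℝ × ℝ)) (hU : U ∈ 𝓝 (0 : ℝ × ℝ)) :
    ∃ m > 0, ∃ h : ℝ → ℝ → ℝ,
      (∀ α ∈ Ioo (-m) m, h α 0 = α) ∧
      (∀ α ∈ Ioo (-m) m, ∀ η ∈ Ioo (-m) m, HasDerivAt (h α) (ρ (h α η, η)) η) ∧
      (∀ α ∈ Ioo (-m) m, ∀ η ∈ Ioo (-m) m, (h α η, η) ∈ U) ∧
      (∀ α ∈ Ioo (-m) m, ∀ α' ∈ Ioo (-m) m, ∀ η ∈ Ioo (-m) m, ∀ η' ∈ Ioo (-m) m,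
        |h α η - h α' η' - ((α - α') + (η - η'))| ≤ 1/8 * |α - α'| + 1/8 * |η - η'|) := by
  obtain ⟨K, t, ht, hK⟩ := hρ.exists_lipschitzOnWith
  have hc : ∀ᶠ z in 𝓝 (0 : ℝ × ℝ), |ρ z - 1| < 1/8 := by
    have := hρ.continuousAt
    have h2 := (Metric.tendsto_nhds.1 this) (1/8) (by norm_num)
    simpa [Real.dist_eq, h0] using h2
  obtain ⟨e, he, hball⟩ := Metric.nhds_basis_closedBall.mem_iff.1
    (inter_mem (inter_mem hU ht) hc)
  have hbox : ∀ x y : ℝ, |x| ≤ e → |y| ≤ e → (x, y) ∈ (U ∩ t) ∩ {z | |ρ z - 1| < 1/8} := by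
    intro x y hx hy
    apply hball
    simp [Prod.norm_def, hx, hy]
  set cl : ℝ → ℝ := fun x => max (-e) (min e x) with hcl
  have cl_abs : ∀ x, |cl x| ≤ e := by
    intro x
    rw [abs_le]
    exact ⟨le_max_left _ _, max_le (by linarith) (min_le_left _ _)⟩
  have cl_id : ∀ x, |x| ≤ e → cl x = x := by
    intro x hx
    rw [abs_le] at hx
    simp only [hcl]
    rw [min_eq_right hx.2, max_eq_right hx.1]
  have cl_lip : LipschitzWith 1 cl := (LipschitzWith.id.const_min e).const_max (-e)
  set f : ℝ → ℝ → ℝ := fun η x => ρ (cl x, cl η) with hf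
  have f_bd : ∀ η x, |f η x - 1| ≤ 1/8 := fun η x =>
    (hbox _ _ (cl_abs x) (cl_abs η)).2.le
  have f_lip : ∀ η, LipschitzWith K (f η) := by
    intro η
    apply LipschitzWith.of_dist_le_mul
    intro x y
    calc dist (f η x) (f η y) ≤ K * dist (cl x, cl η) (cl y, cl η) :=
          hK.dist_le_mul _ (hbox _ _ (cl_abs x) (cl_abs η)).1.2 _
            (hbox _ _ (cl_abs y) (cl_abs η)).1.2
      _ ≤ K * dist x y := by
          gcongr
          have := cl_lip.dist_le_mul x y
          simpa [Prod.dist_eq] using this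
  have f_cont : ∀ x, Continuous (fun η => f η x) := by
    intro x
    have : ContinuousOn ρ t := hK.continuousOn
    refine this.comp_continuous (by have := cl_lip.continuous; fun_prop) ?_
    intro η
    exact (hbox _ _ (cl_abs x) (cl_abs η)).1.2
  have hPL : IsPicardLindelof f (tmin := -1) (tmax := 1) ⟨0, by norm_num, by norm_num⟩ 0 3 1 2 K :=
    { lipschitzOnWith := fun η _ => (f_lip η).lipschitzOnWith
      continuousOn := fun x _ => (f_cont x).continuousOn
      norm_le := by
        intro η _ x _
        have := abs_le.1 (f_bd η x)
        rw [Real.norm_eq_abs, abs_le]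
        constructor <;> norm_num <;> linarith
      mul_max_le := by norm_num }
  obtain ⟨h, hh, L', hL'⟩ := hPL.exists_forall_mem_closedBall_eq_hasDerivWithinAt_lipschitzOnWith
  set m : ℝ := min 1 (min (e/3) (1/(8*(K*L'+1)))) with hm
  have hm0 : 0 < m := by positivity
  have hm1 : m ≤ 1 := min_le_left _ _
  have hm2 : m ≤ e/3 := (min_le_right _ _).trans (min_le_left _ _)
  have hm3 : m * (K * L') ≤ 1/8 := by
    have h3 : m ≤ 1/(8*(K*L'+1)) := (min_le_right _ _).trans (min_le_right _ _)
    have hKL : (0:ℝ) ≤ K * L' := by positivity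
    rw [le_div_iff₀ (by positivity)] at h3
    nlinarith
  have hball1 : ∀ α ∈ Ioo (-m) m, α ∈ closedBall (0:ℝ) ((1:ℝ≥0):ℝ) := by
    intro α hα
    simp only [mem_closedBall, dist_zero_right, Real.norm_eq_abs, NNReal.coe_one]
    rw [abs_le]; constructor <;> linarith [hα.1, hα.2]
  have hsub : ∀ η ∈ Ioo (-m) m, η ∈ Ioo (-1:ℝ) 1 := fun η hη =>
    ⟨by linarith [hη.1], by linarith [hη.2]⟩
  have h00 : (0:ℝ) ∈ Ioo (-m) m := ⟨by linarith, hm0⟩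
  have hstart : ∀ α ∈ Ioo (-m) m, h α 0 = α := fun α hα => (hh α (hball1 α hα)).1
  have hder : ∀ α ∈ Ioo (-m) m, ∀ η ∈ Ioo (-m) m, HasDerivAt (h α) (f η (h α η)) η := by
    intro α hα η hη
    exact ((hh α (hball1 α hα)).2 η (Ioo_subset_Icc_self (hsub η hη))).hasDerivAt
      (Icc_mem_nhds (hsub η hη).1 (hsub η hη).2)
  -- estimate in η
  have est1 : ∀ α ∈ Ioo (-m) m, ∀ η ∈ Ioo (-m) m, ∀ η' ∈ Ioo (-m) m,
      |h α η - h α η' - (η - η')| ≤ 1/8 * |η - η'| := by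
    intro α hα η hη η' hη'
    have := Convex.norm_image_sub_le_of_norm_hasDerivWithin_le (f := fun s => h α s - s)
      (f' := fun s => f s (h α s) - 1) (s := Ioo (-m) m) (C := 1/8) (x := η') (y := η)
      (fun s hs => ((hder α hα s hs).sub (hasDerivAt_id s)).hasDerivWithinAt)
      (fun s hs => f_bd _ _) (convex_Ioo _ _) hη' hη
    simp only [Real.norm_eq_abs] at this
    convert this using 2
    ring
  have est2 : ∀ α ∈ Ioo (-m) m, ∀ α' ∈ Ioo (-m) m, ∀ η ∈ Ioo (-m) m,
      |h α η - h α' η - (α - α')| ≤ 1/8 * |α - α'| := by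
    intro α hα α' hα' η hη
    have := Convex.norm_image_sub_le_of_norm_hasDerivWithin_le (f := fun s => h α s - h α' s)
      (f' := fun s => f s (h α s) - f s (h α' s)) (s := Ioo (-m) m)
      (C := K * (L' * |α - α'|)) (x := 0) (y := η)
      (fun s hs => ((hder α hα s hs).sub (hder α' hα' s hs)).hasDerivWithinAt)
      (fun s hs => by
        have h1 := (f_lip s).dist_le_mul (h α s) (h α' s)
        have h2 := (hL' s (Ioo_subset_Icc_self (hsub s hs))).dist_le_mul α (hball1 α hα) α'
          (hball1 α' hα')
        rw [Real.dist_eq] at h1 h2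
        rw [Real.dist_eq] at h1 h2
        rw [Real.norm_eq_abs]
        exact h1.trans (by gcongr)) (convex_Ioo _ _) h00 hη
    simp only [Real.norm_eq_abs, hstart α hα, hstart α' hα', sub_zero] at this
    refine this.trans ?_
    have hη' : |η| ≤ m := (abs_lt.2 hη).le
    calc K * (L' * |α - α'|) * |η| ≤ K * (L' * |α - α'|) * m := by gcongr
      _ = (m * (K * L')) * |α - α'| := by ring
      _ ≤ _ := by gcongr
  have hsmall : ∀ α ∈ Ioo (-m) m, ∀ η ∈ Ioo (-m) m, |h α η| ≤ e := by
    intro α hα η hη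
    have h1 := est1 α hα η hη 0 h00
    rw [hstart α hα] at h1
    have hα' := abs_lt.2 hα
    have hη' := abs_lt.2 hη
    have : h α η = (h α η - α - (η - 0)) + α + η := by ring
    rw [this]
    refine (abs_add_three _ _ _).trans ?_
    simp only [sub_zero] at h1 ⊢
    linarith
  have hηe : ∀ η ∈ Ioo (-m) m, |η| ≤ e := fun η hη => by
    have hη' := abs_lt.2 hη
    linarith
  refine ⟨m, hm0, h, hstart, ?_, ?_, ?_⟩
  · intro α hα η hη
    have := hder α hα η hη
    simpa only [hf, cl_id _ (hsmall α hα η hη), cl_id _ (hηe η hη)] using this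
  · intro α hα η hη
    exact (hbox _ _ (hsmall α hα η hη) (hηe η hη)).1.1
  · intro α hα α' hα' η hη η' hη'
    have h1 := est1 α hα η hη η' hη'
    have h2 := est2 α hα α' hα' η' hη'
    have : h α η - h α' η' - ((α - α') + (η - η'))
      = (h α η' - h α' η' - (α - α')) + (h α η - h α η' - (η - η')) := by ring
    rw [this]
    exact (abs_add_le _ _).trans (add_le_add h2 h1)

lemma strictMonoOn_of_hasDerivWithinAt_pos' {J : Set ℝ} (hJ : J.OrdConnected) {f f' : ℝ → ℝ}
    (hf : ∀ t ∈ J, HasDerivWithinAt f (f' t) J t) (hpos : ∀ t ∈ J, 0 < f' t) :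
    StrictMonoOn f J :=
  strictMonoOn_of_hasDerivWithinAt_pos hJ.convex (fun t ht => (hf t ht).continuousWithinAt)
    (fun t ht => (hf t (interior_subset ht)).mono interior_subset)
    (fun t ht => hpos t (interior_subset ht))

lemma hasDerivWithinAt_fst_comp {J : Set ℝ} {c : ℝ → ℝ × ℝ} {v : ℝ × ℝ} {t : ℝ}
    (h : HasDerivWithinAt c v J t) : HasDerivWithinAt (fun t => (c t).1) v.1 J t :=
  (ContinuousLinearMap.fst ℝ ℝ ℝ).hasFDerivAt.comp_hasDerivWithinAt t h

lemma hasDerivWithinAt_snd_comp {J : Set ℝ} {c : ℝ → ℝ × ℝ} {v : ℝ × ℝ} {t : ℝ}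
    (h : HasDerivWithinAt c v J t) : HasDerivWithinAt (fun t => (c t).2) v.2 J t :=
  (ContinuousLinearMap.snd ℝ ℝ ℝ).hasFDerivAt.comp_hasDerivWithinAt t h

lemma const_of_hasDerivWithinAt_zero {J : Set ℝ} (hJ : J.OrdConnected) {f : ℝ → ℝ}
    (hf : ∀ t ∈ J, HasDerivWithinAt f 0 J t) {s t : ℝ} (hs : s ∈ J) (ht : t ∈ J) : f t = f s := by
  have := Convex.norm_image_sub_le_of_norm_hasDerivWithin_le (f := f) (f' := fun _ => 0) (C := 0)
    hf (by simp) hJ.convex hs ht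
  simpa [sub_eq_zero] using this

/-- The shear `(α, η) ↦ (α + η, η)`. -/
noncomputable def shearE : (ℝ × ℝ) ≃L[ℝ] (ℝ × ℝ) :=
  ContinuousLinearEquiv.equivOfInverse
    ((ContinuousLinearMap.fst ℝ ℝ ℝ + ContinuousLinearMap.snd ℝ ℝ ℝ).prod
      (ContinuousLinearMap.snd ℝ ℝ ℝ))
    ((ContinuousLinearMap.fst ℝ ℝ ℝ - ContinuousLinearMap.snd ℝ ℝ ℝ).prod
      (ContinuousLinearMap.snd ℝ ℝ ℝ))
    (by intro z; ext <;> simp) (by intro z; ext <;> simp)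

lemma shearE_apply (z : ℝ × ℝ) : shearE z = (z.1 + z.2, z.2) := rfl

lemma shearE_symm_norm : (1/4 : ℝ≥0) < ‖(shearE.symm : (ℝ × ℝ) →L[ℝ] (ℝ × ℝ))‖₊⁻¹ := by
  have h : ‖(shearE.symm : (ℝ × ℝ) →L[ℝ] (ℝ × ℝ))‖ ≤ 2 := by
    apply ContinuousLinearMap.opNorm_le_bound _ (by norm_num)
    intro z
    have : (shearE.symm : (ℝ × ℝ) →L[ℝ] (ℝ × ℝ)) z = (z.1 - z.2, z.2) := rfl
    rw [this, Prod.norm_def, Prod.norm_def]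
    have h1 := norm_sub_le z.1 z.2
    have h2 := le_max_left ‖z.1‖ ‖z.2‖
    have h3 := le_max_right ‖z.1‖ ‖z.2‖
    have h4 := norm_nonneg z.2
    apply max_le <;> dsimp only <;> linarith
  have hpos : 0 < ‖(shearE.symm : (ℝ × ℝ) →L[ℝ] (ℝ × ℝ))‖₊ :=
    ContinuousLinearEquiv.nnnorm_symm_pos shearE
  rw [lt_inv_comm₀ (by norm_num) hpos]
  refine lt_of_le_of_lt (b := 2) ?_ (by norm_num)
  exact_mod_cast h

lemma core_equiv (R S : ℝ × ℝ → ℝ) (hR : ContDiffAt ℝ 1 R 0) (hS : ContDiffAt ℝ 1 S 0)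
    (hR0 : R 0 = 1) (hS0 : S 0 = 1) (D : ℝ × ℝ → ℝ)
    (hD : ∀ z w : ℝ × ℝ, (z.1 = 0 ↔ w.1 = 0) → (z.2 = 0 ↔ w.2 = 0) → (D z = 0 ↔ D w = 0)) :
    OrbitallyEquivAt (fun z => (R z, S z)) D 0 (fun _ => (1, 1)) D 0 := by
  obtain ⟨U, hU, hUp⟩ : ∃ U ∈ 𝓝 (0 : ℝ × ℝ), ∀ z ∈ U, 0 < R z ∧ 0 < S z ∧ ContinuousAt S z := by
    have h1 : ∀ᶠ z in 𝓝 (0 : ℝ × ℝ), 0 < R z :=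
      hR.continuousAt.eventually (lt_mem_nhds (by rw [hR0]; norm_num))
    have h2 : ∀ᶠ z in 𝓝 (0 : ℝ × ℝ), 0 < S z :=
      hS.continuousAt.eventually (lt_mem_nhds (by rw [hS0]; norm_num))
    have h3 : ∀ᶠ z in 𝓝 (0 : ℝ × ℝ), ContinuousAt S z :=
      (hS.eventually (by simp)).mono fun z hz => hz.continuousAt
    exact ⟨_, h1.and (h2.and h3), fun z hz => hz⟩
  obtain ⟨m, hm, h, hstart, hder, hmem, hest⟩ := exists_orbit_graphs (fun z => R z / S z)
    (hR.div hS (by rw [hS0]; norm_num)) (by simp [hR0, hS0]) U hU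
  set I : Set ℝ := Ioo (-m) m with hI
  have hI0 : (0:ℝ) ∈ I := ⟨by linarith, hm⟩
  set W : Set (ℝ × ℝ) := I ×ˢ I with hW
  have hWo : IsOpen W := isOpen_Ioo.prod isOpen_Ioo
  set G₁ : ℝ × ℝ → ℝ × ℝ := fun w => (h w.1 w.2, w.2) with hG₁
  set G₂ : ℝ × ℝ → ℝ × ℝ := fun w => (h w.1 w.2, h w.1 w.2 - w.1) with hG₂
  have key : ∀ w ∈ W, ∀ w' ∈ W,
      |h w.1 w.2 - h w'.1 w'.2 - ((w.1 - w'.1) + (w.2 - w'.2))| ≤ (1/4 : ℝ≥0) * ‖w - w'‖ := by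
    intro w hw w' hw'
    have h1 := hest w.1 hw.1 w'.1 hw'.1 w.2 hw.2 w'.2 hw'.2
    have h2 : |w.1 - w'.1| ≤ ‖w - w'‖ := norm_fst_le (w - w')
    have h3 : |w.2 - w'.2| ≤ ‖w - w'‖ := norm_snd_le (w - w')
    push_cast
    linarith
  have A₁ : ApproximatesLinearOn G₁ (shearE : (ℝ × ℝ) →L[ℝ] (ℝ × ℝ)) W (1/4) := by
    intro w hw w' hw'
    have hk := key w hw w' hw'
    rw [ContinuousLinearEquiv.coe_coe, shearE_apply, Prod.norm_def]
    apply max_le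
    · exact hk
    · simp [hG₁]
  have A₂ : ApproximatesLinearOn G₂ (shearE : (ℝ × ℝ) →L[ℝ] (ℝ × ℝ)) W (1/4) := by
    intro w hw w' hw'
    have hk := key w hw w' hw'
    rw [ContinuousLinearEquiv.coe_coe, shearE_apply, Prod.norm_def]
    apply max_le
    · exact hk
    · have e : (h w.1 w.2 - w.1) - (h w'.1 w'.2 - w'.1) - (w.2 - w'.2)
          = h w.1 w.2 - h w'.1 w'.2 - ((w.1 - w'.1) + (w.2 - w'.2)) := by ring
      rw [← e] at hk
      exact hk
  set g₁ := A₁.toOpenPartialHomeomorph G₁ W (Or.inr shearE_symm_norm) hWo with hg₁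
  set g₂ := A₂.toOpenPartialHomeomorph G₂ W (Or.inr shearE_symm_norm) hWo with hg₂
  have e₁ : ∀ w, g₁ w = G₁ w := fun w => rfl
  have e₂ : ∀ w, g₂ w = G₂ w := fun w => rfl
  have s₁ : g₁.source = W := rfl
  have s₂ : g₂.source = W := rfl
  have l₁ : ∀ w ∈ W, g₁.symm (G₁ w) = w := fun w hw => g₁.left_inv hw
  have l₂ : ∀ w ∈ W, g₂.symm (G₂ w) = w := fun w hw => g₂.left_inv hw
  have r₁ : ∀ z ∈ g₁.target, G₁ (g₁.symm z) = z := fun z hz => g₁.right_inv hz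
  have r₂ : ∀ z ∈ g₂.target, G₂ (g₂.symm z) = z := fun z hz => g₂.right_inv hz
  have m₁ : ∀ z ∈ g₁.target, g₁.symm z ∈ W := fun z hz => g₁.map_target hz
  have m₂ : ∀ z ∈ g₂.target, g₂.symm z ∈ W := fun z hz => g₂.map_target hz
  have t₁ : ∀ w ∈ W, G₁ w ∈ g₁.target := fun w hw => g₁.map_source hw
  have t₂ : ∀ w ∈ W, G₂ w ∈ g₂.target := fun w hw => g₂.map_source hw
  have h00 : ((0:ℝ), (0:ℝ)) ∈ W := ⟨hI0, hI0⟩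
  have G₁0 : G₁ 0 = 0 := by simp [hG₁, hstart 0 hI0]
  have G₂0 : G₂ 0 = 0 := by simp [hG₂, hstart 0 hI0]
  -- the two maps have the same zero pattern
  have zp : ∀ w ∈ W, (D (G₁ w) = 0 ↔ D (G₂ w) = 0) := by
    intro w hw
    apply hD
    · rfl
    · have h1 := hest w.1 hw.1 w.1 hw.1 w.2 hw.2 0 hI0
      rw [hstart w.1 hw.1] at h1
      simp only [hG₁, hG₂]
      constructor
      · intro h2
        rw [h2, hstart w.1 hw.1, sub_self]
      · intro h2
        rw [h2] at h1
        simp only [sub_self, sub_zero, abs_zero, mul_zero, zero_add, zero_sub, abs_neg] at h1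
        have := abs_nonneg w.2
        exact abs_eq_zero.1 (by linarith)
  have posR : ∀ w ∈ W, 0 < R (G₁ w) := fun w hw => (hUp _ (hmem w.1 hw.1 w.2 hw.2)).1
  have posS : ∀ w ∈ W, 0 < S (G₁ w) := fun w hw => (hUp _ (hmem w.1 hw.1 w.2 hw.2)).2.1
  have contS : ∀ w ∈ W, ContinuousAt S (G₁ w) :=
    fun w hw => (hUp _ (hmem w.1 hw.1 w.2 hw.2)).2.2
  refine ⟨g₁.target, g₂.target, fun z => G₂ (g₁.symm z), fun z => G₁ (g₂.symm z),
    g₁.open_target, g₂.open_target, ?_, ?_, ?_, ?_, ?_, ?_, ?_, ?_, ?_, ?_, ?_, ?_⟩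
  · have := t₁ _ h00
    rwa [show ((0:ℝ),(0:ℝ)) = 0 from rfl, G₁0] at this
  · have := t₂ _ h00
    rwa [show ((0:ℝ),(0:ℝ)) = 0 from rfl, G₂0] at this
  · exact A₂.continuousOn.comp g₁.continuousOn_symm m₁
  · exact A₁.continuousOn.comp g₂.continuousOn_symm m₂
  · exact fun z hz => t₂ _ (m₁ z hz)
  · exact fun z hz => t₁ _ (m₂ z hz)
  · intro z hz
    simp only [l₂ _ (m₁ z hz), r₁ z hz]
  · intro z hz
    simp only [l₁ _ (m₂ z hz), r₂ z hz]
  · have := l₁ _ h00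
    rw [show ((0:ℝ),(0:ℝ)) = 0 from rfl, G₁0] at this
    simp only [this, G₂0]
  · ext z
    constructor
    · rintro ⟨y, ⟨hy, hyt⟩, rfl⟩
      refine ⟨?_, t₂ _ (m₁ y hyt)⟩
      have := zp _ (m₁ y hyt)
      rw [r₁ y hyt] at this
      exact this.1 hy
    · rintro ⟨hz, hzt⟩
      refine ⟨G₁ (g₂.symm z), ⟨?_, t₁ _ (m₂ z hzt)⟩, ?_⟩
      · have := zp _ (m₂ z hzt)
        rw [r₂ z hzt] at this
        exact this.2 hz
      · simp only [l₁ _ (m₂ z hzt), r₂ z hzt]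
  · -- forward
    rintro J c ⟨hJ, hJn, hcV, hc⟩
    have hc1 : ∀ t ∈ J, HasDerivWithinAt (fun t => (c t).1) (R (c t)) J t :=
      fun t ht => (hasDerivWithinAt_fst_comp (hc t ht))
    have hc2 : ∀ t ∈ J, HasDerivWithinAt (fun t => (c t).2) (S (c t)) J t :=
      fun t ht => (hasDerivWithinAt_snd_comp (hc t ht))
    set w : ℝ → ℝ × ℝ := fun t => g₁.symm (c t) with hw
    have hwW : ∀ t ∈ J, w t ∈ W := fun t ht => m₁ _ (hcV t ht).1
    have hwc : ∀ t ∈ J, G₁ (w t) = c t := fun t ht => r₁ _ (hcV t ht).1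
    have hw2 : ∀ t ∈ J, (w t).2 = (c t).2 := fun t ht => by rw [← hwc t ht]
    have hw1 : ∀ t ∈ J, h (w t).1 (c t).2 = (c t).1 := fun t ht => by
      rw [← hw2 t ht]
      exact congrArg Prod.fst (hwc t ht)
    -- the first component of w is constant
    have hconst : ∀ t₀ ∈ J, HasDerivWithinAt (fun t => (w t).1) 0 J t₀ := by
      intro t₀ ht₀
      have hα := (hwW t₀ ht₀).1
      have hη := (hwW t₀ ht₀).2
      have hd := hder _ hα _ hη
      have hd' : HasDerivAt (h (w t₀).1) (R (c t₀) / S (c t₀)) (c t₀).2 := by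
        rw [← hw2 t₀ ht₀]
        have h5 : (h (w t₀).1 (w t₀).2, (w t₀).2) = c t₀ := hwc t₀ ht₀
        rw [h5] at hd
        exact hd
      have hSp : S (c t₀) ≠ 0 := by
        rw [← hwc t₀ ht₀]; exact (posS _ (hwW t₀ ht₀)).ne'
      have hk : HasDerivWithinAt (fun t => (c t).1 - h (w t₀).1 (c t).2) 0 J t₀ := by
        have := (hc1 t₀ ht₀).sub (hd'.comp_hasDerivWithinAt t₀ (hc2 t₀ ht₀))
        rw [div_mul_cancel₀ _ hSp, sub_self] at this
        exact this
      rw [hasDerivWithinAt_iff_isLittleO] at hk ⊢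
      refine Asymptotics.IsBigO.trans_isLittleO ?_ hk
      apply Asymptotics.IsBigO.of_bound 2
      filter_upwards [self_mem_nhdsWithin] with t ht
      have h1 := hest (w t).1 (hwW t ht).1 (w t₀).1 hα (w t).2 (hwW t ht).2 (w t).2 (hwW t ht).2
      rw [hw2 t ht, hw1 t ht] at h1
      simp only [smul_zero, sub_zero, Real.norm_eq_abs, hw1 t₀ ht₀, sub_self, abs_zero, mul_zero,
        add_zero] at h1 ⊢
      have h2 := abs_sub_abs_le_abs_sub ((w t).1 - (w t₀).1) ((c t).1 - h (w t₀).1 (c t).2)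
      rw [abs_sub_comm] at h1
      have h3 := abs_nonneg ((c t).1 - h (w t₀).1 (c t).2)
      linarith
    obtain ⟨t₀, ht₀⟩ := hJn.nonempty
    set α₀ := (w t₀).1 with hα₀
    have hwα : ∀ t ∈ J, (w t).1 = α₀ := fun t ht =>
      const_of_hasDerivWithinAt_zero hJ hconst ht₀ ht
    have hΦ : ∀ t ∈ J, G₂ (w t) = ((c t).1, (c t).1 - α₀) := fun t ht => by
      have h1 := hw1 t ht
      rw [hwα t ht] at h1
      simp only [hG₂, hw2 t ht, hwα t ht, h1]
    have hmono : StrictMonoOn (fun t => (c t).1) J :=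
      strictMonoOn_of_hasDerivWithinAt_pos' hJ hc1 fun t ht => by
        rw [← hwc t ht]; exact posR _ (hwW t ht)
    have hcont : ContinuousOn (fun t => (c t).1) J := fun t ht => (hc1 t ht).continuousWithinAt
    refine ⟨(fun t => (c t).1) '' J, fun s => (s, s - α₀), fun t => (c t).1,
      ⟨?_, hJn.image_of_injOn hmono.injOn, ?_, ?_⟩, hcont, hmono, rfl, hΦ⟩
    · exact (hJ.isPreconnected.image _ hcont).ordConnected
    · rintro _ ⟨t, ht, rfl⟩
      dsimp only
      rw [← hΦ t ht]
      refine ⟨t₂ _ (hwW t ht), ?_⟩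
      intro h0
      apply (hcV t ht).2
      rw [← hwc t ht]
      exact (zp _ (hwW t ht)).2 h0
    · intro s hs
      exact ((hasDerivAt_id s).prodMk ((hasDerivAt_id s).sub_const α₀)).hasDerivWithinAt
  · -- backward
    rintro J d ⟨hJ, hJn, hdV, hd⟩
    have hd1 : ∀ t ∈ J, HasDerivWithinAt (fun t => (d t).1) 1 J t :=
      fun t ht => (hasDerivWithinAt_fst_comp (hd t ht))
    have hd2 : ∀ t ∈ J, HasDerivWithinAt (fun t => (d t).2) 1 J t :=
      fun t ht => (hasDerivWithinAt_snd_comp (hd t ht))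
    set w : ℝ → ℝ × ℝ := fun t => g₂.symm (d t) with hw
    have hwW : ∀ t ∈ J, w t ∈ W := fun t ht => m₂ _ (hdV t ht).1
    have hwd : ∀ t ∈ J, G₂ (w t) = d t := fun t ht => r₂ _ (hdV t ht).1
    have hwα' : ∀ t ∈ J, (w t).1 = (d t).1 - (d t).2 := fun t ht => by
      rw [← hwd t ht]; simp [hG₂]
    obtain ⟨t₀, ht₀⟩ := hJn.nonempty
    set α₀ := (w t₀).1 with hα₀
    have hαI : α₀ ∈ I := (hwW t₀ ht₀).1
    have hwα : ∀ t ∈ J, (w t).1 = α₀ := fun t ht => by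
      rw [hα₀, hwα' t ht, hwα' t₀ ht₀]
      refine const_of_hasDerivWithinAt_zero (f := fun t => (d t).1 - (d t).2) hJ ?_ ht₀ ht
      intro t ht
      have h1 := (hd1 t ht).sub (hd2 t ht)
      rw [sub_self] at h1
      exact h1
    have hwcont : ContinuousOn w J :=
      g₂.continuousOn_symm.comp (fun t ht => (hd t ht).continuousWithinAt) (fun t ht => (hdV t ht).1)
    have hηcont : ContinuousOn (fun t => (w t).2) J := continuous_snd.comp_continuousOn hwcont
    have hηI : ∀ t ∈ J, (w t).2 ∈ I := fun t ht => (hwW t ht).2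
    have hwh : ∀ t ∈ J, h α₀ (w t).2 = (d t).1 := fun t ht => by
      rw [← hwα t ht]; exact congrArg Prod.fst (hwd t ht)
    have hpair : ∀ η ∈ I, (α₀, η) ∈ W := fun η hη => ⟨hαI, hη⟩
    have hIo : I.OrdConnected := ordConnected_Ioo
    have hhmono : StrictMonoOn (h α₀) I :=
      strictMonoOn_of_hasDerivWithinAt_pos' hIo
        (fun η hη => (hder α₀ hαI η hη).hasDerivWithinAt)
        fun η hη => div_pos (posR _ (hpair η hη)) (posS _ (hpair η hη))
    have hφmono : StrictMonoOn (fun t => (d t).1) J :=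
      strictMonoOn_of_hasDerivWithinAt_pos' hJ hd1 fun _ _ => one_pos
    have hηmono : StrictMonoOn (fun t => (w t).2) J := by
      intro t ht t' ht' htt
      have := hφmono ht ht' htt
      simp only [← hwh t ht, ← hwh t' ht'] at this
      exact (hhmono.lt_iff_lt (hηI t ht) (hηI t' ht')).1 this
    -- time along the orbit
    set q : ℝ → ℝ := fun η => (S (h α₀ η, η))⁻¹ with hq
    have hqc : ∀ η ∈ I, ContinuousAt q η := by
      intro η hη
      have h1 : ContinuousAt (fun η => (h α₀ η, η)) η :=
        (hder α₀ hαI η hη).continuousAt.prodMk continuousAt_id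
      have h2 : ContinuousAt S (h α₀ η, η) := contS _ (hpair η hη)
      exact (ContinuousAt.comp (f := fun η => (h α₀ η, η)) h2 h1).inv₀ (posS _ (hpair η hη)).ne'
    have hqcI : ContinuousOn q I := fun η hη => (hqc η hη).continuousWithinAt
    set T : ℝ → ℝ := fun η => ∫ x in (0:ℝ)..η, q x with hT
    have hTd : ∀ η ∈ I, HasStrictDerivAt T (q η) η := by
      intro η hη
      refine intervalIntegral.integral_hasStrictDerivAt_right ?_ ?_ (hqc η hη)
      · exact (hqcI.mono (hIo.uIcc_subset hI0 hη)).intervalIntegrable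
      · exact hqcI.stronglyMeasurableAtFilter isOpen_Ioo η hη
    have hqpos : ∀ η ∈ I, 0 < q η := fun η hη => inv_pos.2 (posS _ (hpair η hη))
    have hTmono : StrictMonoOn T I :=
      strictMonoOn_of_hasDerivWithinAt_pos' hIo
        (fun η hη => (hTd η hη).hasDerivAt.hasDerivWithinAt) hqpos
    set Ti : ℝ → ℝ := Function.invFunOn T I with hTi
    have hTiT : ∀ η ∈ I, Ti (T η) = η := fun η hη => hTmono.injOn.leftInvOn_invFunOn hη
    have hTid : ∀ η ∈ I, HasDerivAt Ti (S (h α₀ η, η)) (T η) := by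
      intro η hη
      have := (hTd η hη).to_local_left_inverse (hqpos η hη).ne' (g := Ti)
        (by filter_upwards [isOpen_Ioo.mem_nhds hη] with x hx using hTiT x hx)
      simpa [hq] using this.hasDerivAt
    have hTcont : ContinuousOn T I := fun η hη =>
      (hTd η hη).hasDerivAt.continuousAt.continuousWithinAt
    have hτcont : ContinuousOn (fun t => T (w t).2) J := hTcont.comp hηcont hηI
    have hτmono : StrictMonoOn (fun t => T (w t).2) J := hTmono.comp hηmono hηI
    have hG : ∀ t ∈ J, G₁ (w t) = (h α₀ (w t).2, (w t).2) := fun t ht => by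
      simp only [hG₁, hwα t ht]
    refine ⟨(fun t => T (w t).2) '' J, fun s => (h α₀ (Ti s), Ti s), fun t => T (w t).2,
      ⟨?_, hJn.image_of_injOn hτmono.injOn, ?_, ?_⟩, hτcont, hτmono, rfl, ?_⟩
    · exact (hJ.isPreconnected.image _ hτcont).ordConnected
    · rintro _ ⟨t, ht, rfl⟩
      dsimp only
      rw [hTiT _ (hηI t ht), ← hG t ht]
      refine ⟨t₁ _ (hwW t ht), ?_⟩
      intro h0
      apply (hdV t ht).2
      rw [← hwd t ht]
      exact (zp _ (hwW t ht)).1 h0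
    · rintro _ ⟨t, ht, rfl⟩
      dsimp only
      have hη := hηI t ht
      have h1 := hTid _ hη
      have h2 := hder α₀ hαI _ hη
      have hne : S (h α₀ (w t).2, (w t).2) ≠ 0 := (posS _ (hpair _ hη)).ne'
      have h3 : HasDerivAt (fun s => h α₀ (Ti s)) (R (h α₀ (w t).2, (w t).2)) (T (w t).2) := by
        have h4 : HasDerivAt (h α₀) (R (h α₀ (w t).2, (w t).2) / S (h α₀ (w t).2, (w t).2))
            (Ti (T (w t).2)) := by rw [hTiT _ hη]; exact h2
        have := h4.comp (T (w t).2) h1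
        rw [div_mul_cancel₀ _ hne] at this
        exact this
      rw [hTiT _ hη]
      exact (h3.prodMk h1).hasDerivWithinAt
    · intro t ht
      dsimp only
      rw [hTiT _ (hηI t ht)]
      exact hG t ht

lemma transfer_equiv (L : (ℝ × ℝ) ≃L[ℝ] (ℝ × ℝ)) (X Y X' Y' : ℝ × ℝ → ℝ × ℝ) (δ D : ℝ × ℝ → ℝ)
    (hX : ∀ z, X' (L z) = L (X z)) (hY : ∀ z, Y' (L z) = L (Y z))
    (hD : ∀ z, D (L z) = 0 ↔ δ z = 0)
    (H : OrbitallyEquivAt X' D 0 Y' D 0) : OrbitallyEquivAt X δ 0 Y δ 0 := by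
  have push : ∀ (X X' : ℝ × ℝ → ℝ × ℝ) (V : Set (ℝ × ℝ)), (∀ z, X' (L z) = L (X z)) →
      ∀ J c, IsPhaseCurve X ((L ⁻¹' V) \ {z | δ z = 0}) J c →
        IsPhaseCurve X' (V \ {z | D z = 0}) J (fun t => L (c t)) := by
    rintro X X' V hX J c ⟨h1, h2, h3, h4⟩
    refine ⟨h1, h2, fun t ht => ⟨(h3 t ht).1, fun h => (h3 t ht).2 ((hD _).1 h)⟩, fun t ht => ?_⟩
    rw [hX]
    exact L.hasFDerivAt.comp_hasDerivWithinAt t (h4 t ht)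
  have pull : ∀ (X X' : ℝ × ℝ → ℝ × ℝ) (V : Set (ℝ × ℝ)), (∀ z, X' (L z) = L (X z)) →
      ∀ J c, IsPhaseCurve X' (V \ {z | D z = 0}) J c →
        IsPhaseCurve X ((L ⁻¹' V) \ {z | δ z = 0}) J (fun t => L.symm (c t)) := by
    rintro X X' V hX J c ⟨h1, h2, h3, h4⟩
    refine ⟨h1, h2, fun t ht => ⟨?_, fun h => (h3 t ht).2 ?_⟩, fun t ht => ?_⟩
    · simpa using (h3 t ht).1
    · have := (hD (L.symm (c t))).2 h
      simpa using this
    · have e : X (L.symm (c t)) = L.symm (X' (c t)) := by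
        have := hX (L.symm (c t))
        rw [L.apply_symm_apply] at this
        rw [this, L.symm_apply_apply]
      rw [e]
      exact L.symm.hasFDerivAt.comp_hasDerivWithinAt t (h4 t ht)
  obtain ⟨V₁, V₂, Φ, Ψ, o1, o2, p1, p2, c1, c2, m1, m2, i1, i2, z, im, fw, bw⟩ := H
  refine ⟨L ⁻¹' V₁, L ⁻¹' V₂, fun x => L.symm (Φ (L x)), fun x => L.symm (Ψ (L x)),
    o1.preimage L.continuous, o2.preimage L.continuous, by simpa using p1, by simpa using p2,
    L.symm.continuous.comp_continuousOn (c1.comp L.continuous.continuousOn fun x hx => hx),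
    L.symm.continuous.comp_continuousOn (c2.comp L.continuous.continuousOn fun x hx => hx),
    fun x hx => ?_, fun x hx => ?_, fun x hx => ?_, fun x hx => ?_, ?_, ?_, ?_, ?_⟩
  · simpa using m1 hx
  · simpa using m2 hx
  · simp [i1 (L x) hx]
  · simp [i2 (L x) hx]
  · simp [z]
  · have im1 : ∀ y, y ∈ V₁ → D y = 0 → D (Φ y) = 0 := fun y hy h0 =>
      (im.subset ⟨y, ⟨h0, hy⟩, rfl⟩).1
    ext x
    constructor
    · rintro ⟨y, ⟨hy, hyV⟩, rfl⟩
      refine ⟨?_, by simpa using m1 hyV⟩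
      have := im1 (L y) hyV ((hD y).2 hy)
      refine (hD _).1 ?_
      simpa using this
    · rintro ⟨hx, hxV⟩
      obtain ⟨y, ⟨hy, hyV⟩, hyx⟩ := im.symm.subset ⟨(hD x).2 hx, hxV⟩
      refine ⟨L.symm y, ⟨(hD _).1 (by simpa using hy), by simpa using hyV⟩, ?_⟩
      simp [hyx]
  · intro J c hc
    obtain ⟨J', d, τ, hd, hτ, hτm, hτi, he⟩ := fw J _ (push X X' V₁ hX J c hc)
    exact ⟨J', _, τ, pull Y Y' V₂ hY J' d hd, hτ, hτm, hτi, fun t ht => by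
      simp only [he t ht]⟩
  · intro J c hc
    obtain ⟨J', d, τ, hd, hτ, hτm, hτi, he⟩ := bw J _ (push Y Y' V₂ hY J c hc)
    exact ⟨J', _, τ, pull X X' V₁ hX J' d hd, hτ, hτm, hτi, fun t ht => by
      simp only [he t ht]⟩

/-- The linear coordinates `((x + y) / p, (x - y) / q)`. -/
noncomputable def diagE (p q : ℝ) (hp : p ≠ 0) (hq : q ≠ 0) : (ℝ × ℝ) ≃L[ℝ] (ℝ × ℝ) :=
  ContinuousLinearEquiv.equivOfInverse
    ((p⁻¹ • (ContinuousLinearMap.fst ℝ ℝ ℝ + ContinuousLinearMap.snd ℝ ℝ ℝ)).prod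
      (q⁻¹ • (ContinuousLinearMap.fst ℝ ℝ ℝ - ContinuousLinearMap.snd ℝ ℝ ℝ)))
    (((1/2 : ℝ) • (p • ContinuousLinearMap.fst ℝ ℝ ℝ + q • ContinuousLinearMap.snd ℝ ℝ ℝ)).prod
      ((1/2 : ℝ) • (p • ContinuousLinearMap.fst ℝ ℝ ℝ - q • ContinuousLinearMap.snd ℝ ℝ ℝ)))
    (by intro z; ext <;> simp <;> field_simp <;> ring)
    (by intro z; ext <;> simp <;> field_simp <;> ring)

lemma diagE_apply (p q : ℝ) (hp : p ≠ 0) (hq : q ≠ 0) (z : ℝ × ℝ) :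
    diagE p q hp hq z = (p⁻¹ * (z.1 + z.2), q⁻¹ * (z.1 - z.2)) := rfl

/-- (`A₁`-type impasse curve, Case 2 of Table 2.)
If `δ(x,y) = x² + ε·y²` and `X = (P,Q)` is real-analytic near the origin with
`0 ≠ P(0,0) ≠ ±Q(0,0)`, then `(X, δ)` is orientation-preserving `C⁰`-orbitally equivalent at
the origin to the system with constant adjoint vector field `(P(0,0), Q(0,0))`. -/
theorem A1_case2 (ε : ℝ) (hε : ε = 1 ∨ ε = -1)
    (P Q : ℝ × ℝ → ℝ)
    (hP : AnalyticAt ℝ P (0, 0)) (hQ : AnalyticAt ℝ Q (0, 0))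
    (hP0 : P (0, 0) ≠ 0)
    (hPQ : P (0, 0) ≠ Q (0, 0)) (hPQ' : P (0, 0) ≠ -Q (0, 0)) :
    OrbitallyEquivAt (fun z => (P z, Q z)) (fun z => z.1 ^ 2 + ε * z.2 ^ 2) (0, 0)
      (fun _ => (P (0, 0), Q (0, 0))) (fun z => z.1 ^ 2 + ε * z.2 ^ 2) (0, 0) := by
  set p := P (0, 0) + Q (0, 0) with hp'
  set q := P (0, 0) - Q (0, 0) with hq'
  have hp : p ≠ 0 := fun h => hPQ' (by linarith)
  have hq : q ≠ 0 := sub_ne_zero.2 hPQ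
  set L := diagE p q hp hq with hL
  have hLz : ∀ z, L z = (p⁻¹ * (z.1 + z.2), q⁻¹ * (z.1 - z.2)) := diagE_apply p q hp hq
  have hPc : ContDiffAt ℝ 1 P (L.symm 0) := by
    rw [map_zero]; exact hP.contDiffAt
  have hQc : ContDiffAt ℝ 1 Q (L.symm 0) := by
    rw [map_zero]; exact hQ.contDiffAt
  have hPL : ContDiffAt ℝ 1 (fun z => P (L.symm z)) 0 :=
    hPc.comp (0 : ℝ × ℝ) L.symm.contDiff.contDiffAt
  have hQL : ContDiffAt ℝ 1 (fun z => Q (L.symm z)) 0 :=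
    hQc.comp (0 : ℝ × ℝ) L.symm.contDiff.contDiffAt
  have hzero : ∀ z : ℝ × ℝ, z.1 + z.2 = 0 ∧ z.1 - z.2 = 0 → z.1 = 0 ∧ z.2 = 0 :=
    fun z hz => ⟨by linarith [hz.1, hz.2], by linarith [hz.1, hz.2]⟩
  have H : ∀ D : ℝ × ℝ → ℝ,
      (∀ z w : ℝ × ℝ, (z.1 = 0 ↔ w.1 = 0) → (z.2 = 0 ↔ w.2 = 0) → (D z = 0 ↔ D w = 0)) →
      (∀ z, D (L z) = 0 ↔ z.1 ^ 2 + ε * z.2 ^ 2 = 0) →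
      OrbitallyEquivAt (fun z => (P z, Q z)) (fun z => z.1 ^ 2 + ε * z.2 ^ 2) (0, 0)
        (fun _ => (P (0, 0), Q (0, 0))) (fun z => z.1 ^ 2 + ε * z.2 ^ 2) (0, 0) := by
    intro D hD hD'
    refine transfer_equiv L _ _ _ _ _ D ?_ ?_ hD' (core_equiv
      (fun z => p⁻¹ * (P (L.symm z) + Q (L.symm z))) (fun z => q⁻¹ * (P (L.symm z) - Q (L.symm z)))
      (contDiffAt_const.mul (hPL.add hQL)) (contDiffAt_const.mul (hPL.sub hQL)) ?_ ?_ D hD)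
    · intro z
      rw [L.symm_apply_apply, hLz]
    · intro z
      rw [hLz]
      simp only [← hp', ← hq', inv_mul_cancel₀ hp, inv_mul_cancel₀ hq]
    · rw [map_zero]
      exact inv_mul_cancel₀ hp
    · rw [map_zero]
      exact inv_mul_cancel₀ hq
  rcases hε with rfl | rfl
  · refine H (fun z => z.1 ^ 2 + z.2 ^ 2) ?_ ?_
    · intro z w h1 h2
      have aux : ∀ z : ℝ × ℝ, z.1 ^ 2 + z.2 ^ 2 = 0 ↔ z.1 = 0 ∧ z.2 = 0 := by
        intro z
        constructor
        · intro h
          constructor <;> nlinarith [sq_nonneg z.1, sq_nonneg z.2]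
        · rintro ⟨h1, h2⟩
          simp [h1, h2]
      simp only [aux, h1, h2]
    · intro z
      have aux : ∀ x y : ℝ, x ^ 2 + y ^ 2 = 0 ↔ x = 0 ∧ y = 0 := by
        intro x y
        constructor
        · intro h
          constructor <;> nlinarith [sq_nonneg x, sq_nonneg y]
        · rintro ⟨h1, h2⟩
          simp [h1, h2]
      simp only [hLz, one_mul, aux, mul_eq_zero, inv_eq_zero, hp, hq, false_or]
      constructor
      · exact hzero z
      · rintro ⟨h1, h2⟩
        simp [h1, h2]
  · refine H (fun z => z.1 * z.2) ?_ ?_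
    · intro z w h1 h2
      simp only [mul_eq_zero, h1, h2]
    · intro z
      have : z.1 ^ 2 + -1 * z.2 ^ 2 = (z.1 + z.2) * (z.1 - z.2) := by ring
      simp only [this, hLz, mul_eq_zero, inv_eq_zero, hp, hq, false_or]
end

section
/- Let k ≥ 1 be an integer, ε ∈ {1, −1}, and δ(x, y) = x² + ε·y^{k+1} (an A_k-type singular impasse curve). Let X = (P, Q) be real-analytic on a neighborhood of the origin in ℝ² with P(0,0) = 0, Q(0,0) ≠ 0, and such that (∂ⁿP/∂yⁿ)(0,0) = 0 for every integer n with 1 ≤ 2n ≤ k − 1 (equivalently, the order of vanishing n₀ of y ↦ P(0, y) at 0 satisfies k − 1 < 2n₀). Then the constrained system (X, δ) is orientation-preserving C⁰-orbitally equivalent at (0, 0) to the constrained system (Y, δ), where Y is the constant vector field Y ≡ (0, Q(0,0)). -/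
open Set Filter Topology

lemma ak_prim (κ : ℝ → ℝ) (hκ : Continuous κ) (m : ℝ) (hm : 0 < m) (hb : ∀ y, m ≤ κ y) :
    ∃ H : ℝ ≃o ℝ, ∀ y, HasDerivAt H (κ y) y := by
  set f : ℝ → ℝ := fun y => ∫ s in (0:ℝ)..y, κ s with hf
  have hd : ∀ y, HasDerivAt f (κ y) y := fun y =>
    intervalIntegral.integral_hasDerivAt_right (hκ.intervalIntegrable _ _)
      (hκ.stronglyMeasurableAtFilter _ _) hκ.continuousAt
  have hmono : StrictMono f := strictMono_of_deriv_pos (fun y => by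
    rw [(hd y).deriv]; exact lt_of_lt_of_le hm (hb y))
  have hcont : Continuous f := continuous_iff_continuousAt.2 fun y => (hd y).continuousAt
  have hf0 : f 0 = 0 := by simp [hf]
  have hgm : Monotone (fun y => f y - m * y) := by
    have hd' : ∀ y, HasDerivAt (fun y => f y - m * y) (κ y - m) y := fun y => by
      simpa using (hd y).fun_sub ((hasDerivAt_id y).const_mul m)
    refine monotone_of_deriv_nonneg (fun y => (hd' y).differentiableAt) (fun y => ?_)
    rw [(hd' y).deriv]; linarith [hb y]
  have hsurj : Function.Surjective f := by
    refine hcont.surjective ?_ ?_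
    · refine tendsto_atTop_mono' _ ?_ (tendsto_id.const_mul_atTop hm)
      filter_upwards [eventually_ge_atTop 0] with y hy
      have := hgm hy
      simp only [hf0] at this
      simp only [id]; linarith
    · refine tendsto_atBot_mono' _ ?_ (tendsto_id.const_mul_atBot hm)
      filter_upwards [eventually_le_atBot 0] with y hy
      have := hgm hy
      simp only [hf0] at this
      simp only [id]; linarith
  exact ⟨StrictMono.orderIsoOfSurjective f hmono hsurj, fun y => hd y⟩

/-- Sign pattern of a function with positive derivative at zeros. -/
lemma ak_sign {h : ℝ} (hh : 0 < h) (E E' : ℝ → ℝ)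
    (hd : ∀ y ∈ Icc 0 h, HasDerivWithinAt E (E' y) (Icc 0 h) y)
    (hz : ∀ y, 0 < y → y ≤ h → E y = 0 → 0 < E' y)
    (h0 : E 0 < 0 ∨ (E 0 = 0 ∧ ∀ y, 0 < y → y ≤ h → 0 < E y)) (hh' : 0 < E h) :
    ∃ b, 0 ≤ b ∧ b < h ∧ E b = 0 ∧ (∀ y, 0 ≤ y → y < b → E y < 0) ∧
      (∀ y, b < y → y ≤ h → 0 < E y) := by
  have hc : ContinuousOn E (Icc 0 h) := fun y hy => (hd y hy).continuousWithinAt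
  rcases h0 with h0 | ⟨h0, h1⟩
  · have key : ∀ y₁, 0 < y₁ → 0 ≤ E y₁ → ∀ y, y₁ < y → y ≤ h → 0 < E y := by
      intro y₁ hy₁ hE
      have hnn : ∀ y, y₁ ≤ y → y ≤ h → 0 ≤ E y := by
        intro y hy hyh
        have hsub : Icc y₁ h ⊆ Icc 0 h := Icc_subset_Icc_left hy₁.le
        refine image_le_of_deriv_right_lt_deriv_boundary' (f := fun _ => (0:ℝ)) (f' := fun _ => 0)
          (a := y₁) (b := h) continuousOn_const (fun x _ => hasDerivWithinAt_const _ _ _)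
          (B := E) (B' := E') hE (hc.mono hsub) ?_ ?_ ⟨hy, hyh⟩
        · intro x hx
          refine (hd x (hsub (Ico_subset_Icc_self hx))).mono_of_mem_nhdsWithin ?_
          exact mem_of_superset (Icc_mem_nhdsGE hx.2) (Icc_subset_Icc_left (hy₁.le.trans hx.1))
        · intro x hx hx0
          exact hz x (hy₁.trans_le hx.1) hx.2.le hx0.symm
      intro y hy hyh
      refine lt_of_le_of_ne (hnn y hy.le hyh) fun h00 => ?_
      have hpos := hz y (hy₁.trans hy) hyh h00.symm
      have hdy : HasDerivWithinAt E (E' y) (Ioo y₁ y) y :=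
        (hd y ⟨(hy₁.trans hy).le, hyh⟩).mono
          (fun x hx => ⟨(hy₁.trans hx.1).le, hx.2.le.trans hyh⟩)
      rw [hasDerivWithinAt_iff_tendsto_slope' (by simp)] at hdy
      have hev := hdy.eventually (lt_mem_nhds hpos)
      have : (𝓝[Ioo y₁ y] y).NeBot := by
        rw [nhdsWithin_Ioo_eq_nhdsLT hy]; infer_instance
      obtain ⟨x, hx, hxm⟩ := (hev.and self_mem_nhdsWithin).exists
      rw [slope_def_field, ← h00, sub_zero] at hx
      have := hnn x hxm.1.le (hxm.2.le.trans hyh)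
      have h2 : x - y < 0 := by linarith [hxm.2]
      have := div_nonpos_of_nonneg_of_nonpos this h2.le
      linarith
    obtain ⟨b, hb, hEb⟩ := intermediate_value_Icc hh.le hc ⟨h0.le, hh'.le⟩
    have hb0 : 0 < b := lt_of_le_of_ne hb.1 (by rintro rfl; linarith)
    have hbh : b < h := lt_of_le_of_ne hb.2 (by rintro rfl; linarith)
    refine ⟨b, hb.1, hbh, hEb, fun y hy hyb => ?_, key b hb0 hEb.ge⟩
    by_contra! hcon
    rcases hy.eq_or_lt with rfl | hy
    · linarith
    · have := key y hy hcon b hyb hb.2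
      linarith
  · exact ⟨0, le_rfl, hh, h0, fun y hy hy' => absurd hy (not_le.2 hy'), h1⟩

/-- The one-sided stretching map. -/
noncomputable def akT (b β y : ℝ) : ℝ := max 0 (min y b) * (β / b) + (y - max 0 (min y b))

lemma akT_of_nonpos {b β y : ℝ} (hy : y ≤ 0) : akT b β y = y := by
  unfold akT
  have : max 0 (min y b) = 0 := max_eq_left ((min_le_left _ _).trans hy)
  rw [this]; ring

lemma akT_zero (β y : ℝ) : akT 0 β y = y - max 0 (min y 0) := by
  simp [akT]

lemma akT_zero' (y : ℝ) : akT 0 0 y = y := by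
  have : max 0 (min y 0) = 0 := max_eq_left (min_le_right _ _)
  simp [akT]

lemma akT_mid {b β y : ℝ} (hy : 0 ≤ y) (hyb : y ≤ b) : akT b β y = y * (β / b) := by
  unfold akT
  rw [min_eq_left hyb, max_eq_right hy]; ring

lemma akT_ge {b β y : ℝ} (hb : 0 < b) (hyb : b ≤ y) : akT b β y = y - b + β := by
  unfold akT
  rw [min_eq_right hyb, max_eq_right hb.le]; field_simp; ring

lemma akT_inv {b β : ℝ} (hb : 0 ≤ b) (hβ : 0 ≤ β) (h : b = 0 ↔ β = 0) (y : ℝ) :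
    akT β b (akT b β y) = y := by
  rcases hb.eq_or_lt with hb | hb
  · have := h.1 hb.symm
    rw [← hb, this, akT_zero', akT_zero']
  · have hβ : 0 < β := lt_of_le_of_ne hβ (fun h' => hb.ne' (h.2 h'.symm))
    rcases le_total y 0 with hy | hy
    · rw [akT_of_nonpos hy, akT_of_nonpos hy]
    · rcases le_total y b with hyb | hyb
      · rw [akT_mid hy hyb, akT_mid (by positivity)]
        · field_simp
        · rw [← mul_div_assoc, div_le_iff₀ hb]; nlinarith
      · rw [akT_ge hb hyb, akT_ge hβ (by linarith)]; ring

lemma akT_strictMono {b β : ℝ} (hb : 0 ≤ b) (hβ : 0 ≤ β) (h : b = 0 ↔ β = 0) :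
    StrictMono (akT b β) := by
  refine Monotone.strictMono_of_injective ?_ (Function.LeftInverse.injective (akT_inv hb hβ h))
  intro x y hxy
  have h1 : max 0 (min x b) ≤ max 0 (min y b) := max_le_max le_rfl (min_le_min_right _ hxy)
  have h2 : y - max 0 (min y b) ≥ x - max 0 (min x b) := by
    rcases le_total x b with h | h <;> rcases le_total y b with h' | h' <;>
    rcases le_total x 0 with h3 | h3 <;> rcases le_total y 0 with h4 | h4 <;>
    simp [h,h',h3,h4,hb] <;> linarith
  unfold akT
  have : 0 ≤ β / b := by positivity
  nlinarith

lemma akT_self {b β : ℝ} (hb : 0 ≤ b) (h : b = 0 ↔ β = 0) : akT b β b = β := by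
  rcases hb.eq_or_lt with hb | hb
  · have := h.1 hb.symm
    rw [← hb, this, akT_zero']
  · rw [akT_ge hb le_rfl]; ring

lemma akT_continuousAt {X : Type*} [TopologicalSpace X] {s : Set X} {x₀ : X}
    {b β y : X → ℝ} (hb : ContinuousWithinAt b s x₀) (hβ : ContinuousWithinAt β s x₀)
    (hy : ContinuousWithinAt y s x₀)
    (hb0 : ∀ x ∈ s, 0 ≤ b x) (hβ0 : ∀ x ∈ s, 0 ≤ β x) (h : b x₀ = 0 → β x₀ = 0) :
    ContinuousWithinAt (fun x => akT (b x) (β x) (y x)) s x₀ := by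
  have hcl : ContinuousWithinAt (fun x => max 0 (min (y x) (b x))) s x₀ :=
    continuousWithinAt_const.max (hy.min hb)
  by_cases hz : b x₀ = 0
  · unfold akT
    refine ContinuousWithinAt.add ?_ (hy.sub hcl)
    have hβz := h hz
    unfold ContinuousWithinAt
    simp only [hz, div_zero, mul_zero]
    refine tendsto_of_tendsto_of_tendsto_of_le_of_le' tendsto_const_nhds
      (show Tendsto β (𝓝[s] x₀) (𝓝 0) by simpa [ContinuousWithinAt, hβz] using hβ) ?_ ?_
    · filter_upwards [self_mem_nhdsWithin] with x hx
      have := hb0 x hx; have := hβ0 x hx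
      positivity
    · filter_upwards [self_mem_nhdsWithin] with x hx
      have h1 := hb0 x hx; have h2 := hβ0 x hx
      have h3 : max 0 (min (y x) (b x)) ≤ b x := max_le h1 (min_le_right _ _)
      rcases h1.eq_or_lt with h1 | h1
      · rw [← h1]; simpa using h2
      · calc _ ≤ b x * (β x / b x) := by gcongr
          _ = β x := by field_simp
  · unfold akT
    exact (hcl.mul (hβ.div hb hz)).add (hy.sub hcl)
/-- flow of a bounded globally Lipschitz scalar time-dependent equation -/
lemma ak_flow (R : ℝ → ℝ → ℝ) (K L : ℝ) (hK : 0 ≤ K) (hL : 0 ≤ L)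
    (hlip : ∀ y x₁ x₂, |R y x₁ - R y x₂| ≤ K * |x₁ - x₂|)
    (hcont : ∀ x, Continuous fun y => R y x) (hbd : ∀ y x, |R y x| ≤ L) :
    ∃ F : ℝ → ℝ → ℝ, (∀ u ∈ Icc (-1:ℝ) 1, F u 0 = u) ∧
      (∀ u ∈ Icc (-1:ℝ) 1, ∀ y ∈ Icc (-1:ℝ) 1,
        HasDerivWithinAt (F u) (R y (F u y)) (Icc (-1) 1) y) ∧
      ContinuousOn (Function.uncurry F) (Icc (-1) 1 ×ˢ Icc (-1) 1) ∧
      (∀ u ∈ Icc (-1:ℝ) 1, ∀ y ∈ Icc (-1:ℝ) 1, |F u y - u| ≤ L * |y|) ∧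
      (∀ u₁ ∈ Icc (-1:ℝ) 1, ∀ u₂ ∈ Icc (-1:ℝ) 1, u₁ < u₂ → ∀ y ∈ Icc (-1:ℝ) 1,
        F u₁ y < F u₂ y) := by
  have hlip' : ∀ y, LipschitzWith K.toNNReal (R y) := fun y =>
    LipschitzWith.of_dist_le_mul fun a b => by
      rw [Real.dist_eq, Real.dist_eq, Real.coe_toNNReal _ hK]; exact hlip y a b
  have hPL : IsPicardLindelof R (tmin := -1) (tmax := 1) ⟨0, by norm_num⟩ (0:ℝ)
      (L.toNNReal + 1) 1 L.toNNReal K.toNNReal :=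
    { lipschitzOnWith := fun t _ => (hlip' t).lipschitzOnWith
      continuousOn := fun x _ => (hcont x).continuousOn
      norm_le := fun t _ x _ => by
        rw [Real.norm_eq_abs, Real.coe_toNNReal _ hL]; exact hbd t x
      mul_max_le := by simp }
  obtain ⟨α, hα, hαc⟩ := hPL.exists_forall_mem_closedBall_eq_hasDerivWithinAt_continuousOn
  have hball : Metric.closedBall (0:ℝ) ((1:NNReal):ℝ) = Icc (-1) 1 := by
    rw [Real.closedBall_eq_Icc]; norm_num
  rw [hball] at hα hαc
  have hd : ∀ u ∈ Icc (-1:ℝ) 1, ∀ y ∈ Icc (-1:ℝ) 1,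
        HasDerivWithinAt (fun y => α (u, y)) (R y (α (u,y))) (Icc (-1) 1) y :=
    fun u hu => (hα u hu).2
  have h0 : ∀ u ∈ Icc (-1:ℝ) 1, α (u, 0) = u := fun u hu => (hα u hu).1
  have hc : ∀ u ∈ Icc (-1:ℝ) 1, ContinuousOn (fun y => α (u, y)) (Icc (-1) 1) :=
    fun u hu y hy => (hd u hu y hy).continuousWithinAt
  have hinj : ∀ u₁ ∈ Icc (-1:ℝ) 1, ∀ u₂ ∈ Icc (-1:ℝ) 1, ∀ y ∈ Icc (-1:ℝ) 1,
      α (u₁, y) = α (u₂, y) → u₁ = u₂ := by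
    intro u₁ h₁ u₂ h₂ y hy he
    rcases le_total 0 y with h | h
    · have hs : Icc 0 y ⊆ Icc (-1:ℝ) 1 := Icc_subset_Icc (by norm_num) hy.2
      have hd' : ∀ u ∈ Icc (-1:ℝ) 1, ∀ t ∈ Ioc 0 y,
          HasDerivWithinAt (fun y => α (u, y)) (R t (α (u,t))) (Iic t) t := fun u hu t ht => by
        refine (hd u hu t (hs (Ioc_subset_Icc_self ht))).mono_of_mem_nhdsWithin ?_
        exact mem_of_superset (Icc_mem_nhdsLE ht.1)
          (Icc_subset_Icc (by norm_num) (ht.2.trans hy.2))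
      have := ODE_solution_unique_of_mem_Icc_left (v := R) (s := fun _ => univ) (a := 0) (b := y)
        (fun t _ => (hlip' t).lipschitzOnWith) ((hc u₁ h₁).mono hs) (hd' u₁ h₁)
        (fun _ _ => trivial) ((hc u₂ h₂).mono hs) (hd' u₂ h₂) (fun _ _ => trivial) he
        (left_mem_Icc.2 h)
      simpa [h0 u₁ h₁, h0 u₂ h₂] using this
    · have hs : Icc y 0 ⊆ Icc (-1:ℝ) 1 := Icc_subset_Icc hy.1 (by norm_num)
      have hd' : ∀ u ∈ Icc (-1:ℝ) 1, ∀ t ∈ Ico y 0,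
          HasDerivWithinAt (fun y => α (u, y)) (R t (α (u,t))) (Ici t) t := fun u hu t ht => by
        refine (hd u hu t (hs (Ico_subset_Icc_self ht))).mono_of_mem_nhdsWithin ?_
        exact mem_of_superset (Icc_mem_nhdsGE ht.2)
          (Icc_subset_Icc (hy.1.trans ht.1) (by norm_num))
      have := ODE_solution_unique_of_mem_Icc_right (v := R) (s := fun _ => univ) (a := y) (b := 0)
        (fun t _ => (hlip' t).lipschitzOnWith) ((hc u₁ h₁).mono hs) (hd' u₁ h₁)
        (fun _ _ => trivial) ((hc u₂ h₂).mono hs) (hd' u₂ h₂) (fun _ _ => trivial) he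
        (right_mem_Icc.2 h)
      simpa [h0 u₁ h₁, h0 u₂ h₂] using this
  refine ⟨fun u y => α (u, y), h0, hd, hαc, ?_, ?_⟩
  · intro u hu y hy
    have := (convex_Icc (-1:ℝ) 1).norm_image_sub_le_of_norm_hasDerivWithin_le (hd u hu)
      (fun x hx => by rw [Real.norm_eq_abs]; exact hbd _ _) (x := 0) (y := y) (by norm_num) hy
    simpa [h0 u hu] using this
  · intro u₁ h₁ u₂ h₂ hlt y hy
    by_contra! hcon
    have hcs : ContinuousOn (fun t => α (u₂, t) - α (u₁, t)) (uIcc 0 y) :=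
      ((hc u₂ h₂).sub (hc u₁ h₁)).mono
        ((convex_Icc (-1:ℝ) 1).ordConnected.uIcc_subset (by norm_num) hy)
    have hiv := intermediate_value_uIcc hcs
    have h0m : (0:ℝ) ∈ uIcc (α (u₂, 0) - α (u₁, 0)) (α (u₂, y) - α (u₁, y)) := by
      rw [h0 u₁ h₁, h0 u₂ h₂, mem_uIcc]; right; constructor <;> linarith
    obtain ⟨t, ht, hte⟩ := hiv h0m
    have ht' := (convex_Icc (-1:ℝ) 1).ordConnected.uIcc_subset (by norm_num) hy ht
    have := hinj u₁ h₁ u₂ h₂ t ht' (by simp only at hte; linarith)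
    linarith

/-- The leaf coordinate. -/
lemma ak_chart (F : ℝ → ℝ → ℝ) (h : ℝ)
    (hc : ContinuousOn (Function.uncurry F) (Icc (-1) 1 ×ˢ Icc (-h) h))
    (hm : ∀ u₁ ∈ Icc (-1:ℝ) 1, ∀ u₂ ∈ Icc (-1:ℝ) 1, u₁ < u₂ → ∀ y ∈ Icc (-h) h,
        F u₁ y < F u₂ y) :
    ∃ (G : ℝ × ℝ → ℝ) (U : Set (ℝ × ℝ)), IsOpen U ∧ ContinuousOn G U ∧
      (∀ z ∈ U, |z.2| < h ∧ |G z| < 1 ∧ F (G z) z.2 = z.1) ∧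
      (∀ u y, |u| < 1 → |y| < h → (F u y, y) ∈ U ∧ G (F u y, y) = u) := by
  have hcy : ∀ u ∈ Icc (-1:ℝ) 1, ContinuousOn (F u) (Icc (-h) h) := fun u hu =>
    hc.comp (f := fun y => (u, y)) (by fun_prop) (fun y hy => ⟨hu, hy⟩)
  have hcu : ∀ y ∈ Icc (-h) h, ContinuousOn (fun u => F u y) (Icc (-1) 1) := fun y hy =>
    hc.comp (f := fun u => (u, y)) (by fun_prop) (fun u hu => ⟨hu, hy⟩)
  set U : Set (ℝ × ℝ) := {z | |z.2| < h ∧ F (-1) z.2 < z.1 ∧ z.1 < F 1 z.2} with hU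
  have hex : ∀ z : ℝ × ℝ, ∃ u, z ∈ U → |u| < 1 ∧ F u z.2 = z.1 := by
    intro z
    by_cases hz : z ∈ U
    · have hy : z.2 ∈ Icc (-h) h := abs_le.1 hz.1.le
      obtain ⟨u, hu, he⟩ := intermediate_value_Icc (by norm_num) (hcu _ hy)
        ⟨hz.2.1.le, hz.2.2.le⟩
      refine ⟨u, fun _ => ⟨?_, he⟩⟩
      rw [abs_lt]
      constructor
      · refine lt_of_le_of_ne hu.1 ?_
        rintro rfl; simp only at he; linarith [hz.2.1]
      · refine lt_of_le_of_ne hu.2 ?_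
        rintro rfl; simp only at he; linarith [hz.2.2]
    · exact ⟨0, fun h => absurd h hz⟩
  choose G hG using hex
  have hlt : ∀ u ∈ Icc (-1:ℝ) 1, ∀ v ∈ Icc (-1:ℝ) 1, ∀ y ∈ Icc (-h) h,
      F u y < F v y → u < v := by
    intro u hu v hv y hy hlt
    by_contra! hcon
    rcases hcon.eq_or_lt with rfl | hcon
    · exact lt_irrefl _ hlt
    · exact lt_asymm hlt (hm v hv u hu hcon y hy)
  have hnear : ∀ u ∈ Icc (-1:ℝ) 1, ∀ z : ℝ × ℝ, |z.2| < h → ContinuousAt (fun w : ℝ × ℝ => F u w.2) z :=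
    fun u hu z hz => by
      have : ContinuousAt (F u) z.2 := (hcy u hu).continuousAt
        (Icc_mem_nhds (abs_lt.1 hz).1 (abs_lt.1 hz).2)
      exact ContinuousAt.comp (f := fun w : ℝ × ℝ => w.2) this continuousAt_snd
  have hm1 : (-1:ℝ) ∈ Icc (-1:ℝ) 1 := by norm_num
  have hp1 : (1:ℝ) ∈ Icc (-1:ℝ) 1 := by norm_num
  have hUo : IsOpen U := by
    rw [isOpen_iff_mem_nhds]
    intro z hz
    have h1 : ∀ᶠ w : ℝ × ℝ in 𝓝 z, |w.2| < h :=
      (continuous_abs.comp continuous_snd).continuousAt.eventually_lt continuousAt_const hz.1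
    have h2 := (hnear _ hm1 z hz.1).eventually_lt continuousAt_fst hz.2.1
    have h3 := continuousAt_fst.eventually_lt (hnear _ hp1 z hz.1) hz.2.2
    filter_upwards [h1, h2, h3] with w a b c using ⟨a, b, c⟩
  refine ⟨G, U, hUo, ?_, fun z hz => ⟨hz.1, hG z hz⟩, ?_⟩
  · intro z hz
    refine ContinuousAt.continuousWithinAt ?_
    have hGz := hG z hz
    have hab := abs_lt.1 hGz.1
    have hy : z.2 ∈ Icc (-h) h := abs_le.1 hz.1.le
    have hzI : G z ∈ Icc (-1:ℝ) 1 := ⟨hab.1.le, hab.2.le⟩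
    have hUn := hUo.mem_nhds hz
    refine tendsto_order.2 ⟨fun a ha => ?_, fun a ha => ?_⟩
    · obtain ⟨a', ha1, ha2⟩ := exists_between (max_lt ha hab.1)
      have ha'I : a' ∈ Icc (-1:ℝ) 1 := ⟨(le_max_right _ _).trans ha1.le, ha2.le.trans hab.2.le⟩
      have h1 := (hnear _ ha'I z hz.1).eventually_lt continuousAt_fst
        (by rw [← hGz.2]; exact hm _ ha'I _ hzI ha2 _ hy)
      filter_upwards [h1, hUn] with w hw hwU
      have hGw := hG w hwU
      rw [← hGw.2] at hw
      have hwI := abs_le.1 hGw.1.le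
      exact ((le_max_left _ _).trans_lt ha1).trans
        (hlt _ ha'I _ ⟨hwI.1, hwI.2⟩ _ (abs_le.1 hwU.1.le) hw)
    · obtain ⟨a', ha1, ha2⟩ := exists_between (lt_min ha hab.2)
      have ha'I : a' ∈ Icc (-1:ℝ) 1 := ⟨hab.1.le.trans ha1.le, ha2.le.trans (min_le_right _ _)⟩
      have h1 := continuousAt_fst.eventually_lt (hnear _ ha'I z hz.1)
        (by rw [← hGz.2]; exact hm _ hzI _ ha'I ha1 _ hy)
      filter_upwards [h1, hUn] with w hw hwU
      have hGw := hG w hwU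
      rw [← hGw.2] at hw
      have hwI := abs_le.1 hGw.1.le
      exact (hlt _ ⟨hwI.1, hwI.2⟩ _ ha'I _ (abs_le.1 hwU.1.le) hw).trans
        (ha2.trans_le (min_le_left _ _))
  · intro u y hu hy
    have hyI : y ∈ Icc (-h) h := abs_le.1 hy.le
    have hu' := abs_lt.1 hu
    have huI : u ∈ Icc (-1:ℝ) 1 := ⟨hu'.1.le, hu'.2.le⟩
    have hmem : (F u y, y) ∈ U := ⟨hy, hm _ hm1 _ huI hu'.1 _ hyI, hm _ huI _ hp1 hu'.2 _ hyI⟩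
    refine ⟨hmem, ?_⟩
    have hg := hG _ hmem
    have hgI := abs_le.1 hg.1.le
    simp only at hg
    rcases lt_trichotomy (G (F u y, y)) u with h1 | h1 | h1
    · have := hm _ ⟨hgI.1, hgI.2⟩ _ huI h1 _ hyI
      linarith [hg.2]
    · exact h1
    · have := hm _ huI _ ⟨hgI.1, hgI.2⟩ h1 _ hyI
      linarith [hg.2]

lemma ak_roots (k N : ℕ) (hk : 1 ≤ k) (hN : k ≤ 2 * N) (S D : ℝ → ℝ → ℝ) (K : ℝ) (hK : 0 ≤ K)
    (S0 : ∀ u ∈ Icc (-1:ℝ) 1, S u 0 = u)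
    (hd : ∀ u ∈ Icc (-1:ℝ) 1, ∀ y ∈ Icc (0:ℝ) 1,
      HasDerivWithinAt (S u) (D u y) (Icc 0 1) y)
    (hD : ∀ u ∈ Icc (-1:ℝ) 1, ∀ y ∈ Icc (0:ℝ) 1, |D u y| ≤ K * (|S u y| + y ^ N))
    (hc : ∀ y ∈ Icc (0:ℝ) 1, ContinuousOn (fun u => S u y) (Icc (-1) 1)) :
    ∃ h₀ > 0, ∀ h, 0 < h → h ≤ h₀ → ∃ r, 0 < r ∧ r ≤ 1 ∧ ∃ b : ℝ → ℝ,
      ContinuousOn b (Ioo (-r) r) ∧ ∀ u, |u| < r → 0 ≤ b u ∧ b u < h ∧ (b u = 0 ↔ u = 0) ∧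
        ∀ y, 0 ≤ y → y < h → (S u y ^ 2 = y ^ (k + 1) ↔ y = b u) := by
  have hden : 0 < 4 * K ^ 2 + 2 * K + 4 := by positivity
  refine ⟨1 / (4 * K ^ 2 + 2 * K + 4), by positivity, fun h hh hle => ?_⟩
  rw [le_div_iff₀ hden] at hle
  have hKK : 0 ≤ h * K ^ 2 := by positivity
  have hK1 : 0 ≤ h * K := by positivity
  have h1 : h ≤ 1 := by nlinarith
  have h2 : K * h ≤ 1 / 2 := by nlinarith
  have h3 : 4 * K ^ 2 * h < 1 := by nlinarith
  have hI0 : (0:ℝ) ∈ Icc (-1:ℝ) 1 := by norm_num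
  -- estimate of the central leaf
  have hphi : ∀ y, 0 < y → y ≤ h → S 0 y ^ 2 < y ^ (k + 1) := by
    intro y hy hyh
    have hs : Icc 0 y ⊆ Icc (0:ℝ) 1 := Icc_subset_Icc_right (hyh.trans h1)
    have hcs : ContinuousOn (fun t => |S 0 t|) (Icc 0 y) :=
      (ContinuousOn.mono (fun t ht => (hd 0 hI0 t ht).continuousWithinAt) hs).abs
    obtain ⟨t, ht, hmax⟩ := isCompact_Icc.exists_isMaxOn (nonempty_Icc.2 hy.le) hcs
    have hmax' : ∀ s ∈ Icc 0 y, |S 0 s| ≤ |S 0 t| := fun s hs => hmax hs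
    have hmv := (convex_Icc (0:ℝ) y).norm_image_sub_le_of_norm_hasDerivWithin_le
      (f := S 0) (f' := D 0) (C := K * (|S 0 t| + y ^ N))
      (fun s hs' => (hd 0 hI0 s (hs hs')).mono hs) (fun s hs' => by
        rw [Real.norm_eq_abs]
        refine (hD 0 hI0 s (hs hs')).trans ?_
        have := hmax' s hs'
        have := pow_le_pow_left₀ hs'.1 hs'.2 N
        gcongr) (left_mem_Icc.2 hy.le) ht
    rw [S0 0 hI0, sub_zero, sub_zero, Real.norm_eq_abs, Real.norm_eq_abs, abs_of_nonneg ht.1] at hmv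
    have hM : |S 0 t| ≤ 2 * K * y ^ (N + 1) := by
      have hyN : 0 ≤ y ^ N := by positivity
      have e1 : K * (|S 0 t| + y ^ N) * t ≤ K * (|S 0 t| + y ^ N) * y := by
        have := ht.2; gcongr
      have e2 : K * y ≤ 1 / 2 := by nlinarith
      have e3 : K * y * |S 0 t| ≤ 1 / 2 * |S 0 t| := by gcongr
      have : K * (|S 0 t| + y ^ N) * y = K * y * |S 0 t| + K * y ^ (N+1) := by ring
      nlinarith
    have hy1 := (hmax' y (right_mem_Icc.2 hy.le)).trans hM
    have hsq : S 0 y ^ 2 ≤ (2 * K * y ^ (N + 1)) ^ 2 := by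
      rw [← sq_abs]; gcongr
    have hp : y ^ (2 * N + 1) ≤ y ^ (k + 1) :=
      pow_le_pow_of_le_one hy.le (hyh.trans h1) (by omega)
    have hpos : 0 < y ^ (k + 1) := by positivity
    calc S 0 y ^ 2 ≤ (2 * K * y ^ (N + 1)) ^ 2 := hsq
      _ = 4 * K ^ 2 * y * y ^ (2 * N + 1) := by ring
      _ ≤ 4 * K ^ 2 * h * y ^ (k + 1) := by gcongr
      _ < y ^ (k + 1) := by nlinarith
  -- choice of r
  have hhI : h ∈ Icc (0:ℝ) 1 := ⟨hh.le, h1⟩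
  have hcat : ContinuousAt (fun u => S u h ^ 2) 0 :=
    ((hc h hhI).continuousAt (Icc_mem_nhds (by norm_num) (by norm_num))).pow 2
  have hev := hcat.eventually_lt (g := fun _ => h ^ (k + 1)) continuousAt_const (hphi h hh le_rfl)
  obtain ⟨r₀, hr₀, hr₀'⟩ := Metric.eventually_nhds_iff.1 hev
  have hrr : 0 < min r₀ 1 := by positivity
  refine ⟨min r₀ 1, hrr, min_le_right _ _, ?_⟩
  have hex : ∀ u, ∃ b, |u| < min r₀ 1 → 0 ≤ b ∧ b < h ∧ b ^ (k+1) - S u b ^ 2 = 0 ∧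
      (∀ y, 0 ≤ y → y < b → y ^ (k+1) - S u y ^ 2 < 0) ∧
      (∀ y, b < y → y ≤ h → 0 < y ^ (k+1) - S u y ^ 2) := by
    intro u
    by_cases hu : |u| < min r₀ 1
    swap
    · exact ⟨0, fun h => absurd h hu⟩
    have hu1 := (abs_lt.1 (hu.trans_le (min_le_right _ _)))
    have huI : u ∈ Icc (-1:ℝ) 1 := ⟨hu1.1.le, hu1.2.le⟩
    have hs : Icc 0 h ⊆ Icc (0:ℝ) 1 := Icc_subset_Icc_right h1
    obtain ⟨b, hb⟩ := ak_sign hh (fun y => y ^ (k+1) - S u y ^ 2)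
      (fun y => ((k:ℝ) + 1) * y ^ k - 2 * S u y * D u y) (fun y hy => by
        have e1 : HasDerivWithinAt (fun y : ℝ => y ^ (k+1)) (((k:ℝ) + 1) * y ^ k) (Icc 0 h) y := by
          simpa using (hasDerivAt_pow (k+1) y).hasDerivWithinAt
        have e2 := ((hd u huI y (hs hy)).mono hs).fun_pow 2
        have := e1.fun_sub e2
        simpa [mul_assoc] using this) (by
        intro y hy hyh hz
        have hyI : y ∈ Icc (0:ℝ) 1 := ⟨hy.le, hyh.trans h1⟩
        have hSq : S u y ^ 2 = y ^ (k+1) := by linarith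
        have hDb := hD u huI y hyI
        have hyk : 0 < y ^ k := by positivity
        have a1 : |S u y * D u y| ≤ K * y * y ^ k + K * (|S u y| * y ^ N) := by
          rw [abs_mul]
          calc |S u y| * |D u y| ≤ |S u y| * (K * (|S u y| + y ^ N)) := by gcongr
            _ = K * (|S u y| ^ 2) + K * (|S u y| * y ^ N) := by ring
            _ = _ := by rw [sq_abs, hSq]; ring
        have a2 : 2 * K * (|S u y| * y ^ N) < y ^ k := by
          refine lt_of_pow_lt_pow_left₀ 2 hyk.le ?_
          have hp : y ^ (2 * N) ≤ y ^ k := pow_le_pow_of_le_one hy.le hyI.2 hN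
          calc (2 * K * (|S u y| * y ^ N)) ^ 2 = 4 * K ^ 2 * (|S u y| ^ 2) * y ^ (2 * N) := by ring
            _ = 4 * K ^ 2 * y * y ^ k * y ^ (2 * N) := by rw [sq_abs, hSq]; ring
            _ ≤ 4 * K ^ 2 * h * y ^ k * y ^ k := by gcongr
            _ < (y ^ k) ^ 2 := by
              have : 0 < y ^ k * y ^ k := by positivity
              nlinarith
        have a3 : K * y ≤ 1 / 2 := by nlinarith
        have a4 := le_abs_self (S u y * D u y)
        have a5 : (1:ℝ) ≤ k := by exact_mod_cast hk
        nlinarith) (by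
        rcases eq_or_ne u 0 with rfl | hne
        · right
          refine ⟨by simp [S0 0 hI0], fun y hy hyh => by linarith [hphi y hy hyh]⟩
        · left
          have : 0 < u ^ 2 := by positivity
          simp only [S0 u huI, ne_eq, Nat.add_eq_zero_iff, one_ne_zero, and_false,
            not_false_eq_true, zero_pow]
          linarith) (by
        have := hr₀' (y := u) (by rw [Real.dist_eq, sub_zero]; exact hu.trans_le (min_le_left _ _))
        linarith)
    exact ⟨b, fun _ => hb⟩
  choose b hb using hex
  refine ⟨b, ?_, ?_⟩
  · intro u₀ hu₀
    refine ContinuousAt.continuousWithinAt ?_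
    have hnb : ∀ᶠ u in 𝓝 u₀, |u| < min r₀ 1 := by
      filter_upwards [Ioo_mem_nhds hu₀.1 hu₀.2] with u hu using abs_lt.2 hu
    have hcE : ∀ y ∈ Icc (0:ℝ) 1, ContinuousAt (fun u => y ^ (k+1) - S u y ^ 2) u₀ := by
      intro y hy
      have hlt := min_le_right r₀ 1
      have := (hc y hy).continuousAt (x := u₀) (Icc_mem_nhds (by linarith [hu₀.1]) (by linarith [hu₀.2]))
      fun_prop
    obtain ⟨c1, c2, c3, c4, c5⟩ := hb u₀ (abs_lt.2 hu₀)
    refine tendsto_order.2 ⟨fun a ha => ?_, fun a ha => ?_⟩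
    · rcases lt_or_ge a 0 with hneg | hnn
      · filter_upwards [hnb] with u hu using hneg.trans_le (hb u hu).1
      · obtain ⟨a', h1', h2'⟩ := exists_between ha
        have hev := (hcE a' ⟨by linarith, by linarith⟩).eventually_lt continuousAt_const
          (c4 a' (by linarith) h2')
        filter_upwards [hev, hnb] with u hu hub
        by_contra! hcon
        have := (hb u hub).2.2.2.2 a' (by linarith) (by linarith)
        linarith
    · obtain ⟨a', h1', h2'⟩ := exists_between (lt_min ha c2)
      have e1 := min_le_left a h
      have e2 := min_le_right a h
      have hev := continuousAt_const.eventually_lt (hcE a' ⟨by linarith, by linarith⟩)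
        (c5 a' h1' (by linarith))
      filter_upwards [hev, hnb] with u hu hub
      by_contra! hcon
      have := (hb u hub).2.2.2.1 a' (by linarith) (by linarith)
      linarith
  · intro u hu
    have hu1 := (abs_lt.1 (hu.trans_le (min_le_right _ _)))
    have huI : u ∈ Icc (-1:ℝ) 1 := ⟨hu1.1.le, hu1.2.le⟩
    obtain ⟨c1, c2, c3, c4, c5⟩ := hb u hu
    refine ⟨c1, c2, ⟨fun h0 => ?_, fun h0 => ?_⟩, fun y hy hyh => ⟨fun he => ?_, fun he => ?_⟩⟩
    · rw [h0, S0 u huI] at c3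
      simpa using c3
    · by_contra hne
      have := c4 0 le_rfl (lt_of_le_of_ne c1 (Ne.symm hne))
      rw [S0 u huI, h0] at this
      simp at this
    · rcases lt_trichotomy y (b u) with h | h | h
      · linarith [c4 y hy h]
      · exact h
      · linarith [c5 y h hyh.le]
    · rw [he]; linarith

lemma ak_abs_clamp {ρ : ℝ} (hρ : 0 ≤ ρ) (x : ℝ) :
    |max (-ρ) (min x ρ)| ≤ |x| ∧ |max (-ρ) (min x ρ)| ≤ ρ := by
  constructor
  · rcases le_total x ρ with h | h <;> rcases le_total (-ρ) x with h' | h'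
    · simp [h, h']
    · rw [min_eq_left h, max_eq_left h', abs_neg, abs_of_nonneg hρ, abs_of_nonpos (by linarith)]
      linarith
    · rw [min_eq_right h, max_eq_right (by linarith), abs_of_nonneg hρ, abs_of_nonneg (by linarith)]
      exact h
    · rw [min_eq_right h, max_eq_right (by linarith), abs_of_nonneg hρ, abs_of_nonneg (by linarith)]
      exact h
  · rw [abs_le]
    exact ⟨le_max_left _ _, max_le (by linarith) (min_le_right _ _)⟩

lemma ak_setup (k : ℕ) (hk : 1 ≤ k) (P Q : ℝ × ℝ → ℝ)
    (hP : AnalyticAt ℝ P (0, 0)) (hQ : AnalyticAt ℝ Q (0, 0))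
    (hP0 : P (0, 0) = 0) (hQ0 : Q (0, 0) ≠ 0)
    (hflat : ∀ n : ℕ, 1 ≤ n → 2 * n ≤ k - 1 → iteratedDeriv n (fun y => P (0, y)) 0 = 0)
    (σ : ℝ) (hσ : σ * Q (0, 0) > 0) (hσ1 : σ = 1 ∨ σ = -1) :
    ∃ (ρ K L M : ℝ) (R : ℝ → ℝ → ℝ), 0 < ρ ∧ 0 ≤ K ∧ 0 ≤ L ∧ 0 < M ∧
      (∀ y x₁ x₂, |R y x₁ - R y x₂| ≤ K * |x₁ - x₂|) ∧
      (∀ x, Continuous fun y => R y x) ∧ (∀ y x, |R y x| ≤ L) ∧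
      (∀ y x, |R y x| ≤ K * (|x| + |y| ^ ((k + 1) / 2))) ∧
      (∀ x y, |x| ≤ ρ → |y| ≤ ρ → P (x, y) = R y x * Q (x, y) ∧ 0 < σ * Q (x, y) ∧
        |Q (x, y)| ≤ M ∧ ContinuousAt Q (x, y)) := by
  set N := (k + 1) / 2 with hN
  have hR : AnalyticAt ℝ (fun z => P z / Q z) (0, 0) := hP.fun_div hQ hQ0
  obtain ⟨K₁, t, ht, hLip⟩ := (hR.contDiffAt (n := 1)).exists_lipschitzOnWith
  have hp : AnalyticAt ℝ (fun y : ℝ => P (0, y)) 0 :=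
    hP.comp_of_eq (f := fun y : ℝ => ((0:ℝ), y)) (by fun_prop) rfl
  have hord : (N : ℕ∞) ≤ analyticOrderAt (fun y : ℝ => P (0, y)) 0 := by
    rw [natCast_le_analyticOrderAt_iff_iteratedDeriv_eq_zero hp]
    intro i hi
    rcases Nat.eq_zero_or_pos i with rfl | hi0
    · simpa using hP0
    · exact hflat i hi0 (by omega)
  obtain ⟨g, hg, hgp⟩ := (natCast_le_analyticOrderAt hp).1 hord
  -- everything eventually near zero
  have hσQ : ContinuousAt (fun z => σ * Q z) (0, 0) := hQ.continuousAt.const_mul σ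
  have e1 : ∀ᶠ z in 𝓝 ((0:ℝ), (0:ℝ)), σ * Q (0,0) / 2 < σ * Q z :=
    continuousAt_const.eventually_lt hσQ (by linarith)
  have e2 : ∀ᶠ z in 𝓝 ((0:ℝ), (0:ℝ)), |Q z| < |Q (0,0)| + 1 :=
    hQ.continuousAt.abs.eventually_lt continuousAt_const (by linarith)
  have e3 : ∀ᶠ z in 𝓝 ((0:ℝ), (0:ℝ)), AnalyticAt ℝ Q z := hQ.eventually_analyticAt
  have e4 : ∀ᶠ z in 𝓝 ((0:ℝ), (0:ℝ)), |g z.2| < |g 0| + 1 := by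
    have : ContinuousAt (fun z : ℝ × ℝ => |g z.2|) (0, 0) :=
      (ContinuousAt.comp (f := fun z : ℝ × ℝ => z.2) (x := ((0:ℝ),(0:ℝ)))
        hg.continuousAt continuousAt_snd).abs
    exact this.eventually_lt continuousAt_const (by simp)
  have e5 : ∀ᶠ z in 𝓝 ((0:ℝ), (0:ℝ)), P (0, z.2) = z.2 ^ N * g z.2 := by
    have : Tendsto (fun z : ℝ × ℝ => z.2) (𝓝 (0, 0)) (𝓝 0) := continuousAt_snd
    filter_upwards [this.eventually hgp] with z hz
    simpa using hz
  obtain ⟨ρ, hρ, hball⟩ := Metric.nhds_basis_closedBall.eventually_iff.1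
    ((eventually_mem_set.2 ht).and (e1.and (e2.and (e3.and (e4.and e5)))))
  have hbox : ∀ x y, |x| ≤ ρ → |y| ≤ ρ → (x, y) ∈ Metric.closedBall ((0:ℝ), (0:ℝ)) ρ := by
    intro x y hx hy
    rw [mem_closedBall_iff_norm]
    simp only [Prod.mk_sub_mk, sub_zero, Prod.norm_mk, Real.norm_eq_abs]
    exact max_le hx hy
  set cl : ℝ → ℝ := fun x => max (-ρ) (min x ρ) with hcl
  have hclc : Continuous cl := by fun_prop
  have hcl1 : ∀ x, |cl x| ≤ |x| := fun x => (ak_abs_clamp hρ.le x).1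
  have hcl2 : ∀ x, |cl x| ≤ ρ := fun x => (ak_abs_clamp hρ.le x).2
  have hclid : ∀ x, |x| ≤ ρ → cl x = x := fun x hx => by
    have := abs_le.1 hx
    simp [hcl, this.1, this.2]
  have hcllip : ∀ x₁ x₂, |cl x₁ - cl x₂| ≤ |x₁ - x₂| := by
    intro x₁ x₂
    have h1 : |cl x₁ - cl x₂| ≤ |min x₁ ρ - min x₂ ρ| := by
      have := abs_max_sub_max_le_abs (min x₁ ρ) (min x₂ ρ) (-ρ)
      simpa [hcl, max_comm] using this
    exact h1.trans (by simpa using abs_min_sub_min_le_max x₁ ρ x₂ ρ)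
  have hzero : ∀ x y, |x| ≤ ρ → |y| ≤ ρ → |P (x, y) / Q (x, y)| ≤
      K₁ * |x| + (|g 0| + 1) / (|Q (0,0)| / 2) * |y| ^ N := by
    intro x y hx hy
    have b1 := hball (hbox x y hx hy)
    have b0 := hball (hbox 0 y (by simpa using hρ.le) hy)
    have hl := hLip.dist_le_mul (x, y) b1.1 (0, y) b0.1
    rw [Real.dist_eq, Prod.dist_eq] at hl
    simp only [dist_self, Real.dist_eq, sub_zero] at hl
    rw [max_eq_left (abs_nonneg _)] at hl
    have hq : |Q (0,0)| / 2 ≤ |Q (0, y)| := by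
      have h1 := b0.2.1
      have h2 : |σ * Q (0,0)| = |Q (0,0)| := by
        rcases hσ1 with rfl | rfl <;> simp
      have h3 : |σ * Q (0,y)| = |Q (0,y)| := by
        rcases hσ1 with rfl | rfl <;> simp
      rw [abs_of_pos hσ] at h2
      have := le_abs_self (σ * Q (0, y))
      linarith
    have hQp : 0 < |Q (0,0)| / 2 := by positivity
    have hz : |P (0, y) / Q (0, y)| ≤ (|g 0| + 1) / (|Q (0,0)| / 2) * |y| ^ N := by
      have := b0.2.2.2.2.2
      simp only at this
      rw [this, abs_div, abs_mul, abs_pow, div_mul_eq_mul_div, mul_comm]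
      have := b0.2.2.2.2.1.le
      simp only at this
      gcongr
    have := abs_sub_abs_le_abs_sub (P (x, y) / Q (x, y)) (P (0, y) / Q (0, y))
    linarith
  set C := (|g 0| + 1) / (|Q (0,0)| / 2) with hC
  have hC0 : 0 ≤ C := by positivity
  refine ⟨ρ, K₁ + C, K₁ * ρ + C * ρ ^ N, |Q (0,0)| + 1,
    fun y x => P (cl x, cl y) / Q (cl x, cl y), hρ, by positivity, by positivity, by positivity,
    ?_, ?_, ?_, ?_, ?_⟩
  · intro y x₁ x₂
    have hl := hLip.dist_le_mul (cl x₁, cl y) (hball (hbox _ _ (hcl2 _) (hcl2 _))).1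
      (cl x₂, cl y) (hball (hbox _ _ (hcl2 _) (hcl2 _))).1
    rw [Real.dist_eq, Prod.dist_eq] at hl
    simp only [dist_self, Real.dist_eq] at hl
    rw [max_eq_left (abs_nonneg _)] at hl
    calc _ ≤ K₁ * |cl x₁ - cl x₂| := hl
      _ ≤ (K₁ + C) * |x₁ - x₂| := by
        have := hcllip x₁ x₂
        gcongr
        linarith
  · intro x
    exact hLip.continuousOn.comp_continuous (f := fun y => (cl x, cl y)) (by fun_prop)
      (fun y => (hball (hbox _ _ (hcl2 _) (hcl2 _))).1)
  · intro y x
    refine (hzero _ _ (hcl2 x) (hcl2 y)).trans ?_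
    have := hcl2 x
    have := hcl2 y
    gcongr
  · intro y x
    refine (hzero _ _ (hcl2 x) (hcl2 y)).trans ?_
    have h1 := hcl1 x
    have h2 : |cl y| ^ N ≤ |y| ^ N := by
      have := hcl1 y
      gcongr
    have h3 : 0 ≤ (K₁:ℝ) := K₁.2
    have h4 : 0 ≤ |y| ^ N := by positivity
    have h5 := abs_nonneg x
    nlinarith [mul_le_mul_of_nonneg_left h1 h3, mul_le_mul_of_nonneg_left h2 hC0,
      mul_nonneg hC0 h5, mul_nonneg h3 h4]
  · intro x y hx hy
    have b1 := hball (hbox x y hx hy)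
    have hpos : 0 < σ * Q (x, y) := by linarith [b1.2.1]
    refine ⟨?_, hpos, b1.2.2.1.le, b1.2.2.2.1.continuousAt⟩
    have hne : Q (x, y) ≠ 0 := fun h0 => by rw [h0] at hpos; simp at hpos
    simp only [hclid x hx, hclid y hy]
    field_simp

/-- Leaf coordinates for the vector field `(P, Q)` on a neighbourhood `U` of the origin. -/
structure AkLeaf (P Q : ℝ × ℝ → ℝ) (k : ℕ) (σ h : ℝ) (F : ℝ → ℝ → ℝ) (G : ℝ × ℝ → ℝ)
    (U : Set (ℝ × ℝ)) (bp bm : ℝ → ℝ) : Prop where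
  hpos : 0 < h
  openU : IsOpen U
  Gcont : ContinuousOn G U
  Fcont : ContinuousOn (Function.uncurry F) (Ioo (-1) 1 ×ˢ Ioo (-h) h)
  memU : ∀ z ∈ U, |z.2| < h ∧ |G z| < 1 ∧ F (G z) z.2 = z.1
  box : ∀ u y, |u| < 1 → |y| < h → (F u y, y) ∈ U ∧ G (F u y, y) = u
  F0 : ∀ u, F u 0 = 0 → |u| < 1 → u = 0
  F00 : F 0 0 = 0
  curve1 : ∀ (J : Set ℝ) (c : ℝ → ℝ × ℝ), IsPhaseCurve (fun z => (P z, Q z)) U J c →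
    (∀ a ∈ J, ∀ b ∈ J, G (c a) = G (c b)) ∧ StrictMonoOn (fun t => σ * (c t).2) J
  curve2 : ∀ (J : Set ℝ) (u : ℝ) (y : ℝ → ℝ) (S : Set (ℝ × ℝ)), |u| < 1 → J.OrdConnected →
    J.Nontrivial → ContinuousOn y J → StrictMonoOn (fun t => σ * y t) J →
    (∀ t ∈ J, |y t| < h) → (∀ t ∈ J, (F u (y t), y t) ∈ S) →
    ∃ (J' : Set ℝ) (c : ℝ → ℝ × ℝ) (τ : ℝ → ℝ), IsPhaseCurve (fun z => (P z, Q z)) S J' c ∧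
      ContinuousOn τ J ∧ StrictMonoOn τ J ∧ τ '' J = J' ∧ ∀ t ∈ J, (F u (y t), y t) = c (τ t)
  bpc : ContinuousOn bp (Ioo (-1) 1)
  bmc : ContinuousOn bm (Ioo (-1) 1)
  hbp : ∀ u, |u| < 1 → 0 ≤ bp u ∧ bp u < h ∧ (bp u = 0 ↔ u = 0) ∧
    ∀ y, 0 ≤ y → y < h → (F u y ^ 2 = y ^ (k + 1) ↔ y = bp u)
  hbm : ∀ u, |u| < 1 → 0 ≤ bm u ∧ bm u < h ∧ (bm u = 0 ↔ u = 0) ∧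
    ∀ y, 0 ≤ y → y < h → (F u (-y) ^ 2 = y ^ (k + 1) ↔ y = bm u)

lemma ak_curve1 (P Q : ℝ × ℝ → ℝ) (σ h ρ K M : ℝ) (F R : ℝ → ℝ → ℝ) (G : ℝ × ℝ → ℝ)
    (U : Set (ℝ × ℝ)) (hK : 0 ≤ K) (hM : 0 ≤ M)
    (hlip : ∀ y x₁ x₂, |R y x₁ - R y x₂| ≤ K * |x₁ - x₂|)
    (hbox : ∀ x y, |x| ≤ ρ → |y| ≤ ρ → P (x, y) = R y x * Q (x, y) ∧ 0 < σ * Q (x, y) ∧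
        |Q (x, y)| ≤ M)
    (hF : ∀ u y, |u| < 1 → |y| < h → HasDerivAt (F u) (R y (F u y)) y ∧ |F u y| ≤ ρ)
    (hhρ : h ≤ ρ)
    (memU : ∀ z ∈ U, |z.2| < h ∧ |G z| < 1 ∧ F (G z) z.2 = z.1)
    (box : ∀ u y, |u| < 1 → |y| < h → (F u y, y) ∈ U ∧ G (F u y, y) = u)
    (J : Set ℝ) (c : ℝ → ℝ × ℝ) (hc : IsPhaseCurve (fun z => (P z, Q z)) U J c) :
    (∀ a ∈ J, ∀ b ∈ J, G (c a) = G (c b)) ∧ StrictMonoOn (fun t => σ * (c t).2) J := by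
  obtain ⟨hJ, hJn, hcU, hd⟩ := hc
  have hx : ∀ t ∈ J, HasDerivWithinAt (fun t => (c t).1) (P (c t)) J t := fun t ht =>
    (hasFDerivAt_fst (𝕜 := ℝ) (p := c t)).comp_hasDerivWithinAt t (hd t ht)
  have hy : ∀ t ∈ J, HasDerivWithinAt (fun t => (c t).2) (Q (c t)) J t := fun t ht =>
    (hasFDerivAt_snd (𝕜 := ℝ) (p := c t)).comp_hasDerivWithinAt t (hd t ht)
  have hb : ∀ t ∈ J, P (c t) = R (c t).2 (c t).1 * Q (c t) ∧ 0 < σ * Q (c t) ∧ |Q (c t)| ≤ M := by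
    intro t ht
    obtain ⟨m1, m2, m3⟩ := memU _ (hcU t ht)
    have := (hF _ _ m2 m1).2
    rw [m3] at this
    exact hbox (c t).1 (c t).2 this (m1.le.trans hhρ)
  constructor
  · have key : ∀ a ∈ J, ∀ b ∈ J, a ≤ b → G (c a) = G (c b) := by
      intro a ha b hb' hab
      obtain ⟨m1, m2, m3⟩ := memU _ (hcU a ha)
      have hsub : Icc a b ⊆ J := hJ.out ha hb'
      have hg : ∀ t ∈ J, HasDerivWithinAt (fun t => F (G (c a)) (c t).2)
          (R (c t).2 (F (G (c a)) (c t).2) * Q (c t)) J t := fun t ht =>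
        (hF _ _ m2 (memU _ (hcU t ht)).1).1.comp_hasDerivWithinAt t (hy t ht)
      have hnb : ∀ t ∈ Ico a b, J ∈ 𝓝[≥] t := fun t ht =>
        mem_of_superset (Icc_mem_nhdsGE ht.2) ((Icc_subset_Icc_left ht.1).trans hsub)
      have heq := ODE_solution_unique_of_mem_Icc_right
        (v := fun t w => R (c t).2 w * Q (c t)) (s := fun _ => univ) (K := (K * M).toNNReal)
        (a := a) (b := b) (f := fun t => (c t).1) (g := fun t => F (G (c a)) (c t).2)
        (fun t ht => by
          refine LipschitzOnWith.of_dist_le_mul fun w₁ _ w₂ _ => ?_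
          rw [Real.dist_eq, Real.dist_eq, Real.coe_toNNReal _ (by positivity), ← sub_mul, abs_mul]
          have h1 := hlip (c t).2 w₁ w₂
          have h2 := (hb t (hsub (Ico_subset_Icc_self ht))).2.2
          calc _ ≤ (K * |w₁ - w₂|) * M := by gcongr
            _ = _ := by ring)
        (fun t ht => ((hx t (hsub ht)).continuousWithinAt).mono hsub)
        (fun t ht => by
          have htJ := hsub (Ico_subset_Icc_self ht)
          have := (hx t htJ).mono_of_mem_nhdsWithin (hnb t ht)
          rwa [(hb t htJ).1] at this)
        (fun _ _ => trivial)
        (fun t ht => ((hg t (hsub ht)).continuousWithinAt).mono hsub)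
        (fun t ht => (hg t (hsub (Ico_subset_Icc_self ht))).mono_of_mem_nhdsWithin (hnb t ht))
        (fun _ _ => trivial) m3.symm (right_mem_Icc.2 hab)
      have := (box (G (c a)) (c b).2 m2 (memU _ (hcU b hb')).1).2
      simp only at heq
      rw [← heq] at this
      exact this.symm
    intro a ha b hb'
    rcases le_total a b with h1 | h1
    · exact key a ha b hb' h1
    · exact (key b hb' a ha h1).symm
  · refine strictMonoOn_of_deriv_pos hJ.convex
      (fun t ht => ((hy t ht).const_mul σ).continuousWithinAt) (fun t ht => ?_)
    have htJ := interior_subset ht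
    have : HasDerivAt (fun t => σ * (c t).2) (σ * Q (c t)) t :=
      ((hy t htJ).const_mul σ).hasDerivAt (mem_interior_iff_mem_nhds.1 ht)
    rw [this.deriv]
    exact (hb t htJ).2.1

lemma ak_curve2 (P Q : ℝ × ℝ → ℝ) (σ h ρ M : ℝ) (F R : ℝ → ℝ → ℝ)
    (hσ : σ = 1 ∨ σ = -1) (hM : 0 < M) (hh : 0 < h)
    (hbox : ∀ x y, |x| ≤ ρ → |y| ≤ ρ → P (x, y) = R y x * Q (x, y) ∧ 0 < σ * Q (x, y) ∧
        |Q (x, y)| ≤ M ∧ ContinuousAt Q (x, y))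
    (hF : ∀ u y, |u| < 1 → |y| < h → HasDerivAt (F u) (R y (F u y)) y)
    (hFc : ∀ u, |u| < 1 → ContinuousOn (F u) (Icc (-h) h))
    (hFρ : ∀ u y, |u| < 1 → |y| ≤ h → |F u y| ≤ ρ)
    (hhρ : h ≤ ρ) (J : Set ℝ) (u : ℝ) (y : ℝ → ℝ) (S : Set (ℝ × ℝ)) (hu : |u| < 1)
    (hJ : J.OrdConnected) (hJn : J.Nontrivial) (hyc : ContinuousOn y J)
    (hym : StrictMonoOn (fun t => σ * y t) J) (hyh : ∀ t ∈ J, |y t| < h)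
    (hS : ∀ t ∈ J, (F u (y t), y t) ∈ S) :
    ∃ (J' : Set ℝ) (c : ℝ → ℝ × ℝ) (τ : ℝ → ℝ), IsPhaseCurve (fun z => (P z, Q z)) S J' c ∧
      ContinuousOn τ J ∧ StrictMonoOn τ J ∧ τ '' J = J' ∧
      ∀ t ∈ J, (F u (y t), y t) = c (τ t) := by
  have hσσ : σ * σ = 1 := by rcases hσ with rfl | rfl <;> norm_num
  have hσa : |σ| = 1 := by rcases hσ with rfl | rfl <;> norm_num
  set cl : ℝ → ℝ := fun x => max (-h) (min x h) with hcl
  have hclc : Continuous cl := by fun_prop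
  have hcl2 : ∀ x, |cl x| ≤ h := fun x => (ak_abs_clamp hh.le x).2
  have hclid : ∀ x, |x| < h → cl x = x := fun x hx => by
    have := abs_lt.1 hx
    simp [hcl, this.1.le, this.2.le]
  have hb := fun s => hbox (F u (cl s)) (cl s) (hFρ u _ hu (hcl2 s)) ((hcl2 s).trans hhρ)
  have hFcl : Continuous (fun s => F u (cl s)) :=
    (hFc u hu).comp_continuous hclc (fun s => abs_le.1 (hcl2 s))
  have hw : Continuous (fun s => σ * Q (F u (cl s), cl s)) := by
    refine continuous_const.mul (continuous_iff_continuousAt.2 fun s => ?_)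
    exact ContinuousAt.comp (f := fun s => (F u (cl s), cl s)) (hb s).2.2.2
      (hFcl.prodMk hclc).continuousAt
  obtain ⟨H, hH⟩ := ak_prim (fun s => (σ * Q (F u (cl s), cl s))⁻¹)
    (hw.inv₀ fun s => (hb s).2.1.ne') M⁻¹ (by positivity) (fun s => by
      refine inv_anti₀ (hb s).2.1 ((le_abs_self _).trans ?_)
      rw [abs_mul, hσa, one_mul]; exact (hb s).2.2.1)
  have hHc : Continuous H := H.continuous
  have hHm : ∀ a b, H a < H b ↔ a < b := fun a b => H.lt_iff_lt
  refine ⟨(fun t => σ * H (y t)) '' J,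
    fun s => (F u (H.symm (σ * s)), H.symm (σ * s)), fun t => σ * H (y t), ⟨?_, ?_, ?_, ?_⟩,
    ?_, ?_, rfl, ?_⟩
  · have hcτ : ContinuousOn (fun t => σ * H (y t)) J :=
      continuousOn_const.mul (hHc.comp_continuousOn hyc)
    exact ((hJ.isPreconnected).image _ hcτ).ordConnected
  · refine hJn.image_of_injOn ?_
    intro a ha b hb' hab
    have h1 : H (y a) = H (y b) := by
      have : σ * (σ * H (y a)) = σ * (σ * H (y b)) := by simp only at hab; rw [hab]
      rwa [← mul_assoc, ← mul_assoc, hσσ, one_mul, one_mul] at this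
    exact hym.injOn ha hb' (by simp only [H.injective h1])
  · rintro _ ⟨t, ht, rfl⟩
    simpa only [← mul_assoc, hσσ, one_mul, OrderIso.symm_apply_apply] using hS t ht
  · rintro _ ⟨t, ht, rfl⟩
    refine HasDerivAt.hasDerivWithinAt ?_
    have hs : H.symm (σ * (σ * H (y t))) = y t := by
      rw [← mul_assoc, hσσ, one_mul, OrderIso.symm_apply_apply]
    have hbt := hb (y t)
    rw [hclid _ (hyh t ht)] at hbt
    have hd1 : HasDerivAt H.symm (σ * Q (F u (y t), y t)) (σ * (σ * H (y t))) := by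
      have := HasDerivAt.of_local_left_inverse (f := H) (g := H.symm) (a := σ * (σ * H (y t)))
        H.symm.continuous.continuousAt (by rw [hs]; exact hH (y t))
        (inv_ne_zero (hb _).2.1.ne') (Eventually.of_forall fun s => H.apply_symm_apply s)
      rwa [inv_inv, hclid _ (hyh t ht)] at this
    have hd2 : HasDerivAt (fun s => H.symm (σ * s)) (Q (F u (y t), y t)) (σ * H (y t)) := by
      have h0 : HasDerivAt (fun s : ℝ => σ * s) σ (σ * H (y t)) := by
        simpa using (hasDerivAt_id (σ * H (y t))).const_mul σ
      have := hd1.comp (σ * H (y t)) h0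
      have e : σ * Q (F u (y t), y t) * σ = Q (F u (y t), y t) := by
        rw [mul_right_comm, hσσ, one_mul]
      rwa [e] at this
    have hd3 : HasDerivAt (fun s => F u (H.symm (σ * s)))
        (R (y t) (F u (y t)) * Q (F u (y t), y t)) (σ * H (y t)) := by
      have h0 := hF u (y t) hu (hyh t ht)
      rw [← hs] at h0
      have := h0.comp (σ * H (y t)) hd2
      rwa [hs] at this
    have := hd3.prodMk hd2
    simp only [hs]
    rwa [← hbt.1] at this
  · exact continuousOn_const.mul (hHc.comp_continuousOn hyc)
  · intro a ha b hb' hab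
    have := hym ha hb' hab
    rcases hσ with rfl | rfl
    · simp only [one_mul] at this ⊢
      exact (hHm _ _).2 this
    · simp only [neg_one_mul, neg_lt_neg_iff] at this ⊢
      exact (hHm _ _).2 this
  · intro t ht
    simp only [← mul_assoc, hσσ, one_mul, OrderIso.symm_apply_apply]

lemma ak_leaf (k : ℕ) (hk : 1 ≤ k) (P Q : ℝ × ℝ → ℝ)
    (hP : AnalyticAt ℝ P (0, 0)) (hQ : AnalyticAt ℝ Q (0, 0))
    (hP0 : P (0, 0) = 0) (hQ0 : Q (0, 0) ≠ 0)
    (hflat : ∀ n : ℕ, 1 ≤ n → 2 * n ≤ k - 1 → iteratedDeriv n (fun y => P (0, y)) 0 = 0)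
    (σ : ℝ) (hσ : σ * Q (0, 0) > 0) (hσ1 : σ = 1 ∨ σ = -1) :
    ∃ (h : ℝ) (F : ℝ → ℝ → ℝ) (G : ℝ × ℝ → ℝ) (U : Set (ℝ × ℝ)) (bp bm : ℝ → ℝ),
      AkLeaf P Q k σ h F G U bp bm := by
  obtain ⟨ρ, K, L, M, R, hρ, hK, hL, hM, hlip, hRc, hRL, hRK, hbox⟩ :=
    ak_setup k hk P Q hP hQ hP0 hQ0 hflat σ hσ hσ1
  obtain ⟨F, hF0, hFd, hFc, hFb, hFm⟩ := ak_flow R K L hK hL hlip hRc hRL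
  have hI : Icc (0:ℝ) 1 ⊆ Icc (-1) 1 := Icc_subset_Icc_left (by norm_num)
  have hIn : ∀ y ∈ Icc (0:ℝ) 1, -y ∈ Icc (-1:ℝ) 1 := fun y hy =>
    ⟨by linarith [hy.2], by linarith [hy.1]⟩
  have hFcu : ∀ y ∈ Icc (-1:ℝ) 1, ContinuousOn (fun u => F u y) (Icc (-1) 1) := fun y hy =>
    hFc.comp (f := fun u => (u, y)) (by fun_prop) (fun u hu => ⟨hu, hy⟩)
  obtain ⟨h₁, hh₁, H₁⟩ := ak_roots k ((k+1)/2) hk (by omega) F (fun u y => R y (F u y)) K hK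
    hF0 (fun u hu y hy => (hFd u hu y (hI hy)).mono hI)
    (fun u hu y hy => by simpa [abs_of_nonneg hy.1] using hRK y (F u y))
    (fun y hy => hFcu y (hI hy))
  obtain ⟨h₂, hh₂, H₂⟩ := ak_roots k ((k+1)/2) hk (by omega) (fun u y => F u (-y))
    (fun u y => -R (-y) (F u (-y))) K hK (fun u hu => by simpa using hF0 u hu)
    (fun u hu y hy => by
      have := HasDerivWithinAt.comp y (hFd u hu (-y) (hIn y hy))
        (hasDerivAt_neg y).hasDerivWithinAt (s := Icc 0 1) (fun t ht => hIn t ht)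
      simpa [Function.comp_def] using this)
    (fun u hu y hy => by simpa [abs_of_nonneg hy.1] using hRK (-y) (F u (-y)))
    (fun y hy => hFcu _ (hIn y hy))
  obtain ⟨h, hh, hm⟩ := exists_between (show 0 < min (min h₁ h₂) (min (min ρ 1) (ρ / (2 * (L + 1))))
    by positivity)
  rw [lt_min_iff, lt_min_iff, lt_min_iff, lt_min_iff, lt_div_iff₀ (by positivity)] at hm
  obtain ⟨⟨hm1, hm2⟩, ⟨hm3, hm4⟩, hm5⟩ := hm
  obtain ⟨r₁, hr₁, hr₁', b₁, hb₁c, hb₁⟩ := H₁ h hh hm1.le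
  obtain ⟨r₂, hr₂, hr₂', b₂, hb₂c, hb₂⟩ := H₂ h hh hm2.le
  obtain ⟨r, hr, hrm⟩ := exists_between (show 0 < min (min r₁ r₂) (ρ / 2) by positivity)
  rw [lt_min_iff, lt_min_iff] at hrm
  obtain ⟨⟨hrm1, hrm2⟩, hrm3⟩ := hrm
  have hrI : ∀ u ∈ Icc (-1:ℝ) 1, r * u ∈ Icc (-1:ℝ) 1 := fun u hu =>
    ⟨by nlinarith [hu.1, hu.2], by nlinarith [hu.1, hu.2]⟩
  have habs : ∀ u : ℝ, |u| < 1 → |r * u| < r := fun u hu => by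
    rw [abs_mul, abs_of_pos hr]; nlinarith
  have hsubI : ∀ u : ℝ, |u| < 1 → u ∈ Icc (-1:ℝ) 1 := fun u hu =>
    ⟨(abs_lt.1 hu).1.le, (abs_lt.1 hu).2.le⟩
  have hyI : Icc (-h) h ⊆ Icc (-1:ℝ) 1 := Icc_subset_Icc (by linarith) hm4.le
  have hFc' : ContinuousOn (Function.uncurry fun u y => F (r * u) y)
      (Icc (-1) 1 ×ˢ Icc (-h) h) :=
    hFc.comp (f := fun z : ℝ × ℝ => (r * z.1, z.2)) (by fun_prop)
      (fun z hz => ⟨hrI _ hz.1, hyI hz.2⟩)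
  have hFρ : ∀ u y, |u| < 1 → |y| ≤ h → |F (r * u) y| ≤ ρ := by
    intro u y hu hy
    have h1 := hFb _ (hrI u (hsubI u hu)) y (hyI (abs_le.1 hy))
    have h2 := abs_sub_abs_le_abs_sub (F (r * u) y) (r * u)
    have h3 := habs u hu
    have h4 : L * |y| ≤ L * h := by gcongr
    nlinarith
  have hFd' : ∀ u y, |u| < 1 → |y| < h →
      HasDerivAt (F (r * u)) (R y (F (r * u) y)) y := by
    intro u y hu hy
    have hy' := abs_lt.1 hy
    exact (hFd _ (hrI u (hsubI u hu)) y (hyI (abs_le.1 hy.le))).hasDerivAt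
      (Icc_mem_nhds (by linarith) (by linarith))
  obtain ⟨G, U, hUo, hGc, hmemU, hbx⟩ := ak_chart (fun u y => F (r * u) y) h hFc'
    (fun u₁ hu₁ u₂ hu₂ hlt y hy => hFm _ (hrI _ hu₁) _ (hrI _ hu₂) (by nlinarith) y (hyI hy))
  refine ⟨h, fun u y => F (r * u) y, G, U, fun u => b₁ (r * u), fun u => b₂ (r * u), ?_⟩
  refine ⟨hh, hUo, hGc, hFc'.mono (prod_mono Ioo_subset_Icc_self Ioo_subset_Icc_self),
    hmemU, hbx, ?_, ?_, ?_, ?_, ?_, ?_, ?_, ?_⟩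
  · intro u h0 hu
    simp only [hF0 _ (hrI u (hsubI u hu))] at h0
    simpa [hr.ne'] using h0
  · simpa using hF0 0 (by norm_num)
  · exact ak_curve1 P Q σ h ρ K M _ R G U hK hM.le hlip
      (fun x y hx hy => ⟨(hbox x y hx hy).1, (hbox x y hx hy).2.1, (hbox x y hx hy).2.2.1⟩)
      (fun u y hu hy => ⟨hFd' u y hu hy, hFρ u y hu hy.le⟩) hm3.le hmemU hbx
  · exact ak_curve2 P Q σ h ρ M (fun u y => F (r * u) y) R hσ1 hM hh hbox hFd'
      (fun u hu y hy => ((hFd _ (hrI u (hsubI u hu)) y (hyI hy)).continuousWithinAt).mono hyI)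
      hFρ hm3.le
  · refine hb₁c.comp (f := fun u => r * u) (by fun_prop) (fun u hu => ?_)
    have := abs_lt.1 ((habs u (abs_lt.2 hu)).trans hrm1)
    exact this
  · refine hb₂c.comp (f := fun u => r * u) (by fun_prop) (fun u hu => ?_)
    have := abs_lt.1 ((habs u (abs_lt.2 hu)).trans hrm2)
    exact this
  · intro u hu
    have := hb₁ (r * u) ((habs u hu).trans hrm1)
    simpa [hr.ne'] using this
  · intro u hu
    have := hb₂ (r * u) ((habs u hu).trans hrm2)
    simpa [hr.ne'] using this

/-- Two-sided stretching map. -/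
noncomputable def akg (p p' m m' y : ℝ) : ℝ := -akT m m' (-(akT p p' y))

lemma akT_nonneg {b β y : ℝ} (hb : 0 ≤ b) (hβ : 0 ≤ β) (h : b = 0 ↔ β = 0) (hy : 0 ≤ y) :
    0 ≤ akT b β y := by
  have := (akT_strictMono hb hβ h).monotone hy
  rwa [akT_of_nonpos le_rfl] at this

lemma akg_of_nonneg {p p' m m' y : ℝ} (hp : 0 ≤ p) (hp' : 0 ≤ p') (h : p = 0 ↔ p' = 0)
    (hy : 0 ≤ y) : akg p p' m m' y = akT p p' y := by
  unfold akg
  rw [akT_of_nonpos (by linarith [akT_nonneg hp hp' h hy]), neg_neg]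

lemma akg_of_nonpos {p p' m m' y : ℝ} (hy : y ≤ 0) : akg p p' m m' y = -akT m m' (-y) := by
  unfold akg
  rw [akT_of_nonpos hy]

lemma akg_inv {p p' m m' : ℝ} (hp : 0 ≤ p) (hp' : 0 ≤ p') (h : p = 0 ↔ p' = 0)
    (hm : 0 ≤ m) (hm' : 0 ≤ m') (h' : m = 0 ↔ m' = 0) (y : ℝ) :
    akg p' p m' m (akg p p' m m' y) = y := by
  rcases le_total 0 y with hy | hy
  · rw [akg_of_nonneg hp hp' h hy, akg_of_nonneg hp' hp h.symm (akT_nonneg hp hp' h hy),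
      akT_inv hp hp' h]
  · have := akT_nonneg hm hm' h' (y := -y) (by linarith)
    rw [akg_of_nonpos hy, akg_of_nonpos (by linarith), neg_neg, akT_inv hm hm' h', neg_neg]

lemma akg_strictMono {p p' m m' : ℝ} (hp : 0 ≤ p) (hp' : 0 ≤ p') (h : p = 0 ↔ p' = 0)
    (hm : 0 ≤ m) (hm' : 0 ≤ m') (h' : m = 0 ↔ m' = 0) : StrictMono (akg p p' m m') := by
  intro a b hab
  exact neg_lt_neg (akT_strictMono hm hm' h' (neg_lt_neg (akT_strictMono hp hp' h hab)))

lemma ak_zero {P Q : ℝ × ℝ → ℝ} {k : ℕ} {σ h : ℝ} {F : ℝ → ℝ → ℝ} {G : ℝ × ℝ → ℝ}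
    {U : Set (ℝ × ℝ)} {bp bm : ℝ → ℝ} (A : AkLeaf P Q k σ h F G U bp bm)
    {ε : ℝ} (hε : ε = 1 ∨ ε = -1) {u y : ℝ} (hu : |u| < 1) (hy : |y| < h) :
    (0 ≤ y → (F u y ^ 2 + ε * y ^ (k + 1) = 0 ↔
      (ε = -1 ∧ y = bp u) ∨ (ε = 1 ∧ u = 0 ∧ y = 0))) ∧
    (y ≤ 0 → (F u y ^ 2 + ε * y ^ (k + 1) = 0 ↔
      (ε * (-1) ^ (k + 1) = -1 ∧ -y = bm u) ∨ (ε * (-1) ^ (k + 1) = 1 ∧ u = 0 ∧ y = 0))) := by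
  have hy' := abs_lt.1 hy
  have aux : ∀ s : ℝ, 0 ≤ s → (s = 0 ↔ y = 0) → (F u y ^ 2 + s ^ (k + 1) = 0 ↔ u = 0 ∧ y = 0) := by
    intro s hs hsy
    constructor
    · intro h0
      have h1 : 0 ≤ s ^ (k + 1) := by positivity
      have h2 := sq_nonneg (F u y)
      have h3 : s ^ (k + 1) = 0 := by linarith
      have h4 : F u y ^ 2 = 0 := by linarith
      have h5 : y = 0 := hsy.1 (by simpa using h3)
      have h6 : F u y = 0 := by simpa using h4
      rw [h5] at h6
      exact ⟨A.F0 u h6 hu, h5⟩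
    · rintro ⟨rfl, h0⟩
      rw [hsy.2 h0, h0, A.F00]; simp
  constructor
  · intro hy0
    have hb := (A.hbp u hu).2.2.2 y hy0 hy'.2
    rcases hε with rfl | rfl
    · have := aux y hy0 Iff.rfl
      rw [one_mul, this]; norm_num
    · rw [← hb]
      norm_num
      constructor <;> intro h <;> linarith
  · intro hy0
    have hb := (A.hbm u hu).2.2.2 (-y) (by linarith) (by linarith)
    rw [neg_neg] at hb
    have hpow : ε * y ^ (k + 1) = (ε * (-1) ^ (k + 1)) * (-y) ^ (k + 1) := by
      rw [mul_assoc, ← mul_pow]; simp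
    have hcase : ε * (-1) ^ (k + 1) = 1 ∨ ε * (-1) ^ (k + 1) = -1 := by
      rcases neg_one_pow_eq_or ℝ (k + 1) with h | h <;> rcases hε with rfl | rfl <;> simp [h]
    rw [hpow]
    rcases hcase with h | h
    · have := aux (-y) (by linarith) (by simp)
      rw [h, one_mul, this]; norm_num
    · rw [← hb, h]
      norm_num
      constructor <;> intro h <;> linarith

/-- the conjugating map -/
noncomputable def akPhi (F' : ℝ → ℝ → ℝ) (G : ℝ × ℝ → ℝ) (bp bp' bm bm' : ℝ → ℝ)
    (z : ℝ × ℝ) : ℝ × ℝ :=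
  (F' (G z) (akg (bp (G z)) (bp' (G z)) (bm (G z)) (bm' (G z)) z.2),
    akg (bp (G z)) (bp' (G z)) (bm (G z)) (bm' (G z)) z.2)

/-- its domain -/
def akV (h' : ℝ) (G : ℝ × ℝ → ℝ) (U : Set (ℝ × ℝ)) (bp bp' bm bm' : ℝ → ℝ) : Set (ℝ × ℝ) :=
  U ∩ {z | |akg (bp (G z)) (bp' (G z)) (bm (G z)) (bm' (G z)) z.2| < h'}

lemma ak_half {P Q : ℝ × ℝ → ℝ} {k : ℕ} {σ h : ℝ} {F : ℝ → ℝ → ℝ} {G : ℝ × ℝ → ℝ}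
    {U : Set (ℝ × ℝ)} {bp bm : ℝ → ℝ} (A : AkLeaf P Q k σ h F G U bp bm)
    {P' Q' : ℝ × ℝ → ℝ} {h' : ℝ} {F' : ℝ → ℝ → ℝ} {G' : ℝ × ℝ → ℝ}
    {U' : Set (ℝ × ℝ)} {bp' bm' : ℝ → ℝ} (B : AkLeaf P' Q' k σ h' F' G' U' bp' bm')
    (hσ : σ = 1 ∨ σ = -1) {ε : ℝ} (hε : ε = 1 ∨ ε = -1) :
    IsOpen (akV h' G U bp bp' bm bm') ∧ (0, 0) ∈ akV h' G U bp bp' bm bm' ∧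
    ContinuousOn (akPhi F' G bp bp' bm bm') (akV h' G U bp bp' bm bm') ∧
    MapsTo (akPhi F' G bp bp' bm bm') (akV h' G U bp bp' bm bm') (akV h G' U' bp' bp bm' bm) ∧
    (∀ z ∈ akV h' G U bp bp' bm bm',
      akPhi F G' bp' bp bm' bm (akPhi F' G bp bp' bm bm' z) = z) ∧
    akPhi F' G bp bp' bm bm' (0, 0) = (0, 0) ∧
    (∀ z ∈ akV h' G U bp bp' bm bm', z.1 ^ 2 + ε * z.2 ^ (k + 1) = 0 ↔
      (akPhi F' G bp bp' bm bm' z).1 ^ 2 + ε * (akPhi F' G bp bp' bm bm' z).2 ^ (k + 1) = 0) ∧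
    (∀ (J : Set ℝ) (c : ℝ → ℝ × ℝ),
      IsPhaseCurve (fun z => (P z, Q z))
        (akV h' G U bp bp' bm bm' \ {z | z.1 ^ 2 + ε * z.2 ^ (k + 1) = 0}) J c →
      ∃ (J' : Set ℝ) (d : ℝ → ℝ × ℝ) (τ : ℝ → ℝ),
        IsPhaseCurve (fun z => (P' z, Q' z))
          (akV h G' U' bp' bp bm' bm \ {z | z.1 ^ 2 + ε * z.2 ^ (k + 1) = 0}) J' d ∧
        ContinuousOn τ J ∧ StrictMonoOn τ J ∧ τ '' J = J' ∧
        ∀ t ∈ J, akPhi F' G bp bp' bm bm' (c t) = d (τ t)) := by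
  have hp : ∀ u, |u| < 1 → 0 ≤ bp u := fun u hu => (A.hbp u hu).1
  have hm : ∀ u, |u| < 1 → 0 ≤ bm u := fun u hu => (A.hbm u hu).1
  have hp' : ∀ u, |u| < 1 → 0 ≤ bp' u := fun u hu => (B.hbp u hu).1
  have hm' : ∀ u, |u| < 1 → 0 ≤ bm' u := fun u hu => (B.hbm u hu).1
  have hpp : ∀ u, |u| < 1 → (bp u = 0 ↔ bp' u = 0) := fun u hu =>
    (A.hbp u hu).2.2.1.trans (B.hbp u hu).2.2.1.symm
  have hmm : ∀ u, |u| < 1 → (bm u = 0 ↔ bm' u = 0) := fun u hu =>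
    (A.hbm u hu).2.2.1.trans (B.hbm u hu).2.2.1.symm
  have hG1 : ∀ z ∈ U, |G z| < 1 := fun z hz => (A.memU z hz).2.1
  have hGI : MapsTo G U (Ioo (-1) 1) := fun z hz => abs_lt.1 (hG1 z hz)
  have hgc : ContinuousOn
      (fun z => akg (bp (G z)) (bp' (G z)) (bm (G z)) (bm' (G z)) z.2) U := by
    intro z hz
    unfold akg
    have c1 := (A.bpc.comp A.Gcont hGI) z hz
    have c2 := (B.bpc.comp A.Gcont hGI) z hz
    have c3 := (A.bmc.comp A.Gcont hGI) z hz
    have c4 := (B.bmc.comp A.Gcont hGI) z hz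
    refine (akT_continuousAt c3 c4 (akT_continuousAt c1 c2 continuousWithinAt_snd
      ?_ ?_ ?_).neg ?_ ?_ ?_).neg
    · exact fun x hx => hp _ (hG1 x hx)
    · exact fun x hx => hp' _ (hG1 x hx)
    · exact (hpp _ (hG1 z hz)).1
    · exact fun x hx => hm _ (hG1 x hx)
    · exact fun x hx => hm' _ (hG1 x hx)
    · exact (hmm _ (hG1 z hz)).1
  have hVU : akV h' G U bp bp' bm bm' ⊆ U := inter_subset_left
  have h00 := A.box 0 0 (by simp) (by simpa using A.hpos)
  rw [A.F00] at h00
  have hPhi0 : akPhi F' G bp bp' bm bm' (0, 0) = (0, 0) := by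
    simp only [akPhi, h00.2]
    rw [akg_of_nonpos le_rfl, akT_of_nonpos (by simp)]
    simp [B.F00]
  have hU' : ∀ z ∈ akV h' G U bp bp' bm bm', akPhi F' G bp bp' bm bm' z ∈ U' ∧
      G' (akPhi F' G bp bp' bm bm' z) = G z := fun z hz => B.box _ _ (hG1 z hz.1) hz.2
  have hginv : ∀ z ∈ U, akg (bp' (G z)) (bp (G z)) (bm' (G z)) (bm (G z))
      (akg (bp (G z)) (bp' (G z)) (bm (G z)) (bm' (G z)) z.2) = z.2 := fun z hz =>
    akg_inv (hp _ (hG1 z hz)) (hp' _ (hG1 z hz)) (hpp _ (hG1 z hz)) (hm _ (hG1 z hz))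
      (hm' _ (hG1 z hz)) (hmm _ (hG1 z hz)) _
  have hmaps : MapsTo (akPhi F' G bp bp' bm bm') (akV h' G U bp bp' bm bm')
      (akV h G' U' bp' bp bm' bm) := by
    intro z hz
    refine ⟨(hU' z hz).1, ?_⟩
    simp only [mem_setOf_eq, (hU' z hz).2]
    simp only [akPhi, hginv z hz.1]
    exact (A.memU z hz.1).1
  have hzero : ∀ z ∈ akV h' G U bp bp' bm bm', z.1 ^ 2 + ε * z.2 ^ (k + 1) = 0 ↔
      (akPhi F' G bp bp' bm bm' z).1 ^ 2 + ε * (akPhi F' G bp bp' bm bm' z).2 ^ (k + 1) = 0 := by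
    intro z hz
    obtain ⟨m1, m2, m3⟩ := A.memU z hz.1
    have hsm := akg_strictMono (hp _ m2) (hp' _ m2) (hpp _ m2) (hm _ m2) (hm' _ m2) (hmm _ m2)
    have hzA := ak_zero A hε m2 m1
    have hzB := ak_zero B hε m2 hz.2
    rw [m3] at hzA
    simp only [akPhi]
    have g0 : akg (bp (G z)) (bp' (G z)) (bm (G z)) (bm' (G z)) 0 = 0 := by
      rw [akg_of_nonpos le_rfl, akT_of_nonpos (by simp)]; simp
    have gz : akg (bp (G z)) (bp' (G z)) (bm (G z)) (bm' (G z)) z.2 = 0 ↔ z.2 = 0 := by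
      constructor
      · intro h; exact hsm.injective (h.trans g0.symm)
      · intro h; rw [h, g0]
    rcases le_total 0 z.2 with hy | hy
    · have hgy := hsm.monotone hy
      rw [g0] at hgy
      rw [hzA.1 hy, hzB.1 hgy, gz]
      have : z.2 = bp (G z) ↔
          akg (bp (G z)) (bp' (G z)) (bm (G z)) (bm' (G z)) z.2 = bp' (G z) := by
        rw [← hsm.injective.eq_iff, akg_of_nonneg (y := bp (G z)) (hp _ m2) (hp' _ m2)
          (hpp _ m2) (hp _ m2), akT_self (hp _ m2) (hpp _ m2)]
      rw [this]
    · have hgy := hsm.monotone hy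
      rw [g0] at hgy
      rw [hzA.2 hy, hzB.2 hgy, gz]
      have : -z.2 = bm (G z) ↔
          -akg (bp (G z)) (bp' (G z)) (bm (G z)) (bm' (G z)) z.2 = bm' (G z) := by
        rw [neg_eq_iff_eq_neg, neg_eq_iff_eq_neg, ← hsm.injective.eq_iff,
          akg_of_nonpos (y := -bm (G z)) (by linarith [hm _ m2]), neg_neg,
          akT_self (hm _ m2) (hmm _ m2)]
      rw [this]
  refine ⟨?_, ?_, ?_, hmaps, ?_, hPhi0, hzero, ?_⟩
  · have : akV h' G U bp bp' bm bm' = U ∩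
        (fun z => akg (bp (G z)) (bp' (G z)) (bm (G z)) (bm' (G z)) z.2) ⁻¹' {x | |x| < h'} := rfl
    rw [this]
    exact hgc.isOpen_inter_preimage A.openU (isOpen_lt continuous_abs continuous_const)
  · refine ⟨h00.1, ?_⟩
    have := congrArg Prod.snd hPhi0
    simp only [akPhi] at this
    simp only [mem_setOf_eq, this, abs_zero]
    exact B.hpos
  · have hg := hgc.mono hVU
    refine ContinuousOn.prodMk ?_ hg
    refine B.Fcont.comp (f := fun z => (G z,
      akg (bp (G z)) (bp' (G z)) (bm (G z)) (bm' (G z)) z.2)) ((A.Gcont.mono hVU).prodMk hg) ?_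
    exact fun z hz => ⟨hGI (hVU hz), abs_lt.1 hz.2⟩
  · intro z hz
    conv_lhs => rw [akPhi]
    simp only [(hU' z hz).2]
    simp only [akPhi, hginv z hz.1, (A.memU z hz.1).2.2]
  · intro J c hc
    have hcU : IsPhaseCurve (fun z => (P z, Q z)) U J c :=
      ⟨hc.1, hc.2.1, fun t ht => hVU (hc.2.2.1 t ht).1, hc.2.2.2⟩
    obtain ⟨hconst, hmono⟩ := A.curve1 J c hcU
    obtain ⟨t₀, ht₀⟩ := hc.2.1.nonempty
    set u := G (c t₀) with hu
    have hGu : ∀ t ∈ J, G (c t) = u := fun t ht => hconst t ht t₀ ht₀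
    have hu1 : |u| < 1 := hG1 _ (hcU.2.2.1 t₀ ht₀)
    have hcc : ContinuousOn c J := fun t ht => (hc.2.2.2 t ht).continuousWithinAt
    have hPc : ∀ t ∈ J, akPhi F' G bp bp' bm bm' (c t) =
        (F' u (akg (bp u) (bp' u) (bm u) (bm' u) (c t).2),
          akg (bp u) (bp' u) (bm u) (bm' u) (c t).2) := fun t ht => by
      simp only [akPhi, hGu t ht]
    obtain ⟨J', d, τ, r1, r2, r3, r4, r5⟩ := B.curve2 J u
      (fun t => akg (bp u) (bp' u) (bm u) (bm' u) (c t).2)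
      (akV h G' U' bp' bp bm' bm \ {z | z.1 ^ 2 + ε * z.2 ^ (k + 1) = 0}) hu1 hc.1 hc.2.1
      (by
        refine (hgc.comp hcc hcU.2.2.1).congr fun t ht => ?_
        simp only [Function.comp, hGu t ht])
      (by
        have hsm := akg_strictMono (hp _ hu1) (hp' _ hu1) (hpp _ hu1) (hm _ hu1) (hm' _ hu1)
          (hmm _ hu1)
        intro a ha b hb hab
        have := hmono ha hb hab
        rcases hσ with rfl | rfl
        · simp only [one_mul] at this ⊢
          exact hsm this
        · simp only [neg_one_mul, neg_lt_neg_iff] at this ⊢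
          exact hsm this)
      (fun t ht => by
        have := (hc.2.2.1 t ht).1.2
        simpa only [mem_setOf_eq, hGu t ht] using this)
      (fun t ht => by
        rw [← hPc t ht]
        exact ⟨hmaps (hc.2.2.1 t ht).1, fun h =>
          (hc.2.2.1 t ht).2 ((hzero _ (hc.2.2.1 t ht).1).2 h)⟩)
    exact ⟨J', d, τ, r1, r2, r3, r4, fun t ht => (hPc t ht).trans (r5 t ht)⟩

/-- (`A_k`-type impasse curve, Case 3 of Table 2.)
If `δ(x,y) = x² + ε·y^{k+1}`, `X = (P,Q)` is real-analytic near the origin with `P(0,0) = 0`,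
`Q(0,0) ≠ 0`, and `∂ⁿP/∂yⁿ(0,0) = 0` for all `1 ≤ 2n ≤ k − 1` (i.e. `k − 1 < 2n₀`), then
`(X, δ)` is orientation-preserving `C⁰`-orbitally equivalent at the origin to the system
with constant adjoint vector field `(0, Q(0,0))`. -/
theorem Ak_case3 (k : ℕ) (hk : 1 ≤ k) (ε : ℝ) (hε : ε = 1 ∨ ε = -1)
    (P Q : ℝ × ℝ → ℝ)
    (hP : AnalyticAt ℝ P (0, 0)) (hQ : AnalyticAt ℝ Q (0, 0))
    (hP0 : P (0, 0) = 0) (hQ0 : Q (0, 0) ≠ 0)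
    (hflat : ∀ n : ℕ, 1 ≤ n → 2 * n ≤ k - 1 → iteratedDeriv n (fun y => P (0, y)) 0 = 0) :
    OrbitallyEquivAt (fun z => (P z, Q z)) (fun z => z.1 ^ 2 + ε * z.2 ^ (k + 1)) (0, 0)
      (fun _ => ((0 : ℝ), Q (0, 0))) (fun z => z.1 ^ 2 + ε * z.2 ^ (k + 1)) (0, 0) := by
  obtain ⟨σ, hσ1, hσ⟩ : ∃ σ : ℝ, (σ = 1 ∨ σ = -1) ∧ σ * Q (0, 0) > 0 := by
    rcases lt_or_gt_of_ne hQ0 with h | h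
    · exact ⟨-1, Or.inr rfl, by linarith⟩
    · exact ⟨1, Or.inl rfl, by linarith⟩
  obtain ⟨h, F, G, U, bp, bm, A⟩ := ak_leaf k hk P Q hP hQ hP0 hQ0 hflat σ hσ hσ1
  obtain ⟨h', F', G', U', bp', bm', B⟩ := ak_leaf k hk (fun _ => 0) (fun _ => Q (0, 0))
    analyticAt_const analyticAt_const rfl hQ0 (fun n _ _ => by simp) σ hσ hσ1
  obtain ⟨a1, a2, a3, a4, a5, a6, a7, a8⟩ := ak_half A B hσ1 hε
  obtain ⟨b1, b2, b3, b4, b5, b6, b7, b8⟩ := ak_half B A hσ1 hε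
  refine ⟨_, _, _, _, a1, b1, a2, b2, a3, b3, a4, b4, a5, b5, a6, ?_, a8, b8⟩
  ext w
  constructor
  · rintro ⟨z, ⟨hz0, hzV⟩, rfl⟩
    exact ⟨(a7 z hzV).1 hz0, a4 hzV⟩
  · rintro ⟨hw0, hwV⟩
    exact ⟨_, ⟨(b7 w hwV).1 hw0, b4 hwV⟩, b5 w hwV⟩
end
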